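/- arXiv:solv-int/9909002 — 4 statements merged into one kernel-verified Lean document; each statement's English description precedes it below -/
import Mathlib

section
/- Let 0 < γ < 2 and let f : ℤ≥0 × ℤ≥0 → ℂ satisfy the cross-ratio equation (q) at every (n,m) and the constraint (c) with parameter γ at every (n,m) (all denominators occurring being nonzero), with initial conditions f_{0,0} = 0, f_{1,0} = 1, f_{0,1} = e^{iγπ/2}. Then f is an immersion: for any two adjacent elementary quadrilaterals, the interiors of the convex hulls of their four vertices are disjoint. -/
open Complex

noncomputable section

/-- Vertex set of the elementary quadrilateral at `(n,m)`. -/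
def quadVerts (f : ℕ → ℕ → ℂ) (n m : ℕ) : Set ℂ :=
  {f n m, f (n+1) m, f (n+1) (m+1), f n (m+1)}

/-- Interior of the convex hull of the elementary quadrilateral at `(n,m)`. -/
def quadInt (f : ℕ → ℕ → ℂ) (n m : ℕ) : Set ℂ :=
  interior (convexHull ℝ (quadVerts f n m))

/-- `f` is an immersion: interiors of (convex hulls of) adjacent elementary
quadrilaterals are disjoint. -/
def IsImmersion (f : ℕ → ℕ → ℂ) : Prop :=
  ∀ n m : ℕ,
    Disjoint (quadInt f n m) (quadInt f (n+1) m) ∧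
    Disjoint (quadInt f n m) (quadInt f n (m+1))

/-- The cross-ratio equation (q): every elementary quadrilateral has cross-ratio -1. -/
def CrossRatioEq (f : ℕ → ℕ → ℂ) : Prop :=
  ∀ n m : ℕ,
    (f n m - f (n+1) m) * (f (n+1) (m+1) - f n (m+1)) =
      -((f (n+1) m - f (n+1) (m+1)) * (f n (m+1) - f n m))

/-- Nonvanishing of the denominators occurring in the cross-ratio (q). -/
def QDenomNonzero (f : ℕ → ℕ → ℂ) : Prop :=
  ∀ n m : ℕ, f (n+1) m - f (n+1) (m+1) ≠ 0 ∧ f n (m+1) - f n m ≠ 0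

/-- Nonvanishing of the denominators occurring in the constraint (c). -/
def CDenomNonzero (f : ℕ → ℕ → ℂ) : Prop :=
  ∀ n m : ℕ, (n ≠ 0 → f (n+1) m - f (n-1) m ≠ 0) ∧ (m ≠ 0 → f n (m+1) - f n (m-1) ≠ 0)

/-- The constraint (c) with parameter `γ`; for `n = 0` (resp. `m = 0`) the
corresponding term is absent. -/
def ConstraintC (γ : ℂ) (f : ℕ → ℕ → ℂ) : Prop :=
  ∀ n m : ℕ,
    γ * f n m =
      (if n = 0 then 0 else
        2 * (n : ℂ) * ((f (n+1) m - f n m) * (f n m - f (n-1) m)) / (f (n+1) m - f (n-1) m)) +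
      (if m = 0 then 0 else
        2 * (m : ℂ) * ((f n (m+1) - f n m) * (f n m - f n (m-1))) / (f n (m+1) - f n (m-1)))

local notation "cj" => (starRingEnd ℂ)

section PartA

/-- Right half plane. -/
def RHP : Set ℂ := {t : ℂ | 0 < t.re}

lemma RHP_open : IsOpen RHP := isOpen_lt continuous_const Complex.continuous_re

lemma RHP_conv : Convex ℝ RHP := convex_halfSpace_re_gt 0

lemma RHP_add_ne {t p : ℂ} (ht : t ∈ RHP) (hp : p ∈ RHP) : t + p ≠ 0 := by
  intro h
  have := congrArg Complex.re h
  simp only [add_re, zero_re] at this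
  have h1 : 0 < t.re := ht
  have h2 : 0 < p.re := hp
  linarith

lemma RHP_conj {t : ℂ} (ht : t ∈ RHP) : (starRingEnd ℂ) t ∈ RHP := by
  show 0 < ((starRingEnd ℂ) t).re
  rw [Complex.conj_re]; exact ht

lemma RHP_ne_zero {t : ℂ} (ht : t ∈ RHP) : t ≠ 0 := by
  rintro rfl
  exact lt_irrefl _ (show (0:ℝ) < (0:ℂ).re from ht)

/-- two continuous functions equal off a point are equal at the point -/
lemma eq_at_of_eq_off {F G : ℂ → ℂ} {p : ℂ} (hp : p ∈ RHP) (hF : DifferentiableOn ℂ F RHP)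
    (hG : DifferentiableOn ℂ G RHP) (h : ∀ t ∈ RHP, t ≠ p → F t = G t) : F p = G p := by
  have hF' : ContinuousAt F p := (hF.differentiableAt (RHP_open.mem_nhds hp)).continuousAt
  have hG' : ContinuousAt G p := (hG.differentiableAt (RHP_open.mem_nhds hp)).continuousAt
  have h1 := hF'.tendsto.mono_left (nhdsWithin_le_nhds (s := {p}ᶜ))
  have h2 := hG'.tendsto.mono_left (nhdsWithin_le_nhds (s := {p}ᶜ))
  refine tendsto_nhds_unique h1 (h2.congr' ?_)
  filter_upwards [self_mem_nhdsWithin, mem_nhdsWithin_of_mem_nhds (RHP_open.mem_nhds hp)] with t ht1 ht2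
  exact (h t ht2 ht1).symm

lemma dslope_diff {b : ℂ → ℂ} {p : ℂ} (hb : DifferentiableOn ℂ b RHP) (hp : p ∈ RHP) :
    DifferentiableOn ℂ (dslope b p) RHP :=
  (Complex.differentiableOn_dslope (RHP_open.mem_nhds hp)).2 hb

lemma dslope_mul (b : ℂ → ℂ) (p t : ℂ) : (t - p) * dslope b p t = b t - b p := by
  simpa using sub_smul_dslope b p t

lemma schur_div {b : ℂ → ℂ} {p : ℂ} (hp : p ∈ RHP) (hb : DifferentiableOn ℂ b RHP)
    (hb1 : ∀ t ∈ RHP, ‖b t‖ ≤ 1) (hbp : b p = 0) :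
    ∃ b' : ℂ → ℂ, DifferentiableOn ℂ b' RHP ∧ (∀ t ∈ RHP, ‖b' t‖ ≤ 1) ∧
      ∀ t ∈ RHP, b t * (t + (starRingEnd ℂ) p) = b' t * (t - p) := by
  have hpr : 0 < p.re := hp
  have hd : DifferentiableOn ℂ (fun t => dslope b p t * (t + (starRingEnd ℂ) p)) RHP :=
    (dslope_diff hb hp).mul (by fun_prop)
  have key : ∀ t ∈ RHP, b t * (t + (starRingEnd ℂ) p) =
      dslope b p t * (t + (starRingEnd ℂ) p) * (t - p) := by
    intro t ht
    have := dslope_mul b p t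
    rw [hbp, sub_zero] at this
    rw [← this]; ring
  have hbd : ∀ t ∈ RHP, t ≠ p → ‖dslope b p t * (t + (starRingEnd ℂ) p)‖ ≤ 1 := by
    intro t ht hne
    have htp := RHP_add_ne ht (RHP_conj hp)
    set φ : ℂ → ℂ := fun z => (p + (starRingEnd ℂ) p * z) / (1 - z) with hφ
    have h1z : ∀ z ∈ Metric.ball (0:ℂ) 1, 1 - z ≠ 0 := by
      intro z hz h
      have : z = 1 := by linear_combination -h
      simp [this] at hz
    have hmap : ∀ z ∈ Metric.ball (0:ℂ) 1, φ z ∈ RHP := by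
      intro z hz
      have hz1 := h1z z hz
      show 0 < (φ z).re
      have hzn : z.re * z.re + z.im * z.im < 1 := by
        have : ‖z‖ < 1 := by simpa using hz
        have h2 : ‖z‖ ^ 2 < 1 := by
          have := norm_nonneg z
          nlinarith
        rw [Complex.sq_norm, Complex.normSq_apply] at h2
        exact h2
      have : (φ z).re = p.re * (1 - (z.re * z.re + z.im * z.im)) / Complex.normSq (1 - z) := by
        simp only [hφ, Complex.div_re]
        simp
        ring
      rw [this]
      have := Complex.normSq_pos.2 hz1
      have h3 : 0 < 1 - (z.re * z.re + z.im * z.im) := by linarith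
      positivity
    have hφd : DifferentiableOn ℂ φ (Metric.ball 0 1) := by
      apply DifferentiableOn.div (by fun_prop) (by fun_prop) h1z
    have hz : ‖(t - p) / (t + (starRingEnd ℂ) p)‖ < 1 := by
      rw [norm_div, div_lt_one (norm_pos_iff.2 htp)]
      apply lt_of_pow_lt_pow_left₀ 2 (norm_nonneg _)
      rw [Complex.sq_norm, Complex.sq_norm, Complex.normSq_apply, Complex.normSq_apply]
      simp
      have : 0 < t.re := ht
      nlinarith [mul_pos this hpr]
    have := Complex.norm_le_norm_of_mapsTo_ball (f := b ∘ φ) (R := 1)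
      (hb.comp hφd hmap) (fun z hz => by simpa using hb1 _ (hmap z hz)) (by simp [hφ, hbp]) hz
    have hφt : φ ((t - p) / (t + (starRingEnd ℂ) p)) = t := by
      have h5 : 1 - (t - p) / (t + (starRingEnd ℂ) p) ≠ 0 := h1z _ (by simpa using hz)
      simp only [hφ]
      rw [div_eq_iff h5]
      field_simp
      ring
    rw [Function.comp_apply, hφt, norm_div, le_div_iff₀ (norm_pos_iff.2 htp)] at this
    have h6 := congrArg norm (key t ht)
    rw [norm_mul, norm_mul _ (t - p)] at h6
    have h7 : 0 < ‖t - p‖ := norm_pos_iff.2 (sub_ne_zero.2 hne)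
    by_contra hcon
    push Not at hcon
    nlinarith
  refine ⟨_, hd, ?_, key⟩
  intro t ht
  by_cases hne : t = p
  · subst hne
    have hc : ContinuousAt (fun s => ‖dslope b t s * (s + (starRingEnd ℂ) t)‖) t :=
      ((hd.differentiableAt (RHP_open.mem_nhds ht)).continuousAt).norm
    refine le_of_tendsto (hc.tendsto.mono_left (nhdsWithin_le_nhds (s := {t}ᶜ))) ?_
    filter_upwards [self_mem_nhdsWithin, mem_nhdsWithin_of_mem_nhds (RHP_open.mem_nhds ht)] with s h1 h2
    exact hbd s h2 h1
  · exact hbd t ht hne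

lemma max_const {b : ℂ → ℂ} (hb : DifferentiableOn ℂ b RHP)
    (hb1 : ∀ t ∈ RHP, ‖b t‖ ≤ 1) {t0 : ℂ} (h0 : t0 ∈ RHP) (h : ‖b t0‖ = 1) :
    ∀ t ∈ RHP, b t = b t0 := by
  intro t ht
  exact Complex.eqOn_of_isPreconnected_of_isMaxOn_norm RHP_conv.isPreconnected RHP_open hb h0
    (fun s hs => by simpa [h] using hb1 s hs) ht


end PartA

section PartB
/-- algebraic identities for the two-node Schur step -/
lemma alg_one (p μ ν k t : ℂ) (hp : p ^ 4 = -1) (hμ : μ ≠ 0) (hν : ν ≠ 0)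
    (δ ε G mr mi : ℂ) (hG : G = (1 - p ^ 2) * μ + (1 + p ^ 2) * ν) (hδ : δ * (2 * ν) = G)
    (hε : ε * (2 * μ) = G) (hmr : mr = (μ + ν) / 2) (hmi : mi = - p ^ 2 * (μ - ν) / 2) :
    (μ * ν) * (((k - p * μ) * (t - p ^ 3) - δ * ((k - p ^ 3 * ν) * (t - p))) * (t + p) +
    ((k - p ^ 3 * ν) * (t - p) - ε * ((k - p * μ) * (t - p ^ 3))) * (t + p ^ 3))
     = 2 * (mr - mi) * ((mr - mi * t ^ 2) * k - μ * ν * t) := by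
  have e1 : δ = G / (2 * ν) := by field_simp; linear_combination hδ
  have e2 : ε = G / (2 * μ) := by field_simp; linear_combination hε
  have hp5 : p ^ 5 = - p := by linear_combination p * hp
  have hp6 : p ^ 6 = - p ^ 2 := by linear_combination p ^ 2 * hp
  have hp7 : p ^ 7 = - p ^ 3 := by linear_combination p ^ 3 * hp
  have hp8 : p ^ 8 = 1 := by linear_combination (p ^ 4 - 1) * hp
  have hp9 : p ^ 9 = p := by linear_combination (p ^ 5 - p) * hp
  rw [e1, e2, hmr, hmi, hG]
  field_simp
  ring_nf
  simp only [hp, hp5, hp6, hp8, hp9]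
  ring

lemma alg_two (p μ ν k t : ℂ) (hp : p ^ 4 = -1) (hμ : μ ≠ 0) (hν : ν ≠ 0)
    (δ ε G mr mi : ℂ) (hG : G = (1 - p ^ 2) * μ + (1 + p ^ 2) * ν) (hδ : δ * (2 * ν) = G)
    (hε : ε * (2 * μ) = G) (hmr : mr = (μ + ν) / 2) (hmi : mi = - p ^ 2 * (μ - ν) / 2) :
    (μ * ν) * ((1 - δ) * (((k - p ^ 3 * ν) * (t - p) - ε * ((k - p * μ) * (t - p ^ 3))) * (t + p ^ 3))
     - (1 - ε) * (((k - p * μ) * (t - p ^ 3) - δ * ((k - p ^ 3 * ν) * (t - p))) * (t + p)))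
     = - (2 * (mr - mi) * mi * (p - p ^ 3)) * (mr * t ^ 2 - mi - t * k) := by
  have e1 : δ = G / (2 * ν) := by field_simp; linear_combination hδ
  have e2 : ε = G / (2 * μ) := by field_simp; linear_combination hε
  have hp5 : p ^ 5 = - p := by linear_combination p * hp
  have hp6 : p ^ 6 = - p ^ 2 := by linear_combination p ^ 2 * hp
  have hp7 : p ^ 7 = - p ^ 3 := by linear_combination p ^ 3 * hp
  have hp8 : p ^ 8 = 1 := by linear_combination (p ^ 4 - 1) * hp
  have hp9 : p ^ 9 = p := by linear_combination (p ^ 5 - p) * hp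
  have hp10 : p ^ 10 = p ^ 2 := by linear_combination (p ^ 6 - p ^ 2) * hp
  have hp11 : p ^ 11 = p ^ 3 := by linear_combination (p ^ 7 - p ^ 3) * hp
  rw [e1, e2, hmr, hmi, hG]
  field_simp
  ring_nf
  simp only [hp, hp5, hp6, hp7, hp8, hp9, hp10, hp11]
  ring

end PartB

section PartC

lemma node_form {p : ℂ} (hp : p ∈ RHP) (hp2 : p ^ 2 = I) : p.im = p.re ∧ 2 * p.re ^ 2 = 1 := by
  have h0 : 0 < p.re := hp
  have h1 := congrArg Complex.re hp2
  have h2 := congrArg Complex.im hp2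
  simp [pow_two] at h1 h2
  have h3 : (p.re - p.im) * (p.re + p.im) = 0 := by linarith
  rcases mul_eq_zero.1 h3 with h | h
  · have : p.im = p.re := by linarith
    refine ⟨this, ?_⟩
    rw [this] at h2; nlinarith
  · have : p.im = - p.re := by linarith
    rw [this] at h2
    nlinarith

lemma node_conj {p : ℂ} (hp : p ∈ RHP) (hp2 : p ^ 2 = I) : (starRingEnd ℂ) p = - p ^ 3 := by
  obtain ⟨h1, h2⟩ := node_form hp hp2
  have : p ^ 3 = p * I := by rw [← hp2]; ring
  rw [this]
  apply Complex.ext <;> simp [h1]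

lemma norm_le_of_re {k w : ℂ} (hk : 0 < k.re) (hw : 0 < w.re) :
    ‖(k - w) / (k + (starRingEnd ℂ) w)‖ ≤ 1 := by
  rw [norm_div]
  apply div_le_one_of_le₀ _ (norm_nonneg _)
  apply le_of_sq_le_sq _ (norm_nonneg _)
  rw [Complex.sq_norm, Complex.sq_norm, Complex.normSq_apply, Complex.normSq_apply]
  simp
  nlinarith [mul_pos hk hw]

lemma norm_le_of_disc {b d : ℂ} (hb : ‖b‖ ≤ 1) (hd : ‖d‖ < 1) :
    ‖(b - d) / (1 - (starRingEnd ℂ) d * b)‖ ≤ 1 := by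
  rw [norm_div]
  apply div_le_one_of_le₀ _ (norm_nonneg _)
  apply le_of_sq_le_sq _ (norm_nonneg _)
  have h1 : ‖b‖ ^ 2 ≤ 1 := by nlinarith [norm_nonneg b]
  have h2 : ‖d‖ ^ 2 ≤ 1 := by nlinarith [norm_nonneg d]
  rw [Complex.sq_norm, Complex.normSq_apply] at h1 h2
  rw [Complex.sq_norm, Complex.sq_norm, Complex.normSq_apply, Complex.normSq_apply]
  simp
  nlinarith [mul_nonneg (sub_nonneg.2 h1) (sub_nonneg.2 h2)]

lemma disc_denom_ne {b d : ℂ} (hb : ‖b‖ ≤ 1) (hd : ‖d‖ < 1) :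
    1 - (starRingEnd ℂ) d * b ≠ 0 := by
  intro h
  have h1 : (starRingEnd ℂ) d * b = 1 := by linear_combination -h
  have h2 := congrArg norm h1
  rw [norm_mul, Complex.norm_conj, norm_one] at h2
  nlinarith [norm_nonneg b, norm_nonneg d]

lemma re_mob {b z : ℂ} (hb : ‖b‖ < 1) (hz : 0 < z.re) :
    z - (starRingEnd ℂ) z * b ≠ 0 ∧ 0 < ((1 + b) / (z - (starRingEnd ℂ) z * b)).re := by
  have h1 : ‖b‖ ^ 2 < 1 := by nlinarith [norm_nonneg b]
  rw [Complex.sq_norm, Complex.normSq_apply] at h1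
  have h0 : z - (starRingEnd ℂ) z * b ≠ 0 := by
    intro h
    have h1 : z = (starRingEnd ℂ) z * b := by linear_combination h
    have h2 := congrArg norm h1
    rw [norm_mul, Complex.norm_conj] at h2
    have : 0 < ‖z‖ := norm_pos_iff.2 (by rintro rfl; simp at hz)
    nlinarith [norm_nonneg b]
  refine ⟨h0, ?_⟩
  have : ((1 + b) / (z - (starRingEnd ℂ) z * b)).re =
    z.re * (1 - (b.re * b.re + b.im * b.im)) / Complex.normSq (z - (starRingEnd ℂ) z * b) := by
    rw [Complex.div_re]
    simp
    ring
  rw [this]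
  have := Complex.normSq_pos.2 h0
  have h3 : 0 < 1 - (b.re * b.re + b.im * b.im) := by linarith
  positivity

/-- boundary version: for unimodular `b`, the Moebius value is purely imaginary -/
lemma re_mob_bdry {b z : ℂ} (hb : ‖b‖ = 1) (x y : ℝ) (hz : 0 < z.re)
    (h : (z - (starRingEnd ℂ) z * b) * x = (1 + b) * y) (hxy : x ≠ 0 ∨ y ≠ 0) :
    z - (starRingEnd ℂ) z * b = 0 ∨ 1 + b = 0 := by
  have h1 : ‖b‖ ^ 2 = 1 := by rw [hb]; norm_num
  rw [Complex.sq_norm, Complex.normSq_apply] at h1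
  by_contra hcon
  push Not at hcon
  obtain ⟨ha, hb'⟩ := hcon
  have h2 : Complex.normSq (z - (starRingEnd ℂ) z * b) * x =
     ((1 + b) * (starRingEnd ℂ) (z - (starRingEnd ℂ) z * b) * y) := by
    rw [← Complex.mul_conj]; linear_combination ((starRingEnd ℂ) (z - (starRingEnd ℂ) z * b)) * h
  have h3 := congrArg Complex.re h2
  have h4 : ((1 + b) * (starRingEnd ℂ) (z - (starRingEnd ℂ) z * b)).re = 0 := by
    simp
    linear_combination (-z.re) * h1
  rw [Complex.re_mul_ofReal, Complex.re_mul_ofReal, h4, Complex.ofReal_re, zero_mul] at h3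
  have hx : x = 0 := by
    rcases mul_eq_zero.1 h3 with h | h
    · exact absurd (Complex.normSq_eq_zero.1 h) ha
    · exact h
  rw [hx] at h
  simp at h
  rcases h with h | h
  · exact hb' h
  · rcases hxy with h' | h'
    · exact h' hx
    · exact h' h

end PartC

section PartD


lemma pr_step {k : ℂ → ℂ} (hk : DifferentiableOn ℂ k RHP) (hkr : ∀ t ∈ RHP, 0 < (k t).re)
    (hks : ∀ t ∈ RHP, k (cj t) = cj (k t)) {p μ : ℂ} (hp : p ∈ RHP) (hp2 : p ^ 2 = I)
    (hkp : k p = p * μ) (hre : μ.re ≠ 0) (him : μ.im ≠ 0) :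
    0 < μ.re ∧ μ.im < 0 ∧
    ((∀ t ∈ RHP, ((μ.re : ℂ) - μ.im * t ^ 2) * k t - μ * cj μ * t = 0) ∨
     (∀ t ∈ RHP, (μ.re : ℂ) * t ^ 2 - μ.im - t * k t = 0) ∨
     ∃ k2 : ℂ → ℂ, DifferentiableOn ℂ k2 RHP ∧ (∀ t ∈ RHP, 0 < (k2 t).re) ∧
       (∀ t ∈ RHP, k2 (cj t) = cj (k2 t)) ∧
       ∀ t ∈ RHP, k2 t * ((μ.re : ℂ) * t ^ 2 - μ.im - t * k t) =
          ((μ.re : ℂ) - μ.im * t ^ 2) * k t - μ * cj μ * t) := by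
  have hp4 : p ^ 4 = -1 := by
    have : p ^ 4 = (p ^ 2) ^ 2 := by ring
    rw [this, hp2, Complex.I_sq]
  have hcp : cj p = - p ^ 3 := node_conj hp hp2
  obtain ⟨hpim, hpre⟩ := node_form hp hp2
  have hp0 : 0 < p.re := hp
  have hpne : p ≠ 0 := RHP_ne_zero hp
  set ν := cj μ with hν
  have hμne : μ ≠ 0 := by rintro rfl; simp at hre
  have hνne : ν ≠ 0 := by rw [hν]; simpa using hμne
  have hckp : cj (p * μ) = - p ^ 3 * ν := by rw [map_mul, hcp]
  have hkp' : k (cj p) = - p ^ 3 * ν := by rw [hks p hp, hkp, hckp]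
  have hk1re : 0 < (p * μ).re := hkp ▸ hkr p hp
  have hden : ∀ t ∈ RHP, k t - p ^ 3 * ν ≠ 0 := by
    intro t ht h
    have h1 : 0 < (- p ^ 3 * ν).re := by rw [← hckp, Complex.conj_re]; exact hk1re
    have h2 := hkr t ht
    have h3 := congrArg Complex.re h
    have h4 : k t - p ^ 3 * ν = k t + (- p ^ 3 * ν) := by ring
    rw [h4, Complex.add_re] at h3
    simp only [Complex.zero_re] at h3
    linarith
  obtain ⟨b1, hb1d, hb1n, hb1⟩ := schur_div (b := fun t => (k t - p * μ) / (k t - p ^ 3 * ν)) hp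
    ((hk.sub_const _).div (hk.sub_const _) hden)
    (by
      intro t ht
      have := norm_le_of_re (hkr t ht) hk1re
      rw [hckp] at this
      have h4 : k t - p ^ 3 * ν = k t + (- p ^ 3 * ν) := by ring
      simpa only [h4] using this)
    (by simp [hkp])
  have hb1' : ∀ t ∈ RHP, (k t - p * μ) * (t - p ^ 3) = b1 t * ((k t - p ^ 3 * ν) * (t - p)) := by
    intro t ht
    have h := hb1 t ht
    have hd := hden t ht
    simp only [hcp] at h
    have h5 : (k t - p * μ) / (k t - p ^ 3 * ν) * (k t - p ^ 3 * ν) = k t - p * μ :=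
      div_mul_cancel₀ _ hd
    linear_combination (k t - p ^ 3 * ν) * h - (t - p ^ 3) * h5
  have hq : cj p ∈ RHP := RHP_conj hp
  set δ := b1 (cj p) with hδdef
  set G : ℂ := (1 - p ^ 2) * μ + (1 + p ^ 2) * ν with hG
  have hδ : δ * (2 * ν) = G := by
    have h := hb1' _ hq
    rw [← hδdef, hkp', hcp] at h
    have h2 : (2 * p ^ 4) * (δ * ((1 + p ^ 2) * ν) - (μ + p ^ 2 * ν)) = 0 := by
      linear_combination -h
    have h3 : δ * ((1 + p ^ 2) * ν) - (μ + p ^ 2 * ν) = 0 := by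
      rcases mul_eq_zero.1 h2 with h | h
      · exact absurd h (mul_ne_zero two_ne_zero (pow_ne_zero _ hpne))
      · exact h
    rw [hG]
    linear_combination (1 - p ^ 2) * h3 + (δ * ν - ν) * hp4
  have hcG : cj G = G := by
    rw [hG, hp2]; simp [hν]; ring
  have hGr : G = ((2 * (μ.re + μ.im) : ℝ) : ℂ) := by
    rw [hG, hp2, hν]
    apply Complex.ext <;> simp <;> ring
  set ε := cj δ with hεd
  have hε : ε * (2 * μ) = G := by
    rw [← hcG, ← hδ]; simp only [hεd, hν, map_mul, Complex.conj_conj, map_ofNat]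
  have hmr : (μ.re : ℂ) = (μ + ν) / 2 := by
    rw [hν]; apply Complex.ext <;> simp
  have hmi : (μ.im : ℂ) = - p ^ 2 * (μ - ν) / 2 := by
    rw [hν, hp2]; apply Complex.ext <;> simp
  have hδ1 : ‖δ‖ ≤ 1 := hb1n _ hq
  have hsq : ‖δ‖ ^ 2 * (μ.re ^ 2 + μ.im ^ 2) = (μ.re + μ.im) ^ 2 := by
    have h1 := congrArg (fun z => ‖z‖ ^ 2) hδ
    simp only [norm_mul, hν, Complex.norm_conj] at h1
    rw [hGr, Complex.norm_real, Real.norm_eq_abs, sq_abs, mul_pow, mul_pow, Complex.sq_norm μ, Complex.normSq_apply] at h1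
    norm_num at h1
    nlinarith [h1]
  have hpos : 0 < μ.re - μ.im := by
    have : (p * μ).re = p.re * (μ.re - μ.im) := by rw [Complex.mul_re, hpim]; ring
    rw [this] at hk1re
    exact pos_of_mul_pos_right hk1re hp0.le |> fun h => h
  have hsqpos : 0 < μ.re ^ 2 + μ.im ^ 2 := by positivity
  have hmm : μ.re * μ.im ≤ 0 := by
    have : ‖δ‖ ^ 2 ≤ 1 := by nlinarith [norm_nonneg δ]
    nlinarith
  have hrpos : 0 < μ.re := by
    rcases lt_or_gt_of_ne hre with h | h
    · have : 0 < μ.re * μ.im := mul_pos_of_neg_of_neg h (by linarith)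
      linarith
    · exact h
  have hineg : μ.im < 0 := by
    rcases lt_or_gt_of_ne him with h | h
    · exact h
    · have : 0 < μ.re * μ.im := mul_pos hrpos h
      linarith
  refine ⟨hrpos, hineg, ?_⟩
  have hδlt : ‖δ‖ < 1 := by
    have : μ.re * μ.im < 0 := mul_neg_of_pos_of_neg hrpos hineg
    by_contra hcon
    push Not at hcon
    have : ‖δ‖ = 1 := le_antisymm hδ1 hcon
    rw [this] at hsq
    nlinarith
  have hd2 : ∀ t ∈ RHP, 1 - ε * b1 t ≠ 0 := fun t ht => disc_denom_ne (hb1n t ht) hδlt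
  obtain ⟨b2, hb2d, hb2n, hb2⟩ := schur_div (b := fun t => (b1 t - δ) / (1 - ε * b1 t)) hq
    ((hb1d.sub_const _).div ((hb1d.const_mul _).const_sub _) hd2)
    (fun t ht => norm_le_of_disc (hb1n t ht) hδlt) (by simp [hδdef])
  have hb2' : ∀ t ∈ RHP, ((k t - p * μ) * (t - p ^ 3) - δ * ((k t - p ^ 3 * ν) * (t - p))) * (t + p)
     = b2 t * (((k t - p ^ 3 * ν) * (t - p) - ε * ((k t - p * μ) * (t - p ^ 3))) * (t + p ^ 3)) := by
    intro t ht
    have h := hb2 t ht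
    have hd := hd2 t ht
    rw [Complex.conj_conj, hcp] at h
    have h5 : (b1 t - δ) / (1 - ε * b1 t) * (1 - ε * b1 t) = b1 t - δ := div_mul_cancel₀ _ hd
    have h6 := hb1' t ht
    have h7 : (b1 t - δ) * (t + p) = b2 t * (t + p ^ 3) * (1 - ε * b1 t) := by
      linear_combination (1 - ε * b1 t) * h - (t + p) * h5
    rw [h6]
    linear_combination ((k t - p ^ 3 * ν) * (t - p)) * h7
  set z : ℂ := 1 - δ with hz
  have hzre : 0 < z.re := by
    rw [hz]; simp
    have := Complex.re_le_norm δ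
    linarith
  have hcz : cj z = 1 - ε := by rw [hz, hεd]; simp
  have hs : p - p ^ 3 = ((2 * p.re : ℝ) : ℂ) := by
    have : p - p ^ 3 = p + cj p := by rw [hcp]; ring
    rw [this]; apply Complex.ext <;> simp; ring
  set X : ℂ → ℂ := fun t => ((μ.re : ℂ) - μ.im * t ^ 2) * k t - μ * ν * t with hX
  set Y : ℂ → ℂ := fun t => (μ.re : ℂ) * t ^ 2 - μ.im - t * k t with hY
  have hdiff : ((2 * (μ.re - μ.im) : ℝ) : ℂ) ≠ 0 := by
    rw [Complex.ofReal_ne_zero]; linarith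
  have main : ∀ t ∈ RHP, (z - cj z * b2 t) * X t = (1 + b2 t) * (((-(μ.im * (2 * p.re)) : ℝ) : ℂ) * Y t) := by
    intro t ht
    have a1 := alg_one p μ ν (k t) t hp4 hμne hνne δ ε G μ.re μ.im hG hδ hε hmr hmi
    have a2 := alg_two p μ ν (k t) t hp4 hμne hνne δ ε G μ.re μ.im hG hδ hε hmr hmi
    rw [hb2' t ht] at a1 a2
    apply mul_left_cancel₀ hdiff
    rw [hcz]
    rw [hs] at a2
    simp only [hX, hY]
    push_cast at a1 a2 ⊢
    linear_combination -(z - (1 - ε) * b2 t) * a1 + (1 + b2 t) * a2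
  have hXc : ∀ t ∈ RHP, X (cj t) = cj (X t) := by
    intro t ht
    simp only [hX, hks t ht, map_mul, map_sub, map_pow, Complex.conj_ofReal, hν, Complex.conj_conj]
    ring
  have hYc : ∀ t ∈ RHP, Y (cj t) = cj (Y t) := by
    intro t ht
    simp only [hY, hks t ht]
    simp
  have hmn : μ * ν = (μ.re : ℂ) ^ 2 + (μ.im : ℂ) ^ 2 := by
    rw [hν, Complex.mul_conj, Complex.normSq_apply]; push_cast; ring
  by_cases hcase : ∀ t ∈ RHP, ‖b2 t‖ < 1
  · right; right
    set K : ℂ → ℂ := fun t => ((-(μ.im * (2 * p.re)) : ℝ) : ℂ) * ((1 + b2 t) / (z - cj z * b2 t)) with hK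
    have hcpos : 0 < -(μ.im * (2 * p.re)) := by nlinarith
    have hKd : DifferentiableOn ℂ K RHP :=
      ((hb2d.const_add _).div ((hb2d.const_mul _).const_sub _)
        (fun t ht => (re_mob (hcase t ht) hzre).1)).const_mul _
    have hKr : ∀ t ∈ RHP, 0 < (K t).re := by
      intro t ht
      simp only [hK]
      rw [Complex.re_ofReal_mul]
      exact mul_pos hcpos (re_mob (hcase t ht) hzre).2
    have hKe : ∀ t ∈ RHP, K t * Y t = X t := by
      intro t ht
      have h1 := (re_mob (hcase t ht) hzre).1
      apply mul_left_cancel₀ h1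
      rw [main t ht]
      simp only [hK]
      field_simp
    set K' : ℂ → ℂ := fun t => cj (K (cj t)) with hK'
    have hKd' : DifferentiableOn ℂ K' RHP := by
      intro t ht
      have := (hKd.differentiableAt (RHP_open.mem_nhds (RHP_conj ht)))
      have h2 := this.conj_conj
      rw [Complex.conj_conj] at h2
      exact h2.differentiableWithinAt
    refine ⟨fun t => (K t + K' t) / 2, ?_, ?_, ?_, ?_⟩
    · exact (hKd.add hKd').div_const _
    · intro t ht
      have h1 := hKr t ht
      have h2 := hKr _ (RHP_conj ht)
      have : ((K t + K' t) / 2).re = ((K t).re + (K (cj t)).re) / 2 := by simp [hK']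
      rw [this]; linarith
    · intro t ht
      simp only [hK', map_add, map_div₀, Complex.conj_conj, map_ofNat]; ring
    · intro t ht
      have h1 := hKe t ht
      have h2 := hKe _ (RHP_conj ht)
      rw [hXc t ht, hYc t ht] at h2
      have h3 := congrArg cj h2
      rw [map_mul, Complex.conj_conj, Complex.conj_conj] at h3
      simp only [hK']
      linear_combination (h1 + h3) / 2
  · push Not at hcase
    obtain ⟨t0, ht0, hbt⟩ := hcase
    have hbn : ‖b2 t0‖ = 1 := le_antisymm (hb2n t0 ht0) hbt
    have hconst := max_const hb2d hb2n ht0 hbn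
    have h1m : (1 : ℂ) ∈ RHP := by simp [RHP]
    have hX1 : X 1 = ((X 1).re : ℂ) := by
      have := hXc 1 h1m
      rw [map_one] at this
      exact (Complex.conj_eq_iff_re.1 this.symm).symm
    have hY1 : Y 1 = ((Y 1).re : ℂ) := by
      have := hYc 1 h1m
      rw [map_one] at this
      exact (Complex.conj_eq_iff_re.1 this.symm).symm
    have hne : X 1 ≠ 0 ∨ Y 1 ≠ 0 := by
      by_contra hcon
      push Not at hcon
      obtain ⟨hx, hy⟩ := hcon
      have h5 : X 1 + ((μ.re : ℂ) - μ.im) * Y 1 = -2 * μ.re * μ.im := by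
        simp only [hX, hY]
        rw [hmn]; ring
      rw [hx, hy] at h5
      have : (-2 * μ.re * μ.im : ℂ) ≠ 0 := by
        simp [hre, him]
      apply this; rw [← h5]; ring
    have hm1 := main 1 h1m
    rw [hconst 1 h1m] at hm1
    have hcne : -(μ.im * (2 * p.re)) ≠ 0 := by
      have : 0 < -(μ.im * (2 * p.re)) := by nlinarith
      exact this.ne'
    have hmob := re_mob_bdry hbn (X 1).re (-(μ.im * (2 * p.re)) * (Y 1).re) hzre
      (by rw [← hX1, hm1]; congr 1; rw [hY1]; push_cast; simp)
      (by
        rcases hne with h | h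
        · left; intro h'; apply h; rw [hX1, h']; simp
        · right; apply mul_ne_zero hcne; intro h'; apply h; rw [hY1, h']; simp)
    have hz2 : z + cj z ≠ 0 := by
      rw [Complex.add_conj]; rw [Complex.ofReal_ne_zero]; linarith
    rcases hmob with h | h
    · right; left
      intro t ht
      have h6 := main t ht
      rw [hconst t ht, h, zero_mul] at h6
      have h7 : 1 + b2 t0 ≠ 0 := by
        intro h8
        apply hz2
        linear_combination h + cj z * h8
      have := (mul_eq_zero.1 h6.symm).resolve_left h7
      exact (mul_eq_zero.1 this).resolve_left (by exact_mod_cast hcne)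
    · left
      intro t ht
      have h6 := main t ht
      rw [hconst t ht, h, zero_mul] at h6
      refine (mul_eq_zero.1 h6).resolve_left ?_
      intro h8
      apply hz2
      linear_combination h8 + cj z * h

end PartD

section PartE

/-- bundle of data for the nodal lemma -/
structure LS (γ : ℂ) (f : ℕ → ℕ → ℂ) (a p : ℂ) (φ : ℂ → ℂ) (u v : ℕ → ℕ → ℂ)
    (E F : ℕ → ℕ → ℂ → ℂ) : Prop where
  hp : p ∈ RHP
  ha : a * p ^ 2 = -1
  hu : ∀ n m, u n m = f (n+1) m - f n m
  hv : ∀ n m, v n m = f n (m+1) - f n m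
  hu0 : ∀ n m, u n m ≠ 0
  hv0 : ∀ n m, v n m ≠ 0
  huv : ∀ n m, u n m + v n m ≠ 0
  hq : ∀ n m, u n (m+1) * (u n m + v n m) = v n m * (u n m - v n m)
  h00 : f 0 0 = 0
  hax : ∀ n : ℕ, γ * f (n+1) 0 * (u (n+1) 0 + u n 0) = 2 * ((n : ℂ) + 1) * (u (n+1) 0 * u n 0)
  hax0 : ∀ n, u (n+1) 0 + u n 0 ≠ 0
  hφ : ∀ t ∈ RHP, HasDerivAt φ (-γ * φ t / t) t
  hφp : φ p = u 0 0
  E0 : ∀ t, E 0 0 t = φ t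
  F0 : ∀ t, F 0 0 t = 1
  En : ∀ n m t, E (n+1) m t = E n m t - u n m * F n m t
  Fn : ∀ n m t, F (n+1) m t = F n m t + a * t ^ 2 / u n m * E n m t
  Em : ∀ n m t, E n (m+1) t = E n m t - v n m * F n m t
  Fm : ∀ n m t, F n (m+1) t = F n m t - a * t ^ 2 / v n m * E n m t

lemma LS.ode {γ : ℂ} {f : ℕ → ℕ → ℂ} {a p : ℂ} {φ : ℂ → ℂ} {u v : ℕ → ℕ → ℂ}
    {E F : ℕ → ℕ → ℂ → ℂ} (S : LS γ f a p φ u v E F) (n : ℕ) : ∀ t ∈ RHP,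
    HasDerivAt (E (n+1) 0) (-γ * (E (n+1) 0 t + f (n+1) 0 * F n 0 t) / t) t ∧
    HasDerivAt (F (n+1) 0) (a * t ^ 2 * γ * f (n+1) 0 * E n 0 t / (u (n+1) 0 * u n 0) / t) t := by
  induction n with
  | zero =>
    intro t ht
    have t0 := RHP_ne_zero ht
    have hE : E (0+1) 0 = fun t => φ t - u 0 0 := by
      funext s; rw [S.En, S.E0, S.F0]; ring
    have hF : F (0+1) 0 = fun t => 1 + a * t ^ 2 / u 0 0 * φ t := by
      funext s; rw [S.Fn, S.E0, S.F0]
    have hf1 : f (0+1) 0 = u 0 0 := by rw [S.hu, S.h00]; ring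
    have hu0 := S.hu0 0 0
    have hu1 := S.hu0 (0+1) 0
    constructor
    · rw [hE]
      refine ((S.hφ t ht).sub_const (u 0 0)).congr_deriv ?_
      rw [S.F0, hf1]; ring
    · rw [hF]
      have h1 : HasDerivAt (fun t : ℂ => a * t ^ 2 / u 0 0) (a * (2 * t) / u 0 0) t := by
        have := ((hasDerivAt_pow 2 t).const_mul a).div_const (u 0 0)
        simpa using this
      have h2 := (h1.mul (S.hφ t ht)).const_add 1
      refine h2.congr_deriv ?_
      rw [S.E0, hf1]
      have hc := S.hax 0
      rw [hf1] at hc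
      have hc' : γ * (u (0+1) 0 + u 0 0) = 2 * u (0+1) 0 := by
        apply mul_left_cancel₀ hu0
        push_cast at hc
        linear_combination hc
      field_simp
      linear_combination -(a * φ t) * hc'
  | succ n ih =>
    intro t ht
    have t0 := RHP_ne_zero ht
    obtain ⟨ihE, ihF⟩ := ih t ht
    have hE : E (n+1+1) 0 = fun t => E (n+1) 0 t - u (n+1) 0 * F (n+1) 0 t := by
      funext s; rw [S.En]
    have hF : F (n+1+1) 0 = fun t => F (n+1) 0 t + a * t ^ 2 / u (n+1) 0 * E (n+1) 0 t := by
      funext s; rw [S.Fn]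
    have hu0 := S.hu0 n 0
    have hu1 := S.hu0 (n+1) 0
    have hu2 := S.hu0 (n+1+1) 0
    have hf2 : f (n+1+1) 0 = f (n+1) 0 + u (n+1) 0 := by rw [S.hu]; ring
    have hEn := S.En n 0 t
    have hFn := S.Fn n 0 t
    constructor
    · have h := ihE.sub (ihF.const_mul (u (n+1) 0))
      rw [hE]
      refine h.congr_deriv ?_
      simp only [hf2, hFn]
      field_simp
      ring
    · have h1 : HasDerivAt (fun t : ℂ => a * t ^ 2 / u (n+1) 0) (a * (2 * t) / u (n+1) 0) t := by
        have := ((hasDerivAt_pow 2 t).const_mul a).div_const (u (n+1) 0)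
        simpa using this
      have h2 := ihF.add (h1.mul ihE)
      rw [hF]
      refine h2.congr_deriv ?_
      have c1 := S.hax n
      have c2 := S.hax (n+1)
      rw [hf2] at c2 ⊢
      have hEn' : E n 0 t = E (n+1) 0 t + u n 0 * F n 0 t := by rw [hEn]; ring
      have key : γ * (f (n+1) 0 + u (n+1) 0) * u n 0 = u (n+1+1) 0 * (γ * f (n+1) 0 + (2 - γ) * u n 0) := by
        apply mul_left_cancel₀ hu1
        push_cast at c1 c2
        linear_combination u n 0 * c2 - u (n+1+1) 0 * c1
      rw [hEn']
      field_simp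
      linear_combination -(a * E (n+1) 0 t) * key

lemma LS.nodal {γ : ℂ} {f : ℕ → ℕ → ℂ} {a p : ℂ} {φ : ℂ → ℂ} {u v : ℕ → ℕ → ℂ}
    {E F : ℕ → ℕ → ℂ → ℂ} (S : LS γ f a p φ u v E F) (n m : ℕ) :
    ∃ e g : ℂ → ℂ, DifferentiableOn ℂ e RHP ∧ DifferentiableOn ℂ g RHP ∧
      (∀ t ∈ RHP, E n m t = (1 + a * t ^ 2) ^ n * e t) ∧
      (∀ t ∈ RHP, F n m t = (1 + a * t ^ 2) ^ n * g t) ∧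
      e p = u n m * g p ∧ g p ≠ 0 := by
  have hp := S.hp
  have ha := S.ha
  have ha0 : a ≠ 0 := by rintro h; rw [h] at ha; norm_num at ha
  have hp0 : p ≠ 0 := RHP_ne_zero hp
  have hL : ∀ t, 1 + a * t ^ 2 = (t - p) * (a * (t + p)) := by
    intro t; linear_combination ha
  have hden : ∀ t ∈ RHP, a * (t + p) ≠ 0 := fun t ht => mul_ne_zero ha0 (RHP_add_ne ht hp)
  have hsq : DifferentiableOn ℂ (fun t : ℂ => a * t ^ 2) RHP := by fun_prop
  induction m with
  | zero =>
    induction n with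
    | zero =>
      refine ⟨φ, fun _ => 1, fun t ht => (S.hφ t ht).differentiableAt.differentiableWithinAt,
        differentiableOn_const _, ?_, ?_, ?_, one_ne_zero⟩
      · intro t _; rw [S.E0]; simp
      · intro t _; rw [S.F0]; simp
      · rw [S.hφp]; simp
    | succ n ih =>
      obtain ⟨e, g, he, hg, hE, hF, hep, hgp⟩ := ih
      have hu0 := S.hu0 n 0
      have hu1 := S.hu0 (n+1) 0
      set h : ℂ → ℂ := fun t => e t - u n 0 * g t with hh
      have hhd : DifferentiableOn ℂ h RHP := he.sub (hg.const_mul _)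
      have hhp : h p = 0 := by simp [hh, hep]
      set e1 : ℂ → ℂ := fun t => dslope h p t / (a * (t + p)) with he1
      have he1d : DifferentiableOn ℂ e1 RHP :=
        (dslope_diff hhd hp).div (by fun_prop) hden
      have he1' : ∀ t ∈ RHP, h t = (1 + a * t ^ 2) * e1 t := by
        intro t ht
        have h1 := dslope_mul h p t
        rw [hhp, sub_zero] at h1
        have h2 : a * (t + p) * e1 t = dslope h p t := by
          simp only [he1]; rw [mul_div_cancel₀ _ (hden t ht)]
        rw [hL, mul_assoc, h2, h1]
      set g1 : ℂ → ℂ := fun t => g t + a * t ^ 2 / u n 0 * e1 t with hg1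
      have hg1d : DifferentiableOn ℂ g1 RHP := hg.add ((hsq.div_const _).mul he1d)
      have hE1 : ∀ t ∈ RHP, E (n+1) 0 t = (1 + a * t ^ 2) ^ (n+1) * e1 t := by
        intro t ht
        rw [S.En, hE t ht, hF t ht, pow_succ]
        have := he1' t ht
        simp only [hh] at this
        linear_combination (1 + a * t ^ 2) ^ n * this
      have hF1 : ∀ t ∈ RHP, F (n+1) 0 t = (1 + a * t ^ 2) ^ (n+1) * g1 t := by
        intro t ht
        rw [S.Fn, hE t ht, hF t ht, pow_succ]
        have := he1' t ht
        simp only [hh] at this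
        simp only [hg1]
        field_simp
        linear_combination (a * t ^ 2) * (1 + a * t ^ 2) ^ n * this
      have hg1p : g1 p = g p - e1 p / u n 0 := by
        simp only [hg1]; rw [ha]; ring
      have hode : (fun t => 2 * ((n : ℂ) + 1) * (a * t ^ 2) * g1 t + (1 + a * t ^ 2) * t * deriv g1 t) p
          = (fun t => a * t ^ 2 * γ * f (n+1) 0 / (u (n+1) 0 * u n 0) * e t) p := by
        apply eq_at_of_eq_off hp
        · exact ((hsq.const_mul _).mul hg1d).add
            (((hsq.const_add 1).mul differentiableOn_id).mul (hg1d.deriv RHP_open))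
        · apply DifferentiableOn.mul _ he
          fun_prop
        · intro t ht htp
          have t0 := RHP_ne_zero ht
          have hLt : 1 + a * t ^ 2 ≠ 0 := by
            rw [hL]; exact mul_ne_zero (sub_ne_zero.2 htp) (hden t ht)
          have d1 := (S.ode n t ht).2
          have hgd : HasDerivAt g1 (deriv g1 t) t :=
            (hg1d.differentiableAt (RHP_open.mem_nhds ht)).hasDerivAt
          have d2 : HasDerivAt (fun t : ℂ => 1 + a * t ^ 2) (a * (2 * t)) t := by
            have := ((hasDerivAt_pow 2 t).const_mul a).const_add 1
            simpa using this
          have d3 := (d2.pow (n+1)).mul hgd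
          have d4 : HasDerivAt (F (n+1) 0) _ t := d3.congr_of_eventuallyEq (by
            filter_upwards [RHP_open.mem_nhds ht] with s hs
            simp [hF1 s hs])
          have d5 := d1.unique d4
          rw [hE t ht] at d5
          simp only [Nat.add_sub_cancel, Pi.pow_apply] at d5
          push_cast at d5
          rw [pow_succ] at d5
          have hP : (1 + a * t ^ 2) ^ n ≠ 0 := pow_ne_zero _ hLt
          field_simp at d5 ⊢
          apply mul_left_cancel₀ hP
          linear_combination -d5
      simp only at hode
      have hax := S.hax n
      have hax0 := S.hax0 n
      have hn1 : ((n : ℂ) + 1) ≠ 0 := by exact_mod_cast Nat.succ_ne_zero n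
      have hk : g1 p * (u (n+1) 0 + u n 0) = u n 0 * g p := by
        rw [ha, hep] at hode
        have h3 : 2 * ((n : ℂ) + 1) * g1 p * u (n+1) 0 = γ * f (n+1) 0 * g p := by
          field_simp at hode
          linear_combination -hode
        apply mul_left_cancel₀ (mul_ne_zero (mul_ne_zero two_ne_zero hn1) hu1)
        linear_combination (u (n+1) 0 + u n 0) * h3 + g p * hax
      refine ⟨e1, g1, he1d, hg1d, hE1, hF1, ?_, ?_⟩
      · have h4 : e1 p = u n 0 * (g p - g1 p) := by
          rw [hg1p]; field_simp; ring
        rw [h4]; linear_combination -hk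
      · intro h0
        rw [h0, zero_mul] at hk
        exact mul_ne_zero hu0 hgp hk.symm
  | succ m ih =>
    obtain ⟨e, g, he, hg, hE, hF, hep, hgp⟩ := ih
    have hv := S.hv0 n m
    refine ⟨fun t => e t - v n m * g t, fun t => g t - a * t ^ 2 / v n m * e t,
      he.sub (hg.const_mul _), hg.sub ((hsq.div_const _).mul he), ?_, ?_, ?_, ?_⟩
    · intro t ht; rw [S.Em, hE t ht, hF t ht]; ring
    · intro t ht; rw [S.Fm, hE t ht, hF t ht]; ring
    · simp only [ha, hep]
      field_simp
      linear_combination - S.hq n m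
    · simp only [ha, hep]
      have : g p - -1 / v n m * (u n m * g p) = (u n m + v n m) * g p / v n m := by
        field_simp; ring
      rw [this]
      exact div_ne_zero (mul_ne_zero (S.huv n m) hgp) hv

end PartE

section PartF

/-- normalized facts about a discrete conformal map with constraint -/
structure DZ (γ : ℝ) (f : ℕ → ℕ → ℂ) : Prop where
  hu0 : ∀ n m, f (n+1) m - f n m ≠ 0
  hv0 : ∀ n m, f n (m+1) - f n m ≠ 0
  hs : ∀ n m, (f (n+1) m - f n m) + (f n (m+1) - f n m) ≠ 0
  hd : ∀ n m, (f (n+1) m - f n m) - (f n (m+1) - f n m) ≠ 0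
  hx : ∀ n m, (f (n+1) (m+1) - f n m) * ((f (n+1) m - f n m) + (f n (m+1) - f n m))
    = 2 * (f (n+1) m - f n m) * (f n (m+1) - f n m)
  h00 : f 0 0 = 0
  hdn : ∀ n m, f (n+2) m - f n m ≠ 0
  hdm : ∀ n m, f n (m+2) - f n m ≠ 0
  hcn : ∀ n : ℕ, γ * f (n+1) 0 = 2 * ((n : ℂ) + 1) * ((f (n+2) 0 - f (n+1) 0) * (f (n+1) 0 - f n 0)) /
    (f (n+2) 0 - f n 0)
  hcm : ∀ n : ℕ, γ * f 0 (n+1) = 2 * ((n : ℂ) + 1) * ((f 0 (n+2) - f 0 (n+1)) * (f 0 (n+1) - f 0 n)) /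
    (f 0 (n+2) - f 0 n)
  hc : ∀ n m : ℕ, γ * f (n+1) (m+1) =
    2 * ((n : ℂ) + 1) * ((f (n+2) (m+1) - f (n+1) (m+1)) * (f (n+1) (m+1) - f n (m+1))) /
      (f (n+2) (m+1) - f n (m+1)) +
    2 * ((m : ℂ) + 1) * ((f (n+1) (m+2) - f (n+1) (m+1)) * (f (n+1) (m+1) - f (n+1) m)) /
      (f (n+1) (m+2) - f (n+1) m)

lemma DZ.mk' {γ : ℝ} {f : ℕ → ℕ → ℂ} (hq : CrossRatioEq f) (hqd : QDenomNonzero f)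
    (hc : ConstraintC (γ : ℂ) f) (hcd : CDenomNonzero f) (h00 : f 0 0 = 0) (h10 : f 1 0 = 1) :
    DZ γ f := by
  have hv0 : ∀ n m, f n (m+1) - f n m ≠ 0 := fun n m => (hqd n m).2
  have hv1 : ∀ n m, f (n+1) m - f (n+1) (m+1) ≠ 0 := fun n m => (hqd n m).1
  have hqu : ∀ n m, (f (n+1) m - f n m) * (f (n+1) (m+1) - f n (m+1)) ≠ 0 := by
    intro n m h
    have h1 := hq n m
    have h2 : (f (n+1) m - f (n+1) (m+1)) * (f n (m+1) - f n m) = 0 := by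
      linear_combination h1 + h
    exact mul_ne_zero (hv1 n m) (hv0 n m) h2
  have hu0 : ∀ n m, f (n+1) m - f n m ≠ 0 := fun n m => left_ne_zero_of_mul (hqu n m)
  have hx : ∀ n m, (f (n+1) (m+1) - f n m) * ((f (n+1) m - f n m) + (f n (m+1) - f n m))
    = 2 * (f (n+1) m - f n m) * (f n (m+1) - f n m) := by
    intro n m
    linear_combination -hq n m
  have hs : ∀ n m, (f (n+1) m - f n m) + (f n (m+1) - f n m) ≠ 0 := by
    intro n m h
    have h1 := hx n m
    rw [h, mul_zero] at h1
    exact mul_ne_zero (mul_ne_zero two_ne_zero (hu0 n m)) (hv0 n m) h1.symm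
  have hd : ∀ n m, (f (n+1) m - f n m) - (f n (m+1) - f n m) ≠ 0 := by
    intro n m h
    have h1 : (f (n+1) m - f n m) * (f (n+1) (m+1) - f (n+1) m) = 0 := by
      linear_combination (hx n m) / 2 + h * (f (n+1) (m+1) - f n m) / 2 - (f (n+1) m - f n m) * h
    rcases mul_eq_zero.1 h1 with h2 | h2
    · exact hu0 n m h2
    · exact hv1 n m (by linear_combination -h2)
  refine ⟨hu0, hv0, hs, hd, hx, h00, ?_, ?_, ?_, ?_, ?_⟩
  · intro n m
    have := (hcd (n+1) m).1 (Nat.succ_ne_zero n)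
    simpa using this
  · intro n m
    have := (hcd n (m+1)).2 (Nat.succ_ne_zero m)
    simpa using this
  · intro n
    have := hc (n+1) 0
    simpa using this
  · intro n
    have := hc 0 (n+1)
    simpa using this
  · intro n m
    have := hc (n+1) (m+1)
    simpa using this

lemma DZ.swap {γ : ℝ} {f : ℕ → ℕ → ℂ} (D : DZ γ f) : DZ γ (fun n m => cj (f m n)) := by
  have ne : ∀ {z : ℂ}, z ≠ 0 → cj z ≠ 0 := fun h => by simpa using h
  refine ⟨fun n m => ?_, fun n m => ?_, fun n m => ?_, fun n m => ?_, fun n m => ?_, ?_,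
    fun n m => ?_, fun n m => ?_, fun n => ?_, fun n => ?_, fun n m => ?_⟩
  · simpa only [map_sub] using ne (D.hv0 m n)
  · simpa only [map_sub] using ne (D.hu0 m n)
  · rw [add_comm]; simpa only [map_sub, map_add] using ne (D.hs m n)
  · have := ne (neg_ne_zero.2 (D.hd m n))
    rw [neg_sub] at this
    simpa only [map_sub, map_add] using this
  · have := congrArg cj (D.hx m n)
    simp only [map_sub, map_add, map_mul, map_ofNat] at this
    linear_combination this
  · simp [D.h00]
  · simpa only [map_sub] using ne (D.hdm m n)
  · simpa only [map_sub] using ne (D.hdn m n)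
  · have := congrArg cj (D.hcm n)
    simpa only [map_sub, map_add, map_mul, map_ofNat, map_div₀, Complex.conj_ofReal, map_natCast, map_one] using this
  · have := congrArg cj (D.hcn n)
    simpa only [map_sub, map_add, map_mul, map_ofNat, map_div₀, Complex.conj_ofReal, map_natCast, map_one] using this
  · have := congrArg cj (D.hc m n)
    simp only [map_sub, map_add, map_mul, map_ofNat, map_div₀, Complex.conj_ofReal, map_natCast, map_one] at this
    linear_combination this

/-- base solution -/
def phi (γ : ℝ) (t : ℂ) : ℂ := exp (I * γ * Real.pi / 4) * t ^ (-(γ : ℂ))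

/-- the wave functions, row zero -/
def EF0 (γ : ℝ) (f : ℕ → ℕ → ℂ) (t : ℂ) : ℕ → ℂ × ℂ
  | 0 => (phi γ t, 1)
  | (n+1) => ((EF0 γ f t n).1 - (f (n+1) 0 - f n 0) * (EF0 γ f t n).2,
      (EF0 γ f t n).2 + I * t ^ 2 / (f (n+1) 0 - f n 0) * (EF0 γ f t n).1)

/-- the wave functions -/
def EF (γ : ℝ) (f : ℕ → ℕ → ℂ) (t : ℂ) (n : ℕ) : ℕ → ℂ × ℂ
  | 0 => EF0 γ f t n
  | (m+1) => ((EF γ f t n m).1 - (f n (m+1) - f n m) * (EF γ f t n m).2,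
      (EF γ f t n m).2 - I * t ^ 2 / (f n (m+1) - f n m) * (EF γ f t n m).1)

lemma EF_n {γ : ℝ} {f : ℕ → ℕ → ℂ} (D : DZ γ f) (t : ℂ) (n m : ℕ) :
   (EF γ f t (n+1) m).1 = (EF γ f t n m).1 - (f (n+1) m - f n m) * (EF γ f t n m).2 ∧
   (EF γ f t (n+1) m).2 = (EF γ f t n m).2 + I * t ^ 2 / (f (n+1) m - f n m) * (EF γ f t n m).1 := by
  induction m with
  | zero => exact ⟨rfl, rfl⟩
  | succ m ih =>
    obtain ⟨h1, h2⟩ := ih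
    have a1 : EF γ f t (n+1) (m+1) = ((EF γ f t (n+1) m).1 - (f (n+1) (m+1) - f (n+1) m) * (EF γ f t (n+1) m).2,
      (EF γ f t (n+1) m).2 - I * t ^ 2 / (f (n+1) (m+1) - f (n+1) m) * (EF γ f t (n+1) m).1) := rfl
    have a2 : EF γ f t n (m+1) = ((EF γ f t n m).1 - (f n (m+1) - f n m) * (EF γ f t n m).2,
      (EF γ f t n m).2 - I * t ^ 2 / (f n (m+1) - f n m) * (EF γ f t n m).1) := rfl
    rw [a1, a2]
    simp only [h1, h2]
    have u0 := D.hu0 n m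
    have v0 := D.hv0 n m
    have u1 := D.hu0 n (m+1)
    have v1 := D.hv0 (n+1) m
    have hx := D.hx n m
    have hs := D.hs n m
    generalize (EF γ f t n m).1 = E at *
    generalize (EF γ f t n m).2 = F at *
    have q1 : (f (n+1) m - f n m) * (f (n+1) (m+1) - f n (m+1)) =
      - ((f (n+1) (m+1) - f (n+1) m) * (f n (m+1) - f n m)) := by linear_combination hx
    have q2 : f (n+1) m - f n m + (f (n+1) (m+1) - f (n+1) m) = 
       f n (m+1) - f n m + (f (n+1) (m+1) - f n (m+1)) := by ring
    generalize f (n+1) m - f n m = u at *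
    generalize f n (m+1) - f n m = v at *
    generalize f (n+1) (m+1) - f n (m+1) = u' at *
    generalize f (n+1) (m+1) - f (n+1) m = v' at *
    have e1 : v' = u * (v - u) / (u + v) := by
      field_simp; linear_combination u * q2 + q1
    have e2 : u' = v * (u - v) / (u + v) := by
      field_simp; linear_combination -v * q2 + q1
    have d1 : v - u ≠ 0 := by rintro h; apply v1; rw [e1, h]; simp
    have d2 : u - v ≠ 0 := by rintro h; apply u1; rw [e2, h]; simp
    rw [e1, e2]
    constructor
    · field_simp
      ring
    · have d3 : u - v = - (v - u) := by ring
      rw [d3]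
      field_simp
      ring

end PartF

section PartG

lemma LS.node_val {γ : ℂ} {f : ℕ → ℕ → ℂ} {a p : ℂ} {φ : ℂ → ℂ} {u v : ℕ → ℕ → ℂ}
    {E F : ℕ → ℕ → ℂ → ℂ} (S : LS γ f a p φ u v E F) (n m : ℕ) {k : ℂ → ℂ} {c : ℂ}
    (hk : DifferentiableOn ℂ k RHP) (h : ∀ t ∈ RHP, t * E n m t = c * k t * F n m t) :
    p * u n m = c * k p := by
  obtain ⟨e, g, he, hg, hE, hF, hep, hgp⟩ := S.nodal n m
  have ha := S.ha
  have ha0 : a ≠ 0 := by rintro h; rw [h] at ha; norm_num at ha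
  have key : (fun t => t * e t) p = (fun t => c * k t * g t) p := by
    apply eq_at_of_eq_off S.hp
    · exact differentiableOn_id.mul he
    · exact (hk.const_mul _).mul hg
    · intro t ht htp
      have hLt : 1 + a * t ^ 2 ≠ 0 := by
        have : 1 + a * t ^ 2 = (t - p) * (a * (t + p)) := by linear_combination ha
        rw [this]; exact mul_ne_zero (sub_ne_zero.2 htp) (mul_ne_zero ha0 (RHP_add_ne ht S.hp))
      have h1 := h t ht
      rw [hE t ht, hF t ht] at h1
      apply mul_left_cancel₀ (pow_ne_zero n hLt)
      linear_combination h1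
  simp only at key
  rw [hep] at key
  apply mul_right_cancel₀ hgp
  linear_combination key

lemma LS.node_ne {γ : ℂ} {f : ℕ → ℕ → ℂ} {a p : ℂ} {φ : ℂ → ℂ} {u v : ℕ → ℕ → ℂ}
    {E F : ℕ → ℕ → ℂ → ℂ} (S : LS γ f a p φ u v E F) (n m : ℕ) :
    (¬ ∀ t ∈ RHP, E n m t = 0) ∧ (¬ ∀ t ∈ RHP, F n m t = 0) := by
  obtain ⟨e, g, he, hg, hE, hF, hep, hgp⟩ := S.nodal n m
  have ha := S.ha
  have ha0 : a ≠ 0 := by rintro h; rw [h] at ha; norm_num at ha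
  have hLt : ∀ t ∈ RHP, t ≠ p → 1 + a * t ^ 2 ≠ 0 := by
    intro t ht htp
    have : 1 + a * t ^ 2 = (t - p) * (a * (t + p)) := by linear_combination ha
    rw [this]; exact mul_ne_zero (sub_ne_zero.2 htp) (mul_ne_zero ha0 (RHP_add_ne ht S.hp))
  constructor
  · intro h
    have key : e p = (fun _ => (0:ℂ)) p := by
      apply eq_at_of_eq_off S.hp he (differentiableOn_const _)
      intro t ht htp
      have h1 := h t ht
      rw [hE t ht] at h1
      exact (mul_eq_zero.1 h1).resolve_left (pow_ne_zero n (hLt t ht htp))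
    simp only at key
    rw [hep] at key
    exact mul_ne_zero (S.hu0 n m) hgp key
  · intro h
    have key : g p = (fun _ => (0:ℂ)) p := by
      apply eq_at_of_eq_off S.hp hg (differentiableOn_const _)
      intro t ht htp
      have h1 := h t ht
      rw [hF t ht] at h1
      exact (mul_eq_zero.1 h1).resolve_left (pow_ne_zero n (hLt t ht htp))
    exact hgp key

/-- the node -/
def pn : ℂ := exp (I * (Real.pi / 4))

lemma pn_log : Complex.log pn = I * (Real.pi / 4) := by
  have h : (I * ((Real.pi : ℂ) / 4)).im = Real.pi / 4 := by
    have : (I * ((Real.pi : ℂ) / 4)) = ((Real.pi / 4 : ℝ) : ℂ) * I := by push_cast; ring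
    rw [this]; simp
  have := Real.pi_pos
  exact Complex.log_exp (by rw [h]; linarith) (by rw [h]; linarith)

lemma pn_re : pn.re = Real.cos (Real.pi / 4) := by
  have : (I * ((Real.pi : ℂ) / 4)) = ((Real.pi / 4 : ℝ) : ℂ) * I := by push_cast; ring
  rw [pn, this, Complex.exp_ofReal_mul_I_re]

lemma pn_mem : pn ∈ RHP := by
  show 0 < pn.re
  rw [pn_re, Real.cos_pi_div_four]; positivity

lemma pn_sq : pn ^ 2 = I := by
  rw [pn, ← Complex.exp_nat_mul]
  have : ((2 : ℕ) : ℂ) * (I * ((Real.pi : ℂ) / 4)) = (Real.pi : ℂ) / 2 * I := by push_cast; ring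
  rw [this, Complex.exp_pi_div_two_mul_I]

lemma cpn_log : Complex.log (cj pn) = - (I * (Real.pi / 4)) := by
  rw [Complex.log_conj, pn_log]
  · simp only [map_mul, map_div₀, Complex.conj_I, Complex.conj_ofReal, map_ofNat]; ring
  · intro h
    have h1 : pn ∈ Complex.slitPlane := Or.inl pn_mem
    exact (Complex.mem_slitPlane_iff_arg.1 h1).1 h

lemma phi_pn (γ : ℝ) : phi γ pn = 1 := by
  rw [phi, Complex.cpow_def_of_ne_zero (RHP_ne_zero pn_mem), pn_log, ← Complex.exp_add]
  rw [← Complex.exp_zero]; congr 1; ring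

lemma phi_cpn (γ : ℝ) : phi γ (cj pn) = exp (I * (γ * Real.pi) / 2) := by
  rw [phi, Complex.cpow_def_of_ne_zero (RHP_ne_zero (RHP_conj pn_mem)), cpn_log, ← Complex.exp_add]
  congr 1; ring

lemma phi_deriv (γ : ℝ) {t : ℂ} (ht : t ∈ RHP) : HasDerivAt (phi γ) (-(γ : ℂ) * phi γ t / t) t := by
  have hs : t ∈ Complex.slitPlane := Or.inl ht
  have h := ((hasDerivAt_id t).cpow_const (c := -(γ : ℂ)) hs).const_mul (exp (I * γ * Real.pi / 4))
  refine h.congr_deriv ?_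
  simp only [id, phi]
  rw [Complex.cpow_sub _ _ (RHP_ne_zero ht), Complex.cpow_one]
  ring

variable {γ : ℝ} {f : ℕ → ℕ → ℂ}

lemma DZ.qu (D : DZ γ f) (n m : ℕ) : (f (n+1) (m+1) - f n (m+1)) * ((f (n+1) m - f n m) + (f n (m+1) - f n m))
   = (f n (m+1) - f n m) * ((f (n+1) m - f n m) - (f n (m+1) - f n m)) := by
  linear_combination D.hx n m

lemma DZ.qv (D : DZ γ f) (n m : ℕ) : (f (n+1) (m+1) - f (n+1) m) * ((f (n+1) m - f n m) + (f n (m+1) - f n m))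
   = (f (n+1) m - f n m) * ((f n (m+1) - f n m) - (f (n+1) m - f n m)) := by
  linear_combination D.hx n m

lemma DZ.ls1 (D : DZ γ f) (h10 : f 1 0 = 1) :
    LS γ f I pn (phi γ) (fun n m => f (n+1) m - f n m) (fun n m => f n (m+1) - f n m)
      (fun n m t => (EF γ f t n m).1) (fun n m t => (EF γ f t n m).2) where
  hp := pn_mem
  ha := by rw [pn_sq, I_mul_I]
  hu := fun n m => rfl
  hv := fun n m => rfl
  hu0 := D.hu0
  hv0 := D.hv0
  huv := D.hs
  hq := D.qu
  h00 := D.h00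
  hax := by
    intro n
    have h := D.hcn n
    have hd := D.hdn n 0
    field_simp at h
    linear_combination h
  hax0 := by
    intro n
    have := D.hdn n 0
    intro h; apply this; linear_combination h
  hφ := fun t ht => phi_deriv γ ht
  hφp := by rw [phi_pn]; simp [h10, D.h00]
  E0 := fun t => rfl
  F0 := fun t => rfl
  En := fun n m t => (EF_n D t n m).1
  Fn := fun n m t => (EF_n D t n m).2
  Em := fun n m t => rfl
  Fm := fun n m t => rfl

lemma DZ.ls2 (D : DZ γ f) (h01 : f 0 1 = exp (I * (γ * Real.pi) / 2)) :
    LS γ (fun n m => f m n) (-I) (cj pn) (phi γ) (fun n m => f m (n+1) - f m n) (fun n m => f (m+1) n - f m n)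
      (fun n m t => (EF γ f t m n).1) (fun n m t => (EF γ f t m n).2) where
  hp := RHP_conj pn_mem
  ha := by rw [← map_pow, pn_sq]; simp
  hu := fun n m => rfl
  hv := fun n m => rfl
  hu0 := fun n m => D.hv0 m n
  hv0 := fun n m => D.hu0 m n
  huv := fun n m => by rw [add_comm]; exact D.hs m n
  hq := fun n m => by linear_combination D.qv m n
  h00 := D.h00
  hax := by
    intro n
    have h := D.hcm n
    have hd := D.hdm 0 n
    field_simp at h
    linear_combination h
  hax0 := by
    intro n
    have := D.hdm 0 n
    intro h; apply this; linear_combination h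
  hφ := fun t ht => phi_deriv γ ht
  hφp := by rw [phi_cpn]; simp [h01, D.h00]
  E0 := fun t => rfl
  F0 := fun t => rfl
  En := fun n m t => rfl
  Fn := fun n m t => by
    show (EF γ f t m n).2 - I * t ^ 2 / _ * (EF γ f t m n).1 = _
    ring
  Em := fun n m t => (EF_n D t m n).1
  Fm := fun n m t => by
    rw [(EF_n D t m n).2]; ring

end PartG

section PartH

variable {γ : ℝ} {f : ℕ → ℕ → ℂ}

def cc (γ : ℝ) : ℂ := exp (I * γ * Real.pi / 4)

lemma cc_ne (γ : ℝ) : cc γ ≠ 0 := Complex.exp_ne_zero _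

def DiagP (γ : ℝ) (f : ℕ → ℕ → ℂ) (n : ℕ) : Prop :=
  ∃ k : ℂ → ℂ, DifferentiableOn ℂ k RHP ∧ (∀ t ∈ RHP, 0 < (k t).re) ∧
    (∀ t ∈ RHP, k (cj t) = cj (k t)) ∧
    ∀ t ∈ RHP, t * (EF γ f t n n).1 = cc γ * k t * (EF γ f t n n).2

lemma diag_zero (hγ0 : 0 < γ) (hγ2 : γ < 2) : DiagP γ f 0 := by
  refine ⟨fun t => t ^ (1 - (γ : ℂ)), ?_, ?_, ?_, ?_⟩
  · intro t ht
    exact (differentiableAt_id.cpow_const (Or.inl ht)).differentiableWithinAt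
  · intro t ht
    have t0 := RHP_ne_zero ht
    show 0 < (t ^ (1 - (γ : ℂ))).re
    have : (1 - (γ : ℂ)) = ((1 - γ : ℝ) : ℂ) := by push_cast; rfl
    rw [Complex.cpow_def_of_ne_zero t0, Complex.exp_re]
    apply mul_pos (Real.exp_pos _)
    rw [this, Complex.im_mul_ofReal, Complex.log_im]
    have ha : |t.arg| < Real.pi / 2 := Complex.abs_arg_lt_pi_div_two_iff.2 (Or.inl ht)
    have hb : |t.arg * (1 - γ)| < Real.pi / 2 := by
      rw [abs_mul]
      have : |1 - γ| ≤ 1 := by rw [abs_le]; constructor <;> linarith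
      calc |t.arg| * |1 - γ| ≤ |t.arg| * 1 := by gcongr
        _ < _ := by linarith
    exact Real.cos_pos_of_mem_Ioo ⟨(abs_lt.1 hb).1, (abs_lt.1 hb).2⟩
  · intro t ht
    show (cj t) ^ (1 - (γ : ℂ)) = cj (t ^ (1 - (γ : ℂ)))
    have h1 : t.arg ≠ Real.pi :=
      (Complex.mem_slitPlane_iff_arg.1 (Or.inl ht : t ∈ Complex.slitPlane)).1
    rw [Complex.conj_cpow _ _ h1]
    simp
  · intro t ht
    have t0 := RHP_ne_zero ht
    show t * phi γ t = cc γ * t ^ (1 - (γ : ℂ)) * 1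
    rw [phi, cc, Complex.cpow_sub _ _ t0, Complex.cpow_neg, Complex.cpow_one]
    ring

lemma diag_step (D : DZ γ f) (h10 : f 1 0 = 1)
    (h01 : f 0 1 = exp (I * (γ * Real.pi) / 2)) (n : ℕ) (hP : DiagP γ f n) :
    DiagP γ f (n+1) ∧ ∃ μ : ℂ, 0 < μ.re ∧ μ.im < 0 ∧ f (n+1) n - f n n = cc γ * μ ∧
      f n (n+1) - f n n = cc γ * cj μ := by
  obtain ⟨k, hk, hkr, hks, hke⟩ := hP
  have c0 := cc_ne γ
  have hp0 : pn ≠ 0 := RHP_ne_zero pn_mem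
  set S1 := D.ls1 h10
  set S2 := D.ls2 h01
  have n1 := S1.node_val n n hk hke
  have n2 := S2.node_val n n hk hke
  beta_reduce at n1 n2
  set μ : ℂ := (f (n+1) n - f n n) / cc γ with hμ
  have hu : f (n+1) n - f n n = cc γ * μ := by rw [hμ]; field_simp
  have hkp : k pn = pn * μ := by
    apply mul_left_cancel₀ c0
    rw [← n1, hu]; ring
  have hv : f n (n+1) - f n n = cc γ * cj μ := by
    rw [hks pn pn_mem, hkp, map_mul] at n2
    apply mul_left_cancel₀ (RHP_ne_zero (RHP_conj pn_mem))
    rw [n2]; ring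
  have hs := D.hs n n
  have hd := D.hd n n
  have hre : μ.re ≠ 0 := by
    intro h
    apply hs
    rw [hu, hv, ← mul_add, Complex.add_conj, h]; simp
  have him : μ.im ≠ 0 := by
    intro h
    apply hd
    rw [hu, hv, ← mul_sub, Complex.sub_conj, h]; simp
  obtain ⟨hr, hi, halt⟩ := pr_step hk hkr hks pn_mem pn_sq hkp hre him
  refine ⟨?_, μ, hr, hi, hu, hv⟩
  -- two-step formulas
  have hmr : (μ.re : ℂ) ≠ 0 := by exact_mod_cast hre
  have hmi : (μ.im : ℂ) ≠ 0 := by exact_mod_cast him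
  have hμ0 : μ ≠ 0 := by rintro h; rw [h] at hre; simp at hre
  have e1 : μ = μ.re + μ.im * I := (Complex.re_add_im μ).symm
  have e2 : cj μ = μ.re - μ.im * I := by
    apply Complex.ext <;> simp
  have hv' : f (n+1) (n+1) - f (n+1) n = - I * (μ.im / μ.re) * (cc γ * μ) := by
    have h := D.qv n n
    rw [hu, hv] at h
    have h2 : cc γ * μ + cc γ * cj μ = 2 * cc γ * μ.re := by
      rw [e2]; linear_combination cc γ * e1
    have h3 : cc γ * cj μ - cc γ * μ = - 2 * I * cc γ * μ.im := by
      rw [e2]; linear_combination -cc γ * e1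
    rw [h2, h3] at h
    field_simp
    apply mul_left_cancel₀ (mul_ne_zero two_ne_zero c0)
    linear_combination h
  have hE2 : ∀ t ∈ RHP, μ.re * (t * (EF γ f t (n+1) (n+1)).1) =
      cc γ * (EF γ f t n n).2 * (((μ.re : ℂ) - μ.im * t ^ 2) * k t - μ * cj μ * t) := by
    intro t ht
    have h1 : (EF γ f t (n+1) (n+1)).1 = (EF γ f t (n+1) n).1 -
      (f (n+1) (n+1) - f (n+1) n) * (EF γ f t (n+1) n).2 := rfl
    rw [h1, (EF_n D t n n).1, (EF_n D t n n).2, hv', hu]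
    have h2 := hke t ht
    generalize (EF γ f t n n).1 = E at *
    generalize (EF γ f t n n).2 = F at *
    have h3 : cj μ = μ - 2 * μ.im * I := by rw [e2]; linear_combination -e1
    have h4 : (μ.re : ℂ) = μ - μ.im * I := by linear_combination -e1
    rw [h3]
    field_simp
    rw [h4]
    have I2 : I ^ 2 = -1 := I_sq
    linear_combination (μ - μ.im * I - μ.im * t ^ 2) * h2 + (μ.im * t ^ 3 * E) * I2
  have hF2 : ∀ t ∈ RHP, - μ.im * (EF γ f t (n+1) (n+1)).2 =
      (EF γ f t n n).2 * ((μ.re : ℂ) * t ^ 2 - μ.im - t * k t) := by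
    intro t ht
    have h1 : (EF γ f t (n+1) (n+1)).2 = (EF γ f t (n+1) n).2 -
      I * t ^ 2 / (f (n+1) (n+1) - f (n+1) n) * (EF γ f t (n+1) n).1 := rfl
    rw [h1, (EF_n D t n n).1, (EF_n D t n n).2, hv', hu]
    have h2 := hke t ht
    generalize (EF γ f t n n).1 = E at *
    generalize (EF γ f t n n).2 = F at *
    have h4 : (μ.re : ℂ) = μ - μ.im * I := by linear_combination -e1
    have I2 : I ^ 2 = -1 := I_sq
    field_simp
    rw [h4]
    linear_combination (-t * μ) * h2 + 0 * I2
  rcases halt with hX | hY | ⟨k2, k2d, k2r, k2s, k2e⟩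
  · exfalso
    apply (S1.node_ne (n+1) (n+1)).1
    intro t ht
    have h := hE2 t ht
    rw [hX t ht, mul_zero] at h
    have := (mul_eq_zero.1 h).resolve_left hmr
    exact (mul_eq_zero.1 this).resolve_left (RHP_ne_zero ht)
  · exfalso
    apply (S1.node_ne (n+1) (n+1)).2
    intro t ht
    have h := hF2 t ht
    rw [hY t ht, mul_zero] at h
    exact (mul_eq_zero.1 h).resolve_left (neg_ne_zero.2 hmi)
  · refine ⟨fun t => ((-μ.im / μ.re : ℝ) : ℂ) * k2 t, k2d.const_mul _, ?_, ?_, ?_⟩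
    · intro t ht
      show 0 < (((-μ.im / μ.re : ℝ) : ℂ) * k2 t).re
      rw [Complex.re_ofReal_mul]
      exact mul_pos (div_pos (by linarith) hr) (k2r t ht)
    · intro t ht
      show ((-μ.im / μ.re : ℝ) : ℂ) * k2 (cj t) = cj (((-μ.im / μ.re : ℝ) : ℂ) * k2 t)
      rw [map_mul, Complex.conj_ofReal, k2s t ht]
    · intro t ht
      have h1 := hE2 t ht
      have h2 := hF2 t ht
      rw [← k2e t ht] at h1
      push_cast
      apply mul_left_cancel₀ hmr
      field_simp
      linear_combination h1 - cc γ * k2 t * h2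

lemma diag_all (hγ0 : 0 < γ) (hγ2 : γ < 2) (D : DZ γ f) (h10 : f 1 0 = 1)
    (h01 : f 0 1 = exp (I * (γ * Real.pi) / 2)) (n : ℕ) :
    ∃ μ : ℂ, 0 < μ.re ∧ μ.im < 0 ∧ f (n+1) n - f n n = cc γ * μ ∧
      f n (n+1) - f n n = cc γ * cj μ := by
  have h : ∀ n, DiagP γ f n := by
    intro n
    induction n with
    | zero => exact diag_zero hγ0 hγ2
    | succ n ih => exact (diag_step D h10 h01 n ih).1
  exact (diag_step D h10 h01 n (h n)).2

end PartH

section PartI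

variable {γ : ℝ} {f : ℕ → ℕ → ℂ}

/-- corner ratio -/
def WW (f : ℕ → ℕ → ℂ) (n m : ℕ) : ℂ := (f n (m+1) - f n m) / (f (n+1) m - f n m)

lemma DZ.W_ne (D : DZ γ f) (n m : ℕ) : WW f n m ≠ 0 := div_ne_zero (D.hv0 n m) (D.hu0 n m)

lemma DZ.W_add (D : DZ γ f) (n m : ℕ) : 1 + WW f n m ≠ 0 := by
  have h := D.hu0 n m
  have : 1 + WW f n m = ((f (n+1) m - f n m) + (f n (m+1) - f n m)) / (f (n+1) m - f n m) := by
    rw [WW, add_div, div_self h]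
  rw [this]; exact div_ne_zero (D.hs n m) h

lemma DZ.W_sub (D : DZ γ f) (n m : ℕ) : 1 - WW f n m ≠ 0 := by
  have h := D.hu0 n m
  have : 1 - WW f n m = ((f (n+1) m - f n m) - (f n (m+1) - f n m)) / (f (n+1) m - f n m) := by
    rw [WW, sub_div (f (n+1) m - f n m), div_self h]
  rw [this]; exact div_ne_zero (D.hd n m) h

lemma DZ.vW (D : DZ γ f) (n m : ℕ) : f n (m+1) - f n m = WW f n m * (f (n+1) m - f n m) := by
  rw [WW, div_mul_cancel₀ _ (D.hu0 n m)]

lemma DZ.v'W (D : DZ γ f) (n m : ℕ) : (f (n+1) (m+1) - f (n+1) m) * (1 + WW f n m) =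
    (WW f n m - 1) * (f (n+1) m - f n m) := by
  have h := D.qv n m
  rw [D.vW n m] at h
  apply mul_left_cancel₀ (D.hu0 n m)
  linear_combination h

lemma DZ.u'W (D : DZ γ f) (n m : ℕ) : (f (n+1) (m+1) - f n (m+1)) * (1 + WW f n m) =
    WW f n m * (1 - WW f n m) * (f (n+1) m - f n m) := by
  have h := D.qu n m
  rw [D.vW n m] at h
  apply mul_left_cancel₀ (D.hu0 n m)
  linear_combination h

lemma DZ.cb (D : DZ γ f) (n m : ℕ) : (f n m - f (n+1) m) * (1 - WW f n m) =
    (1 + WW f n m) * (f (n+1) (m+1) - f (n+1) m) := by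
  linear_combination -D.v'W n m

lemma DZ.ccr (D : DZ γ f) (n m : ℕ) : (f (n+1) m - f (n+1) (m+1)) * WW f n m =
    - (f n (m+1) - f (n+1) (m+1)) := by
  apply mul_left_cancel₀ (D.W_add n m)
  linear_combination (-WW f n m) * D.v'W n m - D.u'W n m

lemma DZ.cd (D : DZ γ f) (n m : ℕ) : (f (n+1) (m+1) - f n (m+1)) * (WW f n m + 1) =
    (WW f n m - 1) * (f n m - f n (m+1)) := by
  linear_combination D.u'W n m + (WW f n m - 1) * D.vW n m

lemma DZ.vertex (D : DZ γ f) (n m : ℕ) :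
    WW f (n+1) (m+1) * ((1 + WW f n (m+1)) / (1 - WW f n (m+1))) * (-1 / WW f n m) *
      ((WW f (n+1) m - 1) / (WW f (n+1) m + 1)) = 1 := by
  have a1 : WW f (n+1) (m+1) = (f (n+1) (m+2) - f (n+1) (m+1)) / (f (n+2) (m+1) - f (n+1) (m+1)) := rfl
  have e1 := D.hu0 (n+1) (m+1)
  have e2 := D.hv0 (n+1) (m+1)
  have e3 := D.hu0 n (m+1)
  have e4 := D.hv0 (n+1) m
  have a2 : (1 + WW f n (m+1)) / (1 - WW f n (m+1)) =
    (f n (m+1) - f (n+1) (m+1)) / (f (n+1) (m+2) - f (n+1) (m+1)) := by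
    rw [div_eq_div_iff (D.W_sub n (m+1)) e2]
    linear_combination -D.cb n (m+1)
  have e3' : f n (m+1) - f (n+1) (m+1) ≠ 0 := by rw [← neg_sub]; exact neg_ne_zero.2 e3
  have e4' : f (n+1) m - f (n+1) (m+1) ≠ 0 := by rw [← neg_sub]; exact neg_ne_zero.2 e4
  have a3 : -1 / WW f n m = (f (n+1) m - f (n+1) (m+1)) / (f n (m+1) - f (n+1) (m+1)) := by
    rw [div_eq_div_iff (D.W_ne n m) e3']
    linear_combination -D.ccr n m
  have a4 : (WW f (n+1) m - 1) / (WW f (n+1) m + 1) =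
      (f (n+2) (m+1) - f (n+1) (m+1)) / (f (n+1) m - f (n+1) (m+1)) := by
    have := D.W_add (n+1) m
    rw [add_comm] at this
    rw [div_eq_div_iff this e4']
    linear_combination -D.cd (n+1) m
  rw [a1, a2, a3, a4]
  field_simp

/-- kite predicate -/
def KK (N : ℕ) (z : ℂ) : Prop := (Even N → z.re ^ 2 + z.im ^ 2 = 1) ∧ (¬ Even N → z.re = 0)

lemma nsq_ne {z : ℂ} (h : z ≠ 0) : z.re ^ 2 + z.im ^ 2 ≠ 0 := by
  have := Complex.normSq_pos.2 h
  rw [Complex.normSq_apply] at this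
  nlinarith

lemma KK_M {N : ℕ} {w : ℂ} (h : KK N w) (h1 : 1 - w ≠ 0) : KK (N+1) ((1 + w) / (1 - w)) := by
  have hn := nsq_ne h1
  have hn' : Complex.normSq (1 - w) ≠ 0 := fun h => h1 (Complex.normSq_eq_zero.1 h)
  constructor
  · intro he
    have := h.2 (by intro h'; exact (Nat.even_add_one.1 he) h')
    have hh : Complex.normSq ((1 + w) / (1 - w)) = 1 := by
      rw [Complex.normSq_div, div_eq_one_iff_eq hn', Complex.normSq_apply, Complex.normSq_apply]
      simp [this]
    rw [Complex.normSq_apply] at hh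
    linarith
  · intro he
    have := h.1 (by by_contra h'; exact he (Nat.even_add_one.2 h'))
    rw [Complex.div_re, ← add_div, div_eq_zero_iff]
    left
    simp
    linarith

lemma KK_M' {N : ℕ} {w : ℂ} (h : KK N w) (h1 : w + 1 ≠ 0) : KK (N+1) ((w - 1) / (w + 1)) := by
  have hn' : Complex.normSq (w + 1) ≠ 0 := fun h => h1 (Complex.normSq_eq_zero.1 h)
  constructor
  · intro he
    have := h.2 (by intro h'; exact (Nat.even_add_one.1 he) h')
    have hh : Complex.normSq ((w - 1) / (w + 1)) = 1 := by
      rw [Complex.normSq_div, div_eq_one_iff_eq hn', Complex.normSq_apply, Complex.normSq_apply]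
      simp [this]
    rw [Complex.normSq_apply] at hh
    linarith
  · intro he
    have := h.1 (by by_contra h'; exact he (Nat.even_add_one.2 h'))
    rw [Complex.div_re, ← add_div, div_eq_zero_iff]
    left
    simp
    linarith

lemma KK_neg_inv {N : ℕ} {w : ℂ} (h : KK N w) : KK (N+2) (-1 / w) := by
  constructor
  · intro he
    have h1 := h.1 (by have := (Nat.even_add (m := N) (n := 2)).1 he; simpa using this)
    have hh : Complex.normSq (-1 / w) = 1 := by
      rw [Complex.normSq_div, Complex.normSq_apply w]
      have : w.re * w.re + w.im * w.im = 1 := by linarith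
      rw [this]; simp
    rw [Complex.normSq_apply] at hh
    linarith
  · intro he
    have h1 := h.2 (by intro h'; exact he (h'.add even_two))
    rw [Complex.div_re, h1]; simp

/-- parity predicate on corner ratios with product one -/
lemma KK_prod {N : ℕ} {s x y z : ℂ} (h : s * x * y * z = 1) (hx : KK N x) (hy : KK N y) (hz : KK N z) :
    KK N s := by
  constructor
  · intro he
    have h1 := congrArg Complex.normSq h
    simp only [Complex.normSq_mul, map_one] at h1
    have hx1 : Complex.normSq x = 1 := by rw [Complex.normSq_apply]; linarith [hx.1 he]
    have hy1 : Complex.normSq y = 1 := by rw [Complex.normSq_apply]; linarith [hy.1 he]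
    have hz1 : Complex.normSq z = 1 := by rw [Complex.normSq_apply]; linarith [hz.1 he]
    rw [hx1, hy1, hz1, Complex.normSq_apply] at h1
    linarith
  · intro he
    have hx1 := hx.2 he
    have hy1 := hy.2 he
    have hz1 := hz.2 he
    have h1 := congrArg Complex.re h
    have h2 := congrArg Complex.im h
    simp [hx1, hy1, hz1] at h1 h2
    rcases h2 with h2 | h2 
    · rcases h2 with h2 | h2
      · rcases h2 with h2 | h2
        · exact h2
        · rw [h2] at h1; simp at h1
      · rw [h2] at h1; simp at h1
    · rw [h2] at h1; simp at h1

lemma KK_prod2 {N : ℕ} {s x r : ℂ} (h : s * x = r) (hx : KK N x) (hre : Even N → Complex.normSq r = 1)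
    (hro : ¬ Even N → r.im = 0) (hr0 : r ≠ 0) : KK N s := by
  constructor
  · intro he
    have h1 := congrArg Complex.normSq h
    rw [Complex.normSq_mul, hre he] at h1
    have hx1 : Complex.normSq x = 1 := by rw [Complex.normSq_apply]; linarith [hx.1 he]
    rw [hx1, Complex.normSq_apply] at h1
    linarith
  · intro he
    have hx1 := hx.2 he
    have h2 := congrArg Complex.im h
    rw [hro he, Complex.mul_im, hx1] at h2
    simp at h2
    rcases h2 with h2 | h2
    · exact h2
    · exfalso; apply hr0
      rw [← h]
      have : x = 0 := Complex.ext hx1 h2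
      rw [this, mul_zero]

lemma axis_ratio (hγ0 : 0 < γ) (hγ2 : γ < 2) (x : ℕ → ℂ) (h0 : x 0 = 0) (hu : ∀ n, x (n+1) - x n ≠ 0)
    (hd : ∀ n, x (n+2) - x n ≠ 0)
    (hc : ∀ n : ℕ, γ * x (n+1) = 2 * ((n : ℂ) + 1) * ((x (n+2) - x (n+1)) * (x (n+1) - x n)) /
    (x (n+2) - x n)) (n : ℕ) :
    ∃ r : ℝ, x (n+2) - x (n+1) = r * (x (n+1) - x n) ∧ r ≠ 0 ∧ (¬ Even n → r = 1) := by
  have hc' : ∀ n : ℕ, γ * x (n+1) * ((x (n+2) - x (n+1)) + (x (n+1) - x n)) =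
      2 * ((n : ℂ) + 1) * ((x (n+2) - x (n+1)) * (x (n+1) - x n)) := by
    intro n
    have h := hc n
    have := hd n
    field_simp at h
    linear_combination h
  have A : ∀ k : ℕ, γ * x (2*k+1) = (2 * k + γ) * (x (2*k+1) - x (2*k)) ∧
      (2 * k + γ) * (x (2*k+1) - x (2*k)) = (2 * k + 2 - γ) * (x (2*k+2) - x (2*k+1)) ∧
      x (2*k+3) - x (2*k+2) = x (2*k+2) - x (2*k+1) := by
    have step : ∀ k : ℕ, γ * x (2*k+1) = (2 * k + γ) * (x (2*k+1) - x (2*k)) →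
      (2 * k + γ) * (x (2*k+1) - x (2*k)) = (2 * k + 2 - γ) * (x (2*k+2) - x (2*k+1)) ∧
      x (2*k+3) - x (2*k+2) = x (2*k+2) - x (2*k+1) := by
      intro k h
      have c1 := hc' (2*k)
      have c2 := hc' (2*k+1)
      have u0 := hu (2*k)
      have u1 := hu (2*k+1)
      have b1 : (2 * k + γ) * (x (2*k+1) - x (2*k)) = (2 * k + 2 - γ) * (x (2*k+2) - x (2*k+1)) := by
        apply mul_left_cancel₀ u0
        rw [h] at c1
        push_cast at c1
        linear_combination c1
      refine ⟨b1, ?_⟩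
      have hk : (2 * (k : ℂ) + 2) ≠ 0 := by
        have : (2 * (k : ℂ) + 2) = ((2 * k + 2 : ℕ) : ℂ) := by push_cast; ring
        rw [this]; exact Nat.cast_ne_zero.2 (by omega)
      apply mul_left_cancel₀ (mul_ne_zero hk u1)
      have b2 : γ * x (2*k+1+1) = (2 * k + 2) * (x (2*k+1+1) - x (2*k+1)) := by
        linear_combination h + b1
      rw [b2] at c2
      push_cast at c2
      linear_combination -c2
    intro k
    induction k with
    | zero =>
      have b0 : γ * x (2*0+1) = (2 * ((0:ℕ):ℂ) + γ) * (x (2*0+1) - x (2*0)) := by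
        simp [h0]
      exact ⟨b0, step 0 b0⟩
    | succ k ih =>
      obtain ⟨i1, i2, i3⟩ := ih
      have b0 : γ * x (2*(k+1)+1) = (2 * ((k+1:ℕ):ℂ) + γ) * (x (2*(k+1)+1) - x (2*(k+1))) := by
        have q1 : 2*(k+1)+1 = 2*k+3 := by ring
        have q2 : 2*(k+1) = 2*k+2 := by ring
        rw [q1, q2]
        push_cast
        linear_combination i1 + i2 - (2 * k + 2) * i3
      exact ⟨b0, step (k+1) b0⟩
  rcases Nat.even_or_odd' n with ⟨k, rfl | rfl⟩
  · obtain ⟨i1, i2, i3⟩ := A k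
    have hk : (0:ℝ) ≤ k := Nat.cast_nonneg k
    have hne : (2 * (k:ℝ) + 2 - γ) ≠ 0 := by linarith
    refine ⟨(2 * k + γ) / (2 * k + 2 - γ), ?_, div_ne_zero (by linarith) hne, ?_⟩
    · have hne' : (2 * (k:ℂ) + 2 - γ) ≠ 0 := by exact_mod_cast hne
      push_cast
      rw [div_mul_eq_mul_div, eq_div_iff hne']
      linear_combination -i2
    · intro h; exact absurd (even_two_mul k) h
  · obtain ⟨i1, i2, i3⟩ := A k
    exact ⟨1, by push_cast; linear_combination i3, one_ne_zero, fun _ => rfl⟩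

lemma DZ.kites (D : DZ γ f) (hγ0 : 0 < γ) (hγ2 : γ < 2) (h0 : KK 0 (WW f 0 0)) (n m : ℕ) :
    KK (n+m) (WW f n m) := by
  have addc : ∀ n m, WW f n m + 1 ≠ 0 := fun n m => by rw [add_comm]; exact D.W_add n m
  have par : ∀ {N M : ℕ} {z : ℂ}, KK N z → N = M → KK M z := fun h e => e ▸ h
  induction n generalizing m with
  | zero =>
    induction m with
    | zero => exact h0
    | succ m ih =>
      obtain ⟨r, hr, hr0, hr1⟩ := axis_ratio hγ0 hγ2 (fun k => f 0 k) D.h00 (D.hv0 0) (D.hdm 0) D.hcm m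
      have h2 : KK (0+(m+1)) ((WW f 0 m - 1) / (WW f 0 m + 1)) := par (KK_M' ih (addc 0 m)) (by ring)
      refine KK_prod2 (r := -(r:ℂ)) (x := (WW f 0 m - 1) / (WW f 0 m + 1)) ?_ h2 ?_ ?_ ?_
      · have e1 := D.hu0 0 (m+1)
        have e2 := D.hv0 0 m
        have e2' : f 0 m - f 0 (m+1) ≠ 0 := by rw [← neg_sub]; exact neg_ne_zero.2 e2
        have a4 : (WW f 0 m - 1) / (WW f 0 m + 1) =
           (f (0+1) (m+1) - f 0 (m+1)) / (f 0 m - f 0 (m+1)) := by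
          rw [div_eq_div_iff (addc 0 m) e2']
          linear_combination -D.cd 0 m
        rw [a4, WW]
        beta_reduce at hr
        rw [div_mul_div_cancel₀ e1, div_eq_iff e2']
        linear_combination hr
      · intro he
        have : r = 1 := hr1 (by intro h; rw [zero_add] at he; exact (Nat.even_add_one.1 he) h)
        rw [this]; simp
      · intro _; simp
      · simpa using hr0
  | succ n ih =>
    induction m with
    | zero =>
      obtain ⟨r, hr, hr0, hr1⟩ := axis_ratio hγ0 hγ2 (fun k => f k 0) D.h00 (fun k => D.hu0 k 0)
        (fun k => D.hdn k 0) D.hcn n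
      have h2 : KK (n+1+0) ((1 + WW f n 0) / (1 - WW f n 0)) := par (KK_M (ih 0) (D.W_sub n 0)) (by ring)
      have hrc : (r:ℂ) ≠ 0 := by exact_mod_cast hr0
      refine KK_prod2 (r := -(r:ℂ)⁻¹) (x := (1 + WW f n 0) / (1 - WW f n 0)) ?_ h2 ?_ ?_ ?_
      · have e1 := D.hu0 (n+1) 0
        have e2 := D.hv0 (n+1) 0
        have a4 : (1 + WW f n 0) / (1 - WW f n 0) = (f n 0 - f (n+1) 0) / (f (n+1) (0+1) - f (n+1) 0) := by
          rw [div_eq_div_iff (D.W_sub n 0) e2]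
          linear_combination -D.cb n 0
        rw [a4, WW]
        beta_reduce at hr
        rw [mul_comm, div_mul_div_cancel₀ e2, div_eq_iff e1, hr]
        field_simp
        ring
      · intro he
        have : r = 1 := hr1 (by intro h; rw [add_zero] at he; exact (Nat.even_add_one.1 he) h)
        rw [this]; simp
      · intro _; rw [← Complex.ofReal_inv]; simp
      · simpa using hr0
    | succ m ihm =>
      exact KK_prod (D.vertex n m)
        (par (KK_M (ih (m+1)) (D.W_sub n (m+1))) (by ring))
        (par (KK_neg_inv (ih m)) (by ring))
        (par (KK_M' ihm (addc (n+1) m)) (by ring))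

end PartI

section PartJ

variable {γ : ℝ} {f : ℕ → ℕ → ℂ}

lemma im_M_pos {w : ℂ} (h1 : 1 - w ≠ 0) : 0 < ((1 + w) / (1 - w)).im ↔ 0 < w.im := by
  have hn : 0 < Complex.normSq (1 - w) := Complex.normSq_pos.2 h1
  have : ((1 + w) / (1 - w)).im = 2 * w.im / Complex.normSq (1 - w) := by
    rw [Complex.div_im, ← sub_div]
    congr 1
    simp; ring
  rw [this, div_pos_iff_of_pos_right hn]
  constructor <;> intro h <;> linarith

lemma im_M'_pos {w : ℂ} (h1 : w + 1 ≠ 0) : 0 < ((w - 1) / (w + 1)).im ↔ 0 < w.im := by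
  have hn : 0 < Complex.normSq (w + 1) := Complex.normSq_pos.2 h1
  have : ((w - 1) / (w + 1)).im = 2 * w.im / Complex.normSq (w + 1) := by
    rw [Complex.div_im, ← sub_div]
    congr 1
    simp; ring
  rw [this, div_pos_iff_of_pos_right hn]
  constructor <;> intro h <;> linarith

lemma im_neg_inv_pos {w : ℂ} (h1 : w ≠ 0) : 0 < (-1 / w).im ↔ 0 < w.im := by
  have hn : 0 < Complex.normSq w := Complex.normSq_pos.2 h1
  have : (-1 / w).im = w.im / Complex.normSq w := by
    rw [Complex.div_im]; simp [neg_div]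
  rw [this, div_pos_iff_of_pos_right hn]

lemma base_diag (hγ0 : 0 < γ) (hγ2 : γ < 2) (D : DZ γ f) (h10 : f 1 0 = 1)
    (h01 : f 0 1 = exp (I * (γ * Real.pi) / 2)) (n : ℕ) : 0 < (WW f n n).im := by
  obtain ⟨μ, h1, h2, h3, h4⟩ := diag_all hγ0 hγ2 D h10 h01 n
  have hμ : μ ≠ 0 := fun h => by rw [h] at h1; simp at h1
  have hn : 0 < Complex.normSq μ := Complex.normSq_pos.2 hμ
  rw [WW, h3, h4, mul_div_mul_left _ _ (cc_ne γ), Complex.div_im, ← sub_div]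
  apply div_pos _ hn
  simp
  nlinarith [mul_pos h1 (neg_pos.2 h2)]

lemma base_off (hγ0 : 0 < γ) (hγ2 : γ < 2) (D : DZ γ f) (h10 : f 1 0 = 1)
    (h01 : f 0 1 = exp (I * (γ * Real.pi) / 2)) (n : ℕ) : 0 < (WW f n (n+1)).im := by
  obtain ⟨μ, h1, h2, h3, h4⟩ := diag_all hγ0 hγ2 D h10 h01 n
  obtain ⟨ν, k1, k2, k3, k4⟩ := diag_all hγ0 hγ2 D h10 h01 (n+1)
  have hν : ν ≠ 0 := fun h => by rw [h] at k1; simp at k1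
  have hn : 0 < Complex.normSq ν := Complex.normSq_pos.2 hν
  have q := D.qu n n
  have cb := D.cb n (n+1)
  have hW := D.W_sub n (n+1)
  have hN : 0 < Complex.normSq (1 - WW f n (n+1)) := Complex.normSq_pos.2 hW
  rw [k4] at cb
  rw [h3, h4] at q
  have hc := cc_ne γ
  have e1 : μ + cj μ = 2 * (μ.re : ℂ) := by apply Complex.ext <;> simp; ring
  have e2 : μ - cj μ = 2 * I * (μ.im : ℂ) := by apply Complex.ext <;> simp; ring
  have q' : (f (n+1) (n+1) - f n (n+1)) * (μ.re : ℂ) = cc γ * cj μ * (I * (μ.im : ℂ)) := by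
    apply mul_left_cancel₀ (mul_ne_zero two_ne_zero hc)
    linear_combination q - (f (n+1) (n+1) - f n (n+1)) * cc γ * e1 + cc γ * cj μ * cc γ * e2
  set W := WW f n (n+1) with hWdef
  have key : -(I * μ.im) * cj μ * (1 - W) = (1 + W) * cj ν * (μ.re : ℂ) := by
    apply mul_left_cancel₀ hc
    linear_combination (μ.re : ℂ) * cb + (1 - W) * q'
  have key2 : -(I * μ.im) * cj μ * ν * (Complex.normSq (1 - W) : ℂ) =
      (1 + W) * cj (1 - W) * (Complex.normSq ν : ℂ) * (μ.re : ℂ) := by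
    rw [← Complex.mul_conj, ← Complex.mul_conj]
    linear_combination ν * cj (1 - W) * key
  have h := congrArg Complex.im key2
  rw [show (1 + W) * cj (1 - W) * (Complex.normSq ν : ℂ) * (μ.re : ℂ) =
    ((1 + W) * cj (1 - W)) * ((Complex.normSq ν * μ.re : ℝ) : ℂ) by push_cast; ring,
    show -(I * μ.im) * cj μ * ν * (Complex.normSq (1 - W) : ℂ) =
      (I * (cj μ * ν)) * ((- μ.im * Complex.normSq (1 - W) : ℝ) : ℂ) by push_cast; ring,
    Complex.im_mul_ofReal, Complex.im_mul_ofReal] at h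
  have e3 : (I * (cj μ * ν)).im = μ.re * ν.re + μ.im * ν.im := by simp
  have e4 : ((1 + W) * cj (1 - W)).im = 2 * W.im := by simp; ring
  rw [e3, e4] at h
  have : 0 < (μ.re * ν.re + μ.im * ν.im) * (-μ.im * Complex.normSq (1 - W)) := by
    apply mul_pos
    · nlinarith [mul_pos h1 k1, mul_pos (neg_pos.2 h2) (neg_pos.2 k2)]
    · exact mul_pos (by linarith) hN
  rw [h] at this
  have := (pos_iff_pos_of_mul_pos this).2 (mul_pos hn h1)
  linarith

lemma im_of_re0 {w : ℂ} (h : w.re = 0) : w = I * (w.im : ℂ) := by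
  apply Complex.ext <;> simp [h]

lemma P6 (D : DZ γ f) (K : ∀ n m, KK (n+m) (WW f n m)) (a b : ℕ) (ho : ¬ Even (a+b))
    (p1 : 0 < (WW f (a+1) (b+1)).im) (p2 : 0 < (WW f a (b+1)).im) (p3 : 0 < (WW f a b).im) :
    0 < (WW f (a+1) b).im := by
  have addc : WW f (a+1) b + 1 ≠ 0 := by rw [add_comm]; exact D.W_add _ _
  have par : ∀ {N M : ℕ} {z : ℂ}, KK N z → N = M → KK M z := fun h e => e ▸ h
  have ho2 : ¬ Even (a+b+2) := by
    intro h; exact ho (by have := (Nat.even_add (m := a+b) (n := 2)).1 h; simpa using this)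
  have hv := D.vertex a b
  have r1 := (par (K (a+1) (b+1)) (show _ = a+b+2 by ring)).2 ho2
  have r2 := (par (KK_M (K a (b+1)) (D.W_sub a (b+1))) (show _ = a+b+2 by ring)).2 ho2
  have r3 := (KK_neg_inv (K a b)).2 ho2
  have r4 := (par (KK_M' (K (a+1) b) addc) (show _ = a+b+2 by ring)).2 ho2
  rw [← im_M_pos (D.W_sub _ _)] at p2
  rw [← im_neg_inv_pos (D.W_ne _ _)] at p3
  rw [← im_M'_pos addc]
  have h := congrArg Complex.re hv
  simp only [Complex.mul_re, Complex.mul_im, r1, r2, r3, r4, Complex.one_re] at h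
  have hp := mul_pos (mul_pos p1 p2) p3
  refine (pos_iff_pos_of_mul_pos (a := (WW f (a + 1) (b + 1)).im * ((1 + WW f a (b + 1)) / (1 - WW f a (b + 1))).im * (-1 / WW f a b).im) ?_).1 hp
  linarith

lemma p_term (D : DZ γ f) (K : ∀ n m, KK (n+m) (WW f n m)) (a b : ℕ) (he : Even (a+b)) :
    ∃ R : ℝ, γ * f a (b+1) = R * (f a (b+1) - f (a+1) (b+1)) +
      2 * ((b:ℂ)+1) * ((f a (b+2) - f a (b+1)) * (f a (b+1) - f a b)) / (f a (b+2) - f a b) := by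
  rcases a with _ | k
  · exact ⟨0, by rw [D.hcm b]; simp⟩
  · have par : ∀ {N M : ℕ} {z : ℂ}, KK N z → N = M → KK M z := fun h e => e ▸ h
    have ho : ¬ Even (k+1+b+1) := fun h => (Nat.even_add_one.1 h) he
    have r1 := (par (KK_M (K k (b+1)) (D.W_sub k (b+1))) (show _ = k+1+b+1 by ring)).2 ho
    have r2 := (par (K (k+1) (b+1)) (show _ = k+1+b+1 by ring)).2 ho
    have cb := D.cb k (b+1)
    have vW := D.vW (k+1) (b+1)
    set M := (1 + WW f k (b+1)) / (1 - WW f k (b+1)) with hM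
    have hM' : M * (1 - WW f k (b+1)) = 1 + WW f k (b+1) := div_mul_cancel₀ _ (D.W_sub _ _)
    have hr : f (k+1) (b+1) - f k (b+1) = ((M.im * (WW f (k+1) (b+1)).im : ℝ) : ℂ) *
        (f (k+2) (b+1) - f (k+1) (b+1)) := by
      apply mul_left_cancel₀ (D.W_sub k (b+1))
      rw [im_of_re0 r1] at hM'
      rw [im_of_re0 r2] at vW
      push_cast
      have I2 := Complex.I_mul_I
      linear_combination -cb + (f (k+1) (b+1+1) - f (k+1) (b+1)) * hM' -
        I * M.im * (1 - WW f k (b+1)) * vW -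
        M.im * (WW f (k+1) (b+1)).im * (1 - WW f k (b+1)) * (f (k+2) (b+1) - f (k+1) (b+1)) * I2
    set r := M.im * (WW f (k+1) (b+1)).im
    have hd := D.hdn k (b+1)
    have hu := D.hu0 (k+1) (b+1)
    refine ⟨-(2 * (k+1) * r / (1 + r)), ?_⟩
    rw [D.hc k b]
    congr 1
    · have e : f (k+2) (b+1) - f k (b+1) = (1 + (r:ℂ)) * (f (k+2) (b+1) - f (k+1) (b+1)) := by
        linear_combination hr
      have h1 : 1 + (r:ℂ) ≠ 0 := by
        intro h; rw [e, h, zero_mul] at hd; exact hd rfl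
      rw [e, hr]
      push_cast
      rw [div_eq_iff (mul_ne_zero h1 hu)]
      field_simp
      ring

lemma P5_real {n m t2 t3 t4 : ℝ} (hm : 0 < m) (hnm : m ≤ n) (h2 : 0 < t2) (h3 : 0 < t3)
    (h : n * (1 - t3 * t4) * (t2 + t3) = m * (1 - t2 * t3) * (t3 + t4)) : 0 < t4 := by
  have e : t4 * (m + (n - m) * (t2 * t3) + n * t3 ^ 2) = n * t2 + (n - m) * t3 + m * (t2 * t3 ^ 2) := by
    linear_combination -h
  have hn : 0 < n := by linarith
  have p1 : 0 < m + (n - m) * (t2 * t3) + n * t3 ^ 2 := by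
    have := mul_nonneg (sub_nonneg.2 hnm) (mul_pos h2 h3).le
    positivity
  have p2 : 0 < n * t2 + (n - m) * t3 + m * (t2 * t3 ^ 2) := by
    have := mul_nonneg (sub_nonneg.2 hnm) h3.le
    positivity
  rw [← e] at p2
  exact (pos_iff_pos_of_mul_pos p2).2 p1

lemma P5_alg {γ n m R t2 t3 t4 : ℝ} {e1 e2 e3 e4 a b : ℂ} (h2 : 0 < t2) (h3 : 0 < t3)
    (he : e3 ≠ 0) (d1 : e1 - e3 ≠ 0)
    (r2 : e3 * (1 - I * t2) = (1 + I * t2) * e2) (r4 : e4 * (1 - I * t3) = (1 + I * t3) * e3)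
    (r1 : e1 * (1 - I * t4) = (1 + I * t4) * e4) (ra : a = -(I * t2) * e3) (rb : b = I * t3 * e3)
    (hh : - γ * e3 = 2 * n * (e1 * (-e3)) / (e1 - e3) + 2 * m * (e2 * (-e4)) / (e2 - e4)
      - R * e3 - 2 * m * (a * (-b)) / (a - b)) :
    n * (1 - t3 * t4) * (t2 + t3) = m * (1 - t2 * t3) * (t3 + t4) := by
  have I2 := Complex.I_mul_I
  have nz : ∀ t : ℝ, 1 + I * (t:ℂ) ≠ 0 := by
    intro t h; have := congrArg Complex.re h; simp at this
  have nz' : ∀ t : ℝ, 1 - I * (t:ℂ) ≠ 0 := by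
    intro t h; have := congrArg Complex.re h; simp at this
  have s23 : t2 + t3 ≠ 0 := by positivity
  have c23 : (t2:ℂ) + t3 ≠ 0 := by exact_mod_cast s23
  have E : (e1 - e3) * ((1 - I * t3) * (1 - I * t4)) = 2 * I * (t3 + t4) * e3 := by
    linear_combination (1 - I * t3) * r1 + (1 + I * t4) * r4
  have c34 : (t3:ℂ) + t4 ≠ 0 := by
    intro h
    rw [h, mul_zero, zero_mul] at E
    exact mul_ne_zero d1 (mul_ne_zero (nz' t3) (nz' t4)) E
  have s34 : t3 + t4 ≠ 0 := by exact_mod_cast c34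
  have T1 : e1 * (-e3) / (e1 - e3) = e3 * (I * ((1 + I * t3) * (1 + I * t4)) / (2 * (t3 + t4))) := by
    have E' : e1 * ((1 - I * t3) * (1 - I * t4)) = (1 + I * t3) * (1 + I * t4) * e3 := by
      linear_combination (1 - I * t3) * r1 + (1 + I * t4) * r4
    rw [div_eq_iff d1, mul_div_assoc', div_mul_eq_mul_div, eq_div_iff (mul_ne_zero two_ne_zero c34)]
    apply mul_left_cancel₀ (mul_ne_zero (nz' t3) (nz' t4))
    linear_combination (-e3) * (2 * (t3 + t4)) * E' - e3 * (I * ((1 + I * t3) * (1 + I * t4))) * E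
      - 2 * e3 * ((1 + I * t3) * (1 + I * t4)) * (t3 + t4) * e3 * I2
  have F : (e2 - e4) * ((1 + I * t2) * (1 - I * t3)) = - 2 * I * (t2 + t3) * e3 := by
    linear_combination -(1 - I * t3) * r2 - (1 + I * t2) * r4
  have d2 : e2 - e4 ≠ 0 := by
    intro h
    rw [h, zero_mul] at F
    exact mul_ne_zero (mul_ne_zero (mul_ne_zero (by norm_num) Complex.I_ne_zero) c23) he F.symm
  have T2 : e2 * (-e4) / (e2 - e4) = e3 * (-I * ((1 - I * t2) * (1 + I * t3)) / (2 * (t2 + t3))) := by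
    have F' : e2 * e4 * ((1 + I * t2) * (1 - I * t3)) = (1 - I * t2) * (1 + I * t3) * e3 * e3 := by
      linear_combination -e4 * (1 - I * t3) * r2 + e3 * (1 - I * t2) * r4
    rw [div_eq_iff d2, mul_div_assoc', div_mul_eq_mul_div, eq_div_iff (mul_ne_zero two_ne_zero c23)]
    apply mul_left_cancel₀ (mul_ne_zero (nz t2) (nz' t3))
    linear_combination (-1) * (2 * (t2 + t3)) * F' + e3 * (I * ((1 - I * t2) * (1 + I * t3))) * F
      - 2 * e3 * ((1 - I * t2) * (1 + I * t3)) * (t2 + t3) * e3 * I2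
  have T3 : a * (-b) / (a - b) = e3 * (-I * (t2 * t3) / (t2 + t3)) := by
    have : a - b = -I * (t2 + t3) * e3 := by rw [ra, rb]; ring
    have hI := Complex.I_ne_zero
    rw [this, div_eq_iff (mul_ne_zero (mul_ne_zero (neg_ne_zero.2 hI) c23) he), ra, rb,
      mul_div_assoc', div_mul_eq_mul_div, eq_div_iff c23]
    ring
  have G : -(γ:ℂ) = 2 * n * (I * ((1 + I * t3) * (1 + I * t4)) / (2 * (t3 + t4)))
      + 2 * m * (-I * ((1 - I * t2) * (1 + I * t3)) / (2 * (t2 + t3))) - R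
      - 2 * m * (-I * (t2 * t3) / (t2 + t3)) := by
    apply mul_left_cancel₀ he
    rw [mul_div_assoc (2 * (n:ℂ)), mul_div_assoc (2 * (m:ℂ)), mul_div_assoc (2 * (m:ℂ)), T1, T2, T3] at hh
    linear_combination hh
  have G1 : (R - γ : ℂ) * ((t3 + t4) * (t2 + t3)) = n * I * ((1 + I * t3) * (1 + I * t4)) * (t2 + t3)
     - m * I * ((1 - I * t2) * (1 + I * t3)) * (t3 + t4) + 2 * m * I * (t2 * t3) * (t3 + t4) := by
    have c34' := c34
    have : (R - γ : ℂ) = n * (I * ((1 + I * t3) * (1 + I * t4)) / (t3 + t4))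
      - m * (I * ((1 - I * t2) * (1 + I * t3)) / (t2 + t3)) + 2 * m * (I * (t2 * t3) / (t2 + t3)) := by
      have k : ∀ x y : ℂ, 2 * (x / (2 * y)) = x / y := by
        intro x y; rw [mul_div_assoc', mul_div_mul_left _ _ two_ne_zero]
      linear_combination G + n * k (I * ((1 + I * t3) * (1 + I * t4))) (t3 + t4) +
        m * k (-I * ((1 - I * t2) * (1 + I * t3))) (t2 + t3)
    rw [this]
    field_simp
  have H := congrArg Complex.im G1
  rw [show (R - γ : ℂ) * ((t3 + t4) * (t2 + t3)) = (((R - γ) * ((t3 + t4) * (t2 + t3)) : ℝ) : ℂ) by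
    push_cast; ring, Complex.ofReal_im] at H
  simp at H
  linear_combination -H

lemma P5 (D : DZ γ f) (K : ∀ n m, KK (n+m) (WW f n m)) (a b : ℕ) (he : Even (a+b)) (hab : b ≤ a)
    (p2 : 0 < (WW f a (b+1)).im) (p3 : 0 < (WW f a b).im) :
    0 < (WW f (a+1) b).im := by
  have par : ∀ {N M : ℕ} {z : ℂ}, KK N z → N = M → KK M z := fun h e => e ▸ h
  have ho : ¬ Even (a+b+1) := fun h => (Nat.even_add_one.1 h) he
  have w2 := im_of_re0 ((K a (b+1)).2 ho)
  have w4 := im_of_re0 ((par (K (a+1) b) (show _ = a+b+1 by ring)).2 ho)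
  have addc : WW f a b + 1 ≠ 0 := by rw [add_comm]; exact D.W_add _ _
  have hM := (im_M'_pos addc).2 p3
  have w3 := im_of_re0 ((KK_M' (K a b) addc).2 ho)
  set t2 := (WW f a (b+1)).im
  set s3 := ((WW f a b - 1) / (WW f a b + 1)).im
  set s4 := (WW f (a+1) b).im
  rw [div_eq_iff addc] at w3
  have hs4 : s4 ≠ 0 := by
    intro h; have := D.W_ne (a+1) b; rw [w4, h] at this; simp at this
  have cs3 : (s3:ℂ) ≠ 0 := by exact_mod_cast hM.ne'
  have cs4 : (s4:ℂ) ≠ 0 := by exact_mod_cast hs4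
  obtain ⟨R, hR⟩ := p_term D K a b he
  have hC := D.hc a b
  have I2 := Complex.I_mul_I
  have main := P5_alg (γ := γ) (n := a+1) (m := b+1) (R := R) (t2 := t2) (t3 := s3⁻¹) (t4 := s4⁻¹)
    (e1 := f (a+2) (b+1) - f (a+1) (b+1)) (e2 := f (a+1) (b+2) - f (a+1) (b+1))
    (e3 := f a (b+1) - f (a+1) (b+1)) (e4 := f (a+1) b - f (a+1) (b+1))
    (a := f a (b+2) - f a (b+1)) (b := f a b - f a (b+1)) p2 (inv_pos.2 hM)
    (by rw [← neg_sub]; exact neg_ne_zero.2 (D.hu0 a (b+1)))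
    (by have := D.hdn a (b+1); intro h; apply this; linear_combination h)
    (by have := D.cb a (b+1); rw [w2] at this; linear_combination this)
    (by
      have h := D.ccr a b
      push_cast
      apply mul_left_cancel₀ cs3
      have e : ∀ x : ℂ, s3 * (x * (1 - I * (s3:ℂ)⁻¹)) = x * (s3 - I) := by intro x; field_simp
      have e' : ∀ x : ℂ, s3 * ((1 + I * (s3:ℂ)⁻¹) * x) = x * (s3 + I) := by intro x; field_simp
      rw [e, e']
      apply mul_left_cancel₀ (D.W_ne a b)
      linear_combination (s3 - I) * h - (f a (b+1) - f (a+1) (b+1)) * I * w3 -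
        (f a (b+1) - f (a+1) (b+1)) * s3 * (WW f a b + 1) * I2)
    (by
      have h := D.cd (a+1) b
      rw [w4] at h
      push_cast
      apply mul_left_cancel₀ cs4
      have e : ∀ x : ℂ, s4 * (x * (1 - I * (s4:ℂ)⁻¹)) = x * (s4 - I) := by intro x; field_simp
      have e' : ∀ x : ℂ, s4 * ((1 + I * (s4:ℂ)⁻¹) * x) = x * (s4 + I) := by intro x; field_simp
      rw [e, e']
      linear_combination -I * h + s4 * (f (a+2) (b+1) - f (a+1) b) * I2)
    (by have := D.vW a (b+1); rw [w2] at this; linear_combination this)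
    (by
      have h := D.cd a b
      rw [w3] at h
      push_cast
      apply mul_left_cancel₀ cs3
      rw [show (s3:ℂ) * (I * (s3:ℂ)⁻¹ * (f a (b+1) - f (a+1) (b+1))) = I * (f a (b+1) - f (a+1) (b+1)) by
        field_simp]
      apply mul_left_cancel₀ addc
      linear_combination I * h + s3 * (WW f a b + 1) * (f a b - f a (b+1)) * I2)
    (by
      rw [show (f (a+2) (b+1) - f (a+1) (b+1)) - (f a (b+1) - f (a+1) (b+1)) = f (a+2) (b+1) - f a (b+1) by ring,
        show (f (a+1) (b+2) - f (a+1) (b+1)) - (f (a+1) b - f (a+1) (b+1)) = f (a+1) (b+2) - f (a+1) b by ring,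
        show (f a (b+2) - f a (b+1)) - (f a b - f a (b+1)) = f a (b+2) - f a b by ring]
      simp only [neg_sub]
      push_cast
      linear_combination hC - hR)
  have := P5_real (by positivity) (by exact_mod_cast Nat.succ_le_succ hab) p2 (inv_pos.2 hM) main
  exact inv_pos.1 this

lemma half (D : DZ γ f) (K : ∀ n m, KK (n+m) (WW f n m)) (h0 : ∀ b, 0 < (WW f b b).im)
    (h1 : ∀ b, 0 < (WW f b (b+1)).im) (d : ℕ) :
    (∀ b, 0 < (WW f (b+d) b).im) ∧ (∀ b, 0 < (WW f (b+d) (b+1)).im) := by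
  induction d with
  | zero => exact ⟨h0, h1⟩
  | succ d ih =>
    obtain ⟨i1, i2⟩ := ih
    constructor
    · intro b
      by_cases he : Even (b+d+b)
      · exact P5 D K (b+d) b he (by omega) (i2 b) (i1 b)
      · refine P6 D K (b+d) b he ?_ (i2 b) (i1 b)
        have := i1 (b+1)
        rwa [show b+1+d = b+d+1 by ring] at this
    · intro b
      have := i1 (b+1)
      rwa [show b+1+d = b+(d+1) by ring] at this

lemma WW_swap (n m : ℕ) : WW (fun n m => cj (f m n)) n m = (cj (WW f m n))⁻¹ := by
  simp [WW, inv_div]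

lemma pos_all (hγ0 : 0 < γ) (hγ2 : γ < 2) (D : DZ γ f) (h10 : f 1 0 = 1)
    (h01 : f 0 1 = exp (I * (γ * Real.pi) / 2)) (n m : ℕ) : 0 < (WW f n m).im := by
  have hW0 : Complex.normSq (WW f 0 0) = 1 := by
    have : WW f 0 0 = exp ((γ * Real.pi / 2 : ℝ) * I) := by
      simp only [WW, zero_add]
      rw [D.h00, h10, h01]
      push_cast
      rw [sub_zero, sub_zero, div_one]
      congr 1
      ring
    rw [Complex.normSq_eq_norm_sq, this, Complex.norm_exp_ofReal_mul_I]; norm_num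
  have k0 : KK 0 (WW f 0 0) := by
    refine ⟨fun _ => ?_, fun h => absurd Even.zero h⟩
    rw [Complex.normSq_apply] at hW0; linarith
  have K := D.kites hγ0 hγ2 k0
  have b0 := base_diag hγ0 hγ2 D h10 h01
  have H := half D K b0 (base_off hγ0 hγ2 D h10 h01)
  have D' := D.swap
  have imsw : ∀ n m, 0 < (WW (fun n m => cj (f m n)) n m).im ↔ 0 < (WW f m n).im := by
    intro n m
    rw [WW_swap, Complex.inv_im, div_pos_iff_of_pos_right]
    · simp
    · rw [Complex.normSq_conj]; exact Complex.normSq_pos.2 (D.W_ne m n)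
  have k0' : KK 0 (WW (fun n m => cj (f m n)) 0 0) := by
    refine ⟨fun _ => ?_, fun h => absurd Even.zero h⟩
    have : Complex.normSq (WW (fun n m => cj (f m n)) 0 0) = 1 := by
      rw [WW_swap, Complex.normSq_inv, Complex.normSq_conj, hW0, inv_one]
    rw [Complex.normSq_apply] at this; linarith
  have K' := D'.kites hγ0 hγ2 k0'
  have H' := half D' K' (fun b => (imsw b b).2 (b0 b)) (fun b => (imsw b (b+1)).2 ((H 1).1 b))
  rcases le_total m n with h | h
  · have := (H (n-m)).1 m
    rwa [Nat.add_sub_cancel' h] at this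
  · have := (imsw _ _).1 ((H' (m-n)).1 n)
    rwa [Nat.add_sub_cancel' h] at this

end PartJ

section PartK

variable {γ : ℝ} {f : ℕ → ℕ → ℂ}

lemma sep_disjoint {S T : Set ℂ} {a e : ℂ} (he : e ≠ 0) (hS : ∀ v ∈ S, 0 ≤ ((v - a) / e).im)
    (hT : ∀ v ∈ T, ((v - a) / e).im ≤ 0) :
    Disjoint (interior (convexHull ℝ S)) (interior (convexHull ℝ T)) := by
  have hlin : IsLinearMap ℝ (fun v : ℂ => (v / e).im) := by
    constructor
    · intro x y; simp [add_div]
    · intro c x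
      rw [Complex.real_smul, mul_div_assoc, Complex.im_ofReal_mul, smul_eq_mul]
  have hS' : convexHull ℝ S ⊆ {v | (a / e).im ≤ (v / e).im} := by
    apply convexHull_min _ (convex_halfSpace_ge hlin _)
    intro v hv
    have := hS v hv
    rw [sub_div, Complex.sub_im] at this
    show (a / e).im ≤ (v / e).im
    linarith
  have hT' : convexHull ℝ T ⊆ {v | (v / e).im ≤ (a / e).im} := by
    apply convexHull_min _ (convex_halfSpace_le hlin _)
    intro v hv
    have := hT v hv
    rw [sub_div, Complex.sub_im] at this
    show (v / e).im ≤ (a / e).im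
    linarith
  rw [Set.disjoint_left]
  intro x hx1 hx2
  have g1 : (a / e).im ≤ (x / e).im := hS' (interior_subset hx1)
  have ho : IsOpen (interior (convexHull ℝ T)) := isOpen_interior
  have hcont : Continuous (fun t : ℝ => x + t * (I * e)) := by fun_prop
  have hnh : ∀ᶠ t : ℝ in nhds (0:ℝ), x + (t : ℂ) * (I * e) ∈ interior (convexHull ℝ T) := by
    apply hcont.continuousAt.eventually
    apply ho.mem_nhds
    simpa using hx2
  obtain ⟨ε, hε, hb⟩ := Metric.eventually_nhds_iff.1 hnh
  have h3 := hb (y := ε / 2) (by rw [Real.dist_eq, sub_zero, abs_of_pos (by linarith)]; linarith)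
  have h4 : ((x + (ε / 2 : ℝ) * (I * e)) / e).im ≤ (a / e).im := hT' (interior_subset h3)
  have h5 : (x + (ε / 2 : ℝ) * (I * e)) / e = x / e + (ε / 2 : ℝ) * I := by
    field_simp
  rw [h5, Complex.add_im, Complex.im_ofReal_mul, Complex.I_im] at h4
  linarith

lemma im_two_div {w : ℂ} (h : 0 < w.im) : (2 / (1 + w)).im ≤ 0 := by
  have h1 : 1 + w ≠ 0 := by intro h'; have := congrArg Complex.im h'; simp at this; linarith
  have hn : 0 < Complex.normSq (1 + w) := Complex.normSq_pos.2 h1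
  rw [Complex.div_im, ← sub_div]
  apply div_nonpos_of_nonpos_of_nonneg _ hn.le
  simp; linarith

lemma im_inv_np {w : ℂ} (h : 0 < w.im) : (w⁻¹).im ≤ 0 := by
  rw [Complex.inv_im]
  apply div_nonpos_of_nonpos_of_nonneg _ (Complex.normSq_nonneg _)
  linarith

lemma DZ.immersion (D : DZ γ f) (P : ∀ n m, 0 < (WW f n m).im) : IsImmersion f := by
  intro n m
  constructor
  · have he := D.hv0 (n+1) m
    refine sep_disjoint (a := f (n+1) m) (e := f (n+1) (m+1) - f (n+1) m) he ?_ ?_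
    · intro v hv
      simp only [quadVerts, Set.mem_insert_iff, Set.mem_singleton_iff] at hv
      rcases hv with rfl | rfl | rfl | rfl
      · have : (f n m - f (n+1) m) / (f (n+1) (m+1) - f (n+1) m) = (1 + WW f n m) / (1 - WW f n m) := by
          rw [div_eq_div_iff he (D.W_sub n m)]
          linear_combination D.cb n m
        rw [this]; exact ((im_M_pos (D.W_sub n m)).2 (P n m)).le
      · simp
      · rw [div_self he]; simp
      · have : (f n (m+1) - f (n+1) m) / (f (n+1) (m+1) - f (n+1) m) = 1 + WW f n m := by
          rw [div_eq_iff he]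
          linear_combination D.ccr n m
        rw [this]; simpa using (P n m).le
    · intro v hv
      simp only [quadVerts, Set.mem_insert_iff, Set.mem_singleton_iff] at hv
      have hw := D.W_ne (n+1) m
      rcases hv with rfl | rfl | rfl | rfl
      · simp
      · have : (f (n+1+1) m - f (n+1) m) / (f (n+1) (m+1) - f (n+1) m) = (WW f (n+1) m)⁻¹ := by
          rw [WW, inv_div]
        rw [this]; exact im_inv_np (P _ _)
      · have : (f (n+1+1) (m+1) - f (n+1) m) / (f (n+1) (m+1) - f (n+1) m) = 2 / (1 + WW f (n+1) m) := by
          rw [div_eq_div_iff he (D.W_add _ _)]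
          have h1 := D.hx (n+1) m
          apply mul_right_cancel₀ (D.hu0 (n+1) m)
          linear_combination h1 - (f (n+1+1) (m+1) - f (n+1) m) * D.vW (n+1) m
        rw [this]; exact im_two_div (P _ _)
      · rw [div_self he]; simp
  · have he := D.hu0 n (m+1)
    refine (sep_disjoint (a := f n (m+1)) (e := f (n+1) (m+1) - f n (m+1)) he ?_ ?_).symm
    · intro v hv
      simp only [quadVerts, Set.mem_insert_iff, Set.mem_singleton_iff] at hv
      rcases hv with rfl | rfl | rfl | rfl
      · simp
      · rw [div_self he]; simp
      · have : (f (n+1) (m+1+1) - f n (m+1)) / (f (n+1) (m+1) - f n (m+1)) =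
            2 - 2 / (1 + WW f n (m+1)) := by
          have ha := D.W_add n (m+1)
          rw [eq_sub_iff_add_eq, div_add_div _ _ he ha, div_eq_iff (mul_ne_zero he ha)]
          have h1 := D.hx n (m+1)
          apply mul_right_cancel₀ he
          linear_combination h1 + (2 * (f (n+1) (m+1) - f n (m+1)) -
            (f (n+1) (m+1+1) - f n (m+1))) * D.vW n (m+1)
        rw [this, Complex.sub_im]
        have := im_two_div (P n (m+1))
        simp only [Complex.im_ofNat]
        linarith
      · have : (f n (m+1+1) - f n (m+1)) / (f (n+1) (m+1) - f n (m+1)) = WW f n (m+1) := rfl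
        rw [this]; exact (P _ _).le
    · intro v hv
      simp only [quadVerts, Set.mem_insert_iff, Set.mem_singleton_iff] at hv
      have hw := D.W_ne n m
      rcases hv with rfl | rfl | rfl | rfl
      · have : (f n m - f n (m+1)) / (f (n+1) (m+1) - f n (m+1)) =
            -((1 + WW f n m) / (1 - WW f n m)) := by
          rw [← neg_div, div_eq_div_iff he (D.W_sub _ _)]
          linear_combination D.cd n m
        rw [this, Complex.neg_im]
        linarith [(im_M_pos (D.W_sub n m)).2 (P n m)]
      · have : (f (n+1) m - f n (m+1)) / (f (n+1) (m+1) - f n (m+1)) = 1 + (WW f n m)⁻¹ := by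
          rw [div_eq_iff he]
          apply mul_left_cancel₀ hw
          have : WW f n m * ((1 + (WW f n m)⁻¹) * (f (n+1) (m+1) - f n (m+1))) =
            (WW f n m + 1) * (f (n+1) (m+1) - f n (m+1)) := by field_simp
          rw [this]
          linear_combination D.ccr n m
        rw [this, Complex.add_im]
        have := im_inv_np (P n m)
        simpa using this
      · rw [div_self he]; simp
      · simp

theorem mainT (γ : ℝ) (hγ0 : 0 < γ) (hγ2 : γ < 2)
    (f : ℕ → ℕ → ℂ)
    (hq : CrossRatioEq f) (hqd : QDenomNonzero f)
    (hc : ConstraintC (γ : ℂ) f) (hcd : CDenomNonzero f)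
    (h00 : f 0 0 = 0) (h10 : f 1 0 = 1)
    (h01 : f 0 1 = Complex.exp (Complex.I * (↑γ * ↑Real.pi) / 2)) :
    IsImmersion f :=
  have D := DZ.mk' hq hqd hc hcd h00 h10
  D.immersion (pos_all hγ0 hγ2 D h10 h01)

end PartK

/-- The discrete `Z^γ` (`0 < γ < 2`) is an immersion. -/
theorem discrete_Z_gamma_is_immersion (γ : ℝ) (hγ0 : 0 < γ) (hγ2 : γ < 2)
    (f : ℕ → ℕ → ℂ)
    (hq : CrossRatioEq f) (hqd : QDenomNonzero f)
    (hc : ConstraintC (γ : ℂ) f) (hcd : CDenomNonzero f)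
    (h00 : f 0 0 = 0) (h10 : f 1 0 = 1)
    (h01 : f 0 1 = Complex.exp (Complex.I * (↑γ * ↑Real.pi) / 2)) :
    IsImmersion f := by
  exact mainT γ hγ0 hγ2 f hq hqd hc hcd h00 h10 h01

end
end

section
/- Let β, γ, δ, φ, ψ ∈ ℂ and let f : ℤ × ℤ → ℂ satisfy the cross-ratio equation (q) at every (n,m) (all denominators occurring being nonzero). If the generalized constraint (gc) holds at the three vertices (n,m), (n+1,m), (n,m+1) of an elementary quadrilateral, then (gc) also holds at the fourth vertex (n+1,m+1). Consequently the constraint (gc) is compatible with (q): a solution of (q) on ℤ≥0 × ℤ≥0 satisfying (gc) on the two coordinate axes satisfies (gc) everywhere. -/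
open Complex

noncomputable section

/-- The cross-ratio equation (q) at `(n,m)` for `f : ℤ × ℤ → ℂ`. -/
def CrossRatioEqZ (f : ℤ → ℤ → ℂ) : Prop :=
  ∀ n m : ℤ,
    (f n m - f (n+1) m) * (f (n+1) (m+1) - f n (m+1)) =
      -((f (n+1) m - f (n+1) (m+1)) * (f n (m+1) - f n m))

/-- Nonvanishing of the denominators occurring in (q). -/
def QDenomNonzeroZ (f : ℤ → ℤ → ℂ) : Prop :=
  ∀ n m : ℤ, f (n+1) m - f (n+1) (m+1) ≠ 0 ∧ f n (m+1) - f n m ≠ 0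

/-- Nonvanishing of the denominators occurring in (gc). -/
def GcDenomNonzero (f : ℤ → ℤ → ℂ) : Prop :=
  ∀ n m : ℤ, f (n+1) m - f (n-1) m ≠ 0 ∧ f n (m+1) - f n (m-1) ≠ 0

/-- The generalized constraint (gc) with parameters `β γ δ φ ψ` at `(n,m)`. -/
def GcEq (β γ δ φ ψ : ℂ) (f : ℤ → ℤ → ℂ) (n m : ℤ) : Prop :=
  β * f n m ^ 2 + γ * f n m + δ =
    2 * ((n : ℂ) - φ) * ((f (n+1) m - f n m) * (f n m - f (n-1) m)) /
        (f (n+1) m - f (n-1) m) +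
    2 * ((m : ℂ) - ψ) * ((f n (m+1) - f n m) * (f n m - f n (m-1))) /
        (f n (m+1) - f n (m-1))

lemma key0 (a c d e g : ℂ) (h1 : c * (a + d) = 2 * a * d) (h2 : g * (e + d) = 2 * e * d)
    (ha : a ≠ 0) (hc : c ≠ 0) (hd : d ≠ 0) (he : e ≠ 0) (had : a - d ≠ 0)
    (hdc : d - c ≠ 0) (hea : e - a ≠ 0) (hgc : g - c ≠ 0) :
    e * (-a) / (e - a) * (1 / ((-a) * (-c) * (-d))) +
      (g - d) * (d - c) / (g - c) * (1 / ((d - a) * d * (d - c))) = 1 / ((a - d) * (-c)) := by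
  have s1 : a + d ≠ 0 := by
    intro h; rw [h] at h1; simp [ha, hd] at h1
  have s2 : e + d ≠ 0 := by
    intro h; rw [h] at h2; simp [he, hd] at h2
  have hda : d - a ≠ 0 := by
    intro h; apply had; linear_combination -h
  have hG : (g - c) * ((a + d) * (e + d)) = 2 * d ^ 2 * (e - a) := by
    linear_combination (a + d) * h2 - (e + d) * h1
  have hg : g = 2 * e * d / (e + d) := by field_simp; linear_combination h2
  have hc' : c = 2 * a * d / (a + d) := by field_simp; linear_combination h1
  have hG' : g - c = 2 * d ^ 2 * (e - a) / ((a + d) * (e + d)) := by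
    field_simp; linear_combination hG
  have hD : d - c = d * (d - a) / (a + d) := by rw [hc']; field_simp; ring
  have hE : g - d = d * (e - d) / (e + d) := by rw [hg]; field_simp; ring
  have hA : a - d = -(d - a) := by ring
  rw [hG', hD, hE, hA, hc']
  field_simp
  ring

lemma key (a b c d e g : ℂ) (h1 : (a - b) * (d - c) = -((b - d) * (c - a)))
    (h2 : (b - e) * (g - d) = -((e - g) * (d - b)))
    (hab : a ≠ b) (hcb : c ≠ b) (hdb : d ≠ b) (heb : e ≠ b) (had : a ≠ d) (hdc : d ≠ c)
    (hea : e - a ≠ 0) (hgc : g - c ≠ 0) :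
    (e - b) * (b - a) / (e - a) * (1 / ((b - a) * (b - c) * (b - d))) +
      (g - d) * (d - c) / (g - c) * (1 / ((d - a) * (d - b) * (d - c)))
      = 1 / ((a - d) * (b - c)) := by
  have := key0 (a - b) (c - b) (d - b) (e - b) (g - b)
    (by linear_combination -h1) (by linear_combination -h2)
    (sub_ne_zero.2 hab) (sub_ne_zero.2 hcb) (sub_ne_zero.2 hdb) (sub_ne_zero.2 heb)
    (by simpa [sub_eq_zero] using had) (by simpa [sub_eq_zero] using hdc)
    (by simpa using hea) (by simpa using hgc)
  simpa using this

lemma vander (β γ δ a b c d : ℂ) (hab : a ≠ b) (hac : a ≠ c) (had : a ≠ d) (hbc : b ≠ c)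
    (hbd : b ≠ d) (hcd : c ≠ d) :
    (β * a ^ 2 + γ * a + δ) * (1 / ((a - b) * (a - c) * (a - d))) +
    (β * b ^ 2 + γ * b + δ) * (1 / ((b - a) * (b - c) * (b - d))) +
    (β * c ^ 2 + γ * c + δ) * (1 / ((c - a) * (c - b) * (c - d))) +
    (β * d ^ 2 + γ * d + δ) * (1 / ((d - a) * (d - b) * (d - c))) = 0 := by
  have e1 : b - a = -(a - b) := by ring
  have e2 : c - a = -(a - c) := by ring
  have e3 : d - a = -(a - d) := by ring
  have e4 : c - b = -(b - c) := by ring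
  have e5 : d - b = -(b - d) := by ring
  have e6 : d - c = -(c - d) := by ring
  have := sub_ne_zero.2 hab
  have := sub_ne_zero.2 hac
  have := sub_ne_zero.2 had
  have := sub_ne_zero.2 hbc
  have := sub_ne_zero.2 hbd
  have := sub_ne_zero.2 hcd
  rw [e1, e2, e3, e4, e5, e6]
  field_simp
  ring

lemma dist (a b c d : ℂ) (h1 : (a - b) * (d - c) = -((b - d) * (c - a)))
    (h2 : b - d ≠ 0) (h3 : c - a ≠ 0) :
    a ≠ b ∧ a ≠ c ∧ a ≠ d ∧ b ≠ c ∧ b ≠ d ∧ c ≠ d := by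
  have hp : (a - b) * (d - c) ≠ 0 := by rw [h1]; exact neg_ne_zero.2 (mul_ne_zero h2 h3)
  have hab : a - b ≠ 0 := left_ne_zero_of_mul hp
  have hdc : d - c ≠ 0 := right_ne_zero_of_mul hp
  refine ⟨sub_ne_zero.1 hab, (sub_ne_zero.1 h3).symm, ?_, ?_, sub_ne_zero.1 h2,
    (sub_ne_zero.1 hdc).symm⟩
  · rintro rfl
    have : 2 * ((a - b) * (a - c)) = 0 := by linear_combination h1
    simp [hab, hdc] at this
  · rintro rfl
    have : 2 * ((a - b) * (d - b)) = 0 := by linear_combination h1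
    simp [hab, hdc] at this

lemma step (β γ δ N M a b c d aw as' be bs cw cn de dn : ℂ)
    (q0 : (a - b) * (d - c) = -((b - d) * (c - a)))
    (qe : (b - be) * (de - d) = -((be - de) * (d - b)))
    (qw : (aw - a) * (c - cw) = -((a - c) * (cw - aw)))
    (qn : (c - d) * (dn - cn) = -((d - dn) * (cn - c)))
    (qs : (as' - bs) * (b - a) = -((bs - b) * (a - as')))
    (D0 : a ≠ b ∧ a ≠ c ∧ a ≠ d ∧ b ≠ c ∧ b ≠ d ∧ c ≠ d)
    (ne : be ≠ b) (nw : aw ≠ a) (nn : cn ≠ c) (ns : as' ≠ a)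
    (x1 : be - a ≠ 0) (x2 : de - c ≠ 0) (x3 : b - aw ≠ 0) (x4 : d - cw ≠ 0)
    (y1 : cn - a ≠ 0) (y2 : dn - b ≠ 0) (y3 : c - as' ≠ 0) (y4 : d - bs ≠ 0)
    (ga : β * a ^ 2 + γ * a + δ = 2 * N * ((b - a) * (a - aw)) / (b - aw) +
      2 * M * ((c - a) * (a - as')) / (c - as'))
    (gb : β * b ^ 2 + γ * b + δ = 2 * (N + 1) * ((be - b) * (b - a)) / (be - a) +
      2 * M * ((d - b) * (b - bs)) / (d - bs))
    (gc : β * c ^ 2 + γ * c + δ = 2 * N * ((d - c) * (c - cw)) / (d - cw) +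
      2 * (M + 1) * ((cn - c) * (c - a)) / (cn - a)) :
    β * d ^ 2 + γ * d + δ = 2 * (N + 1) * ((de - d) * (d - c)) / (de - c) +
      2 * (M + 1) * ((dn - d) * (d - b)) / (dn - b) := by
  obtain ⟨ab, ac, ad, bc, bd, cd⟩ := D0
  have V := vander β γ δ a b c d ab ac ad bc bd cd
  have K1 := key a b c d be de q0 qe ab bc.symm bd.symm ne ad cd.symm x1 x2
  have K2 := key a c b d cn dn (by linear_combination q0) (by linear_combination qn) ac bc
    cd.symm nn ad bd.symm y1 y2
  have K3 := key b a d c aw cw (by linear_combination q0) (by linear_combination qw)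
    ab.symm ad.symm ac.symm nw bc cd
    (by intro h; apply x3; linear_combination -h) (by intro h; apply x4; linear_combination -h)
  have K4 := key c a d b as' bs (by linear_combination q0) (by linear_combination qs)
    ac.symm ad.symm ab.symm ns bc.symm bd
    (by intro h; apply y3; linear_combination -h) (by intro h; apply y4; linear_combination -h)
  have hw : (1 / ((d - a) * (d - b) * (d - c)) : ℂ) ≠ 0 :=
    one_div_ne_zero (mul_ne_zero (mul_ne_zero (sub_ne_zero.2 ad.symm) (sub_ne_zero.2 bd.symm))
      (sub_ne_zero.2 cd.symm))
  rw [ga, gb, gc] at V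
  have r1 : aw - b = -(b - aw) := by ring
  have r2 : cw - d = -(d - cw) := by ring
  have r3 : as' - c = -(c - as') := by ring
  have r4 : bs - d = -(d - bs) := by ring
  have r5 : (1 / ((a - d) * (c - b)) : ℂ) = - (1 / ((a - d) * (b - c))) := by
    rw [← neg_sub b c, mul_neg, one_div_neg_eq_neg_one_div]
  have r6 : (1 / ((b - c) * (a - d)) : ℂ) = (1 / ((a - d) * (b - c))) := by rw [mul_comm]
  have r7 : (1 / ((c - b) * (a - d)) : ℂ) = - (1 / ((a - d) * (b - c))) := by
    rw [mul_comm, r5]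
  have p1 : (d - a) * (d - c) * (d - b) = (d - a) * (d - b) * (d - c) := by ring
  have p2 : (c - b) * (c - a) * (c - d) = (c - a) * (c - b) * (c - d) := by ring
  have p3 : (a - c) * (a - d) * (a - b) = (a - b) * (a - c) * (a - d) := by ring
  have p4 : (b - c) * (b - a) * (b - d) = (b - a) * (b - c) * (b - d) := by ring
  have p5 : (c - a) * (c - d) * (c - b) = (c - a) * (c - b) * (c - d) := by ring
  have p6 : (a - b) * (a - d) * (a - c) = (a - b) * (a - c) * (a - d) := by ring
  have p7 : (c - b) * (c - d) * (c - a) = (c - a) * (c - b) * (c - d) := by ring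
  have p8 : (b - c) * (b - d) * (b - a) = (b - a) * (b - c) * (b - d) := by ring
  have p9 : (b - a) * (b - d) * (b - c) = (b - a) * (b - c) * (b - d) := by ring
  rw [r5] at K2
  rw [r6, r1, r2] at K3
  rw [r7, r3, r4] at K4
  simp only [p1, p2, p3, p4, p5, p6, p7, p8, p9] at K1 K2 K3 K4
  generalize 1 / ((a - b) * (a - c) * (a - d)) = wa at *
  generalize 1 / ((b - a) * (b - c) * (b - d)) = wb at *
  generalize 1 / ((c - a) * (c - b) * (c - d)) = wc at *
  generalize 1 / ((d - a) * (d - b) * (d - c)) = wd at *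
  generalize 1 / ((a - d) * (b - c)) = k at *
  simp only [div_eq_mul_inv, inv_neg] at *
  apply mul_right_cancel₀ hw
  linear_combination V - 2 * (N + 1) * K1 - 2 * (M + 1) * K2 + 2 * N * K3 + 2 * M * K4

lemma gcstep (β γ δ φ ψ : ℂ) (f : ℤ → ℤ → ℂ)
    (hq : CrossRatioEqZ f) (hqd : QDenomNonzeroZ f) (hgcd : GcDenomNonzero f) (n m : ℤ)
    (ga : GcEq β γ δ φ ψ f n m) (gb : GcEq β γ δ φ ψ f (n+1) m)
    (gc : GcEq β γ δ φ ψ f n (m+1)) : GcEq β γ δ φ ψ f (n+1) (m+1) := by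
  have D := fun n m => dist _ _ _ _ (hq n m) (hqd n m).1 (hqd n m).2
  have qw := hq (n-1) m
  have qs := hq n (m-1)
  have Dw := D (n-1) m
  have Ds := D n (m-1)
  have X1 := (hgcd (n+1) m).1
  have X2 := (hgcd (n+1) (m+1)).1
  have X3 := (hgcd n m).1
  have X4 := (hgcd n (m+1)).1
  have Y1 := (hgcd n (m+1)).2
  have Y2 := (hgcd (n+1) (m+1)).2
  have Y3 := (hgcd n m).2
  have Y4 := (hgcd (n+1) m).2
  unfold GcEq at *
  simp only [sub_add_cancel, add_sub_cancel_right] at *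
  push_cast at *
  have e1 : (n : ℂ) + 1 - φ = (n - φ) + 1 := by ring
  have e2 : (m : ℂ) + 1 - ψ = (m - ψ) + 1 := by ring
  rw [e1] at gb ⊢
  rw [e2] at gc ⊢
  exact step β γ δ (n - φ) (m - ψ) _ _ _ _ _ _ _ _ _ _ _ _ (hq n m) (hq (n+1) m) qw
    (hq n (m+1)) qs (D n m) (D (n+1) m).1.symm Dw.1 (D n (m+1)).2.1.symm Ds.2.1
    X1 X2 X3 X4 Y1 Y2 Y3 Y4 ga gb gc

/-- The constraint (gc) propagates from three vertices of an elementary quadrilateral to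
the fourth one; consequently (gc) is compatible with (q): a solution of (q) satisfying
(gc) on both coordinate axes satisfies (gc) on the whole quadrant. -/
theorem gc_compatible_with_q (β γ δ φ ψ : ℂ) (f : ℤ → ℤ → ℂ)
    (hq : CrossRatioEqZ f) (hqd : QDenomNonzeroZ f) (hgcd : GcDenomNonzero f) :
    (∀ n m : ℤ, GcEq β γ δ φ ψ f n m → GcEq β γ δ φ ψ f (n+1) m →
      GcEq β γ δ φ ψ f n (m+1) → GcEq β γ δ φ ψ f (n+1) (m+1)) ∧
    ((∀ n : ℤ, 0 ≤ n → GcEq β γ δ φ ψ f n 0) →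
     (∀ m : ℤ, 0 ≤ m → GcEq β γ δ φ ψ f 0 m) →
     ∀ n m : ℤ, 0 ≤ n → 0 ≤ m → GcEq β γ δ φ ψ f n m) := by
  have S := gcstep β γ δ φ ψ f hq hqd hgcd
  refine ⟨S, ?_⟩
  intro h0 h1 n m hn hm
  induction n, hn using Int.le_induction generalizing m with
  | base => exact h1 m hm
  | succ n hn ih =>
    induction m, hm using Int.le_induction with
    | base => exact h0 (n+1) (by lia)
    | succ m hm ih2 => exact S n m (ih m hm) ih2 (ih (m+1) (by lia))

end
end

section
/- Let γ ∈ ℂ and α ∈ ℝ, and let f : ℤ≥0 × ℤ≥0 → ℂ satisfy the cross-ratio equation (q) and the constraint (c) with parameter γ at every (n,m) (all denominators occurring being nonzero), with initial data f_{0,0} = 0, f_{1,0} = 1, f_{0,1} = e^{iα}. Then f has the equidistant property on the axes: f_{2n,0} − f_{2n−1,0} = f_{2n+1,0} − f_{2n,0} and f_{0,2m} − f_{0,2m−1} = f_{0,2m+1} − f_{0,2m} for all n ≥ 1 and m ≥ 1. -/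
open Complex

noncomputable section

theorem axis_aux (γ : ℂ) (a : ℕ → ℂ) (h0 : a 0 = 0) (hd : ∀ n, a (n+1) - a n ≠ 0)
    (hs : ∀ n, a (n+2) - a n ≠ 0)
    (h : ∀ n : ℕ, γ * a (n+1) =
      2 * ((n+1 : ℕ) : ℂ) * ((a (n+2) - a (n+1)) * (a (n+1) - a n)) / (a (n+2) - a n)) :
    ∀ n : ℕ, 1 ≤ n → a (2*n) - a (2*n - 1) = a (2*n + 1) - a (2*n) := by
  have h' : ∀ n : ℕ, γ * a (n+1) * (a (n+2) - a n) =
      2 * ((n : ℂ)+1) * ((a (n+2) - a (n+1)) * (a (n+1) - a n)) := by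
    intro n
    rw [h n, div_mul_cancel₀ _ (hs n)]
    push_cast
    ring
  have eqd : ∀ n : ℕ, γ * a (2*n+2) = (2*(n:ℂ)+2) * (a (2*n+2) - a (2*n+1)) →
      a (2*n+2) - a (2*n+1) = a (2*n+3) - a (2*n+2) := by
    intro n hP
    have e := h' (2*n+1)
    rw [show 2*n+1+1 = 2*n+2 from rfl, show 2*n+1+2 = 2*n+3 from rfl, hP] at e
    push_cast at e
    have h1 : a (2*n+2) - a (2*n+1) ≠ 0 := hd (2*n+1)
    have h2 : (2*(n:ℂ)+2) ≠ 0 := by exact_mod_cast (by omega : 2*n+2 ≠ 0)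
    apply mul_left_cancel₀ (mul_ne_zero h2 h1)
    linear_combination e
  have P : ∀ n : ℕ, γ * a (2*n+2) = (2*(n:ℂ)+2) * (a (2*n+2) - a (2*n+1)) := by
    intro n
    induction n with
    | zero =>
      have e := h' 0
      have h1 := hd 0
      simp only [zero_add, h0, sub_zero, Nat.cast_zero, mul_zero] at e h1 ⊢
      apply mul_left_cancel₀ h1
      linear_combination e
    | succ n ih =>
      have q := eqd n ih
      have e := h' (2*n+2)
      have h1 : a (2*n+3) - a (2*n+2) ≠ 0 := hd (2*n+2)
      rw [show 2*n+2+1 = 2*n+3 from rfl, show 2*n+2+2 = 2*n+4 from rfl] at e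
      rw [show 2*(n+1)+2 = 2*n+4 from rfl, show 2*(n+1)+1 = 2*n+3 from rfl]
      push_cast at e ⊢
      rw [q] at ih
      apply mul_left_cancel₀ h1
      linear_combination e - (a (2*n+4) - a (2*n+3)) * ih
  intro n hn
  obtain ⟨k, rfl⟩ : ∃ k, n = k+1 := ⟨n-1, by omega⟩
  exact eqd k (P k)

/-- The equidistant property on the two coordinate axes. -/
theorem equidistant_on_axes (γ : ℂ) (α : ℝ) (f : ℕ → ℕ → ℂ)
    (hq : CrossRatioEq f) (hqd : QDenomNonzero f)
    (hc : ConstraintC γ f) (hcd : CDenomNonzero f)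
    (h00 : f 0 0 = 0) (h10 : f 1 0 = 1)
    (h01 : f 0 1 = Complex.exp (Complex.I * α)) :
    (∀ n : ℕ, 1 ≤ n → f (2*n) 0 - f (2*n - 1) 0 = f (2*n + 1) 0 - f (2*n) 0) ∧
    (∀ m : ℕ, 1 ≤ m → f 0 (2*m) - f 0 (2*m - 1) = f 0 (2*m + 1) - f 0 (2*m)) := by
  have hh : ∀ n m, f (n+1) m - f n m ≠ 0 := by
    intro n m h
    have e := hq n m
    have h1 : f n m - f (n+1) m = 0 := by linear_combination -h
    rw [h1, zero_mul] at e
    exact neg_ne_zero.mpr (mul_ne_zero (hqd n m).1 (hqd n m).2) e.symm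
  constructor
  · refine axis_aux γ (fun n => f n 0) h00 (fun n => hh n 0)
      (fun n => (hcd (n+1) 0).1 (by omega)) ?_
    intro n
    simpa using hc (n+1) 0
  · refine axis_aux γ (fun m => f 0 m) h00 (fun m => (hqd 0 m).2)
      (fun m => (hcd 0 (m+1)).2 (by omega)) ?_
    intro m
    simpa using hc 0 (m+1)

end
end

section
/- Let 0 < γ < 2 and α ∈ ℝ, and let f : ℤ≥0 × ℤ≥0 → ℂ satisfy the cross-ratio equation (q) and the constraint (c) with parameter γ at every (n,m) (all denominators occurring being nonzero), with initial data f_{0,0} = 0, f_{1,0} = 1, f_{0,1} = e^{iα}, and assume f is an immersion (interiors of convex hulls of adjacent elementary quadrilaterals are disjoint). Then: (a) for every (n,m) with n + m odd and n ≥ 1, m ≥ 1, setting r1 = |f_{n+1,m} − f_{n,m}|, r2 = |f_{n,m+1} − f_{n,m}|, r3 = |f_{n−1,m} − f_{n,m}|, r4 = |f_{n,m−1} − f_{n,m}|, one has r1·r2·(n+m+1−γ) + r2·r3·(−n+m+1−γ) + r3·r4·(−n−m+1−γ) + r4·r1·(n−m+1−γ) = 0; (b) the radius function R defined by R(N+iM)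 = |f_{n+1,m} − f_{n,m}| with n = N+M, m = M−N satisfies equation (Ri) at every z = N + iM ∈ V_int. -/
open Complex

noncomputable section

/-- The radius function `R(N + iM) = |f_{n+1,m} - f_{n,m}|` with `n = N + M`,
`m = M - N`, defined on the lattice `ℤ + iℤ` indexed by pairs `(N, M)`. -/
def radiusOf (f : ℕ → ℕ → ℂ) (N M : ℤ) : ℝ :=
  ‖f ((N + M).toNat + 1) ((M - N).toNat) - f ((N + M).toNat) ((M - N).toNat)‖

/-- Equation (Ri) for a radius function at `z = N + iM`. -/
def RiEq (R : ℤ → ℤ → ℝ) (N M : ℤ) : Prop :=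
  ((N + M : ℤ) : ℝ) * (R N M ^ 2 - R (N+1) M * R N (M-1)) * (R N (M+1) + R (N+1) M) +
  ((M - N : ℤ) : ℝ) * (R N M ^ 2 - R N (M+1) * R (N+1) M) * (R (N+1) M + R N (M-1)) = 0

def Perp (u v : ℂ) : Prop := ∃ t : ℝ, u = I * t * v

lemma Perp.symm {u v : ℂ} (h : Perp u v) (hu : u ≠ 0) : Perp v u := by
  obtain ⟨t, rfl⟩ := h
  have ht : (t : ℂ) ≠ 0 := by rintro h; simp [h] at hu
  refine ⟨-t⁻¹, ?_⟩
  push_cast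
  field_simp
  linear_combination v * I_sq

lemma Perp.neg_left {u v : ℂ} (h : Perp u v) : Perp (-u) v := by
  obtain ⟨t, rfl⟩ := h
  exact ⟨-t, by push_cast; ring⟩

lemma Perp.three {e n w s : ℂ} (h1 : Perp e s) (h2 : Perp s w) (h3 : Perp w n) : Perp e n := by
  obtain ⟨a, rfl⟩ := h1
  obtain ⟨b, rfl⟩ := h2
  obtain ⟨c, rfl⟩ := h3
  refine ⟨-(a*b*c), ?_⟩
  push_cast
  linear_combination (I * a * b * c * n) * I_sq

structure Kite (a b c d : ℂ) : Prop where
  ea : ‖b - a‖ = ‖d - a‖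
  ec : ‖b - c‖ = ‖d - c‖
  pb : Perp (c - b) (a - b)
  pd : Perp (c - d) (a - d)

lemma kite_of_eq {a b c d : ℂ} (hq : (a - b) * (c - d) = -((b - c) * (d - a)))
    (hb : b - a ≠ 0) (hd : d - a ≠ 0) (h : ‖b - a‖ = ‖d - a‖) : Kite a b c d := by
  have h1 : (c - a) * ((b - a) + (d - a)) = 2 * (b - a) * (d - a) := by
    linear_combination (-1) * hq
  have h2 : (b - a) + (d - a) ≠ 0 := by
    intro h0; rw [h0] at h1; simp [hb, hd] at h1
  obtain ⟨t, ht⟩ : ∃ t : ℝ, (d - b) / ((b - a) + (d - a)) = I * t := by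
    refine ⟨((d - b) / ((b - a) + (d - a))).im, ?_⟩
    have hre : ((d - b) / ((b - a) + (d - a))).re = 0 := by
      have h3 : normSq (b - a) = normSq (d - a) := by
        rw [normSq_eq_norm_sq, normSq_eq_norm_sq, h]
      rw [div_re, ← add_div]
      simp only [normSq_apply, sub_re, sub_im, add_re, add_im] at h3 ⊢
      rw [div_eq_zero_iff]; left
      linear_combination -h3
    apply Complex.ext <;> simp [hre]
  have h3 : d - b = I * t * ((b - a) + (d - a)) := by
    rw [← ht]; field_simp
  have hcb : c - b = I * t * (b - a) := by
    apply mul_right_cancel₀ h2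
    linear_combination h1 + (b - a) * h3
  have hcd : c - d = - (I * t * (d - a)) := by
    apply mul_right_cancel₀ h2
    linear_combination h1 - (d - a) * h3
  refine ⟨h, ?_, ⟨-t, ?_⟩, ⟨t, ?_⟩⟩
  · rw [norm_sub_rev, hcb, norm_sub_rev d c, hcd, norm_neg, norm_mul, h, ← norm_mul]
  · rw [hcb]; push_cast; ring
  · rw [hcd]; ring

lemma one_add_I_ne (t : ℝ) : (1 + I * t : ℂ) ≠ 0 := by
  intro h; have := congrArg re h; simp at this

lemma one_sub_I_ne (t : ℝ) : (1 - I * t : ℂ) ≠ 0 := by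
  intro h; have := congrArg re h; simp at this

lemma norm_pm (t : ℝ) : ‖(1 - I * t : ℂ)‖ = ‖(1 + I * t : ℂ)‖ := by
  rw [← norm_conj (1 - I * t : ℂ)]; simp

lemma quad_opp {a b c d : ℂ} (hq : (a - b) * (c - d) = -((b - c) * (d - a)))
    (hb : b - a ≠ 0) {t : ℝ} (h : d - a = I * t * (b - a)) :
    (c - a) * (1 + I * t) = 2 * I * t * (b - a) := by
  apply mul_left_cancel₀ hb
  linear_combination (-1) * hq + (2 * (b - a) - (c - a)) * h

lemma kite_of_perp {a b c d : ℂ} (hq : (a - b) * (c - d) = -((b - c) * (d - a)))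
    (hb : b - a ≠ 0) (hd : d - a ≠ 0) (h : Perp (d - a) (b - a)) : Kite b c d a := by
  have hs := h.symm hd
  obtain ⟨t, ht⟩ := h
  have htt : (t : ℂ) ≠ 0 := by rintro h; simp [h] at ht; exact hd ht
  have h1 := quad_opp hq hb ht
  have h2 := one_add_I_ne t
  have hcb : (c - b) * (1 + I * t) = -(b - a) * (1 - I * t) := by linear_combination h1
  have hcd : (c - d) * (1 + I * t) = (d - a) * (1 - I * t) := by
    linear_combination h1 + (-2) * ht
  have n1 : ‖c - b‖ = ‖b - a‖ := by
    have := congrArg norm hcb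
    rw [norm_mul, norm_mul, norm_pm, norm_neg] at this
    exact mul_right_cancel₀ (norm_ne_zero_iff.2 h2) this
  have n2 : ‖c - d‖ = ‖d - a‖ := by
    have := congrArg norm hcd
    rw [norm_mul, norm_mul, norm_pm] at this
    exact mul_right_cancel₀ (norm_ne_zero_iff.2 h2) this
  refine ⟨by rw [n1, norm_sub_rev], by rw [n2, norm_sub_rev], ?_, ?_⟩
  · refine ⟨-t, ?_⟩
    apply mul_right_cancel₀ h2
    push_cast
    linear_combination (-1) * hcd - I * t * hcb + (-1)*(1 - I * t) * ht
  · exact ⟨t, ht⟩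

lemma axis_aux_s6 (γ : ℝ) (hγ0 : 0 < γ) (hγ2 : γ < 2) (g : ℕ → ℂ) (g0 : g 0 = 0)
    (hd : ∀ k, g (k+1) - g k ≠ 0) (hdd : ∀ k, g (k+2) - g k ≠ 0)
    (hc : ∀ k : ℕ, (γ : ℂ) * g (k+1) = 2 * ((k+1 : ℕ) : ℂ) * ((g (k+2) - g (k+1)) * (g (k+1) - g k))
      / (g (k+2) - g k)) (k : ℕ) :
    (γ : ℂ) * g (2*k) = 2 * k * (g (2*k+1) - g (2*k)) ∧
    (2*k+2-γ : ℂ) * (g (2*k+2) - g (2*k+1)) = (2*k+γ) * (g (2*k+1) - g (2*k)) ∧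
    g (2*k+3) - g (2*k+2) = g (2*k+2) - g (2*k+1) := by
  have key : ∀ k : ℕ, (γ : ℂ) * g (2*k) = 2 * k * (g (2*k+1) - g (2*k)) →
     (2*k+2-γ : ℂ) * (g (2*k+2) - g (2*k+1)) = (2*k+γ) * (g (2*k+1) - g (2*k)) ∧
     g (2*k+3) - g (2*k+2) = g (2*k+2) - g (2*k+1) := by
    intro k h1
    have h2 := hc (2*k)
    rw [eq_div_iff (hdd _)] at h2
    push_cast at h2
    have h3 : (2*k+2-γ : ℂ) * (g (2*k+2) - g (2*k+1)) = (2*k+γ) * (g (2*k+1) - g (2*k)) := by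
      apply mul_right_cancel₀ (hd (2*k))
      linear_combination (g (2*k+2) - g (2*k)) * h1 - h2
    refine ⟨h3, ?_⟩
    have h4 := hc (2*k+1)
    rw [eq_div_iff (hdd _)] at h4
    push_cast at h4
    simp only [show 2*k+1+1 = 2*k+2 from rfl, show 2*k+1+2 = 2*k+3 from rfl] at h4
    have h5 : (γ : ℂ) * g (2*k+2) = (2*k+2) * (g (2*k+2) - g (2*k+1)) := by
      linear_combination h1 - h3
    have hk : (2*k+2 : ℂ) ≠ 0 := by
      have : ((2*k+2 : ℕ) : ℂ) ≠ 0 := by exact_mod_cast (by omega : 2*k+2 ≠ 0)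
      push_cast at this; exact this
    apply mul_left_cancel₀ (mul_ne_zero hk (hd (2*k+1)))
    linear_combination (g (2*k+3) - g (2*k+1)) * h5 - h4
  induction k with
  | zero =>
    have : (γ : ℂ) * g (2*0) = 2 * ((0:ℕ):ℂ) * (g (2*0+1) - g (2*0)) := by simp [g0]
    exact ⟨this, key 0 this⟩
  | succ k ih =>
    obtain ⟨h1, h3, h6⟩ := ih
    have : (γ : ℂ) * g (2*(k+1)) = 2 * ((k+1:ℕ):ℂ) * (g (2*(k+1)+1) - g (2*(k+1))) := by
      push_cast
      simp only [show 2*(k+1) = 2*k+2 from rfl]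
      rw [h6]
      linear_combination h1 - h3
    exact ⟨this, key _ this⟩

lemma axis (γ : ℝ) (hγ0 : 0 < γ) (hγ2 : γ < 2) (g : ℕ → ℂ) (g0 : g 0 = 0)
    (hd : ∀ k, g (k+1) - g k ≠ 0) (hdd : ∀ k, g (k+2) - g k ≠ 0)
    (hc : ∀ k : ℕ, (γ : ℂ) * g (k+1) = 2 * ((k+1 : ℕ) : ℂ) * ((g (k+2) - g (k+1)) * (g (k+1) - g k))
      / (g (k+2) - g k)) (k : ℕ) :
    (k % 2 = 0 → ∃ t : ℝ, g (k+2) - g (k+1) = t * (g (k+1) - g k)) ∧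
    (k % 2 = 1 → g (k+2) - g (k+1) = g (k+1) - g k) := by
  constructor
  · intro hk
    obtain ⟨j, rfl⟩ : ∃ j, k = 2*j := ⟨k/2, by omega⟩
    obtain ⟨_, h, _⟩ := axis_aux_s6 γ hγ0 hγ2 g g0 hd hdd hc j
    refine ⟨(2*j+γ)/(2*j+2-γ), ?_⟩
    have hne : (2*j+2-γ : ℝ) ≠ 0 := by
      have : (0:ℝ) ≤ j := j.cast_nonneg
      linarith
    have hne' : (2*j+2-γ : ℂ) ≠ 0 := by exact_mod_cast hne
    push_cast
    rw [div_mul_eq_mul_div, eq_div_iff hne']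
    linear_combination h
  · intro hk
    obtain ⟨j, rfl⟩ : ∃ j, k = 2*j+1 := ⟨k/2, by omega⟩
    exact (axis_aux_s6 γ hγ0 hγ2 g g0 hd hdd hc j).2.2

structure KQ (f : ℕ → ℕ → ℂ) (n m : ℕ) : Prop where
  ev : (n + m) % 2 = 0 → Kite (f n m) (f (n+1) m) (f (n+1) (m+1)) (f n (m+1))
  od : (n + m) % 2 = 1 → Kite (f (n+1) m) (f (n+1) (m+1)) (f n (m+1)) (f n m)

lemma vert_ne {f : ℕ → ℕ → ℂ} (hqd : QDenomNonzero f) (n m : ℕ) : f n (m+1) - f n m ≠ 0 :=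
  (hqd n m).2

lemma hor_ne {f : ℕ → ℕ → ℂ} (hq : CrossRatioEq f) (hqd : QDenomNonzero f) (n m : ℕ) :
    f (n+1) m - f n m ≠ 0 := by
  intro h
  have h1 := hq n m
  have : f n m - f (n+1) m = 0 := by linear_combination -h
  rw [this, zero_mul, eq_comm, neg_eq_zero, mul_eq_zero] at h1
  rcases h1 with h1 | h1
  · exact (hqd n m).1 h1
  · exact (hqd n m).2 h1

lemma KQ_of {f : ℕ → ℕ → ℂ} (hq : CrossRatioEq f) (hqd : QDenomNonzero f) {n m : ℕ}
    (h0 : (n + m) % 2 = 0 → ‖f (n+1) m - f n m‖ = ‖f n (m+1) - f n m‖)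
    (h1 : (n + m) % 2 = 1 → Perp (f n (m+1) - f n m) (f (n+1) m - f n m)) : KQ f n m :=
  ⟨fun h => kite_of_eq (hq n m) (hor_ne hq hqd n m) (vert_ne hqd n m) (h0 h),
   fun h => kite_of_perp (hq n m) (hor_ne hq hqd n m) (vert_ne hqd n m) (h1 h)⟩

lemma KQ_step {f : ℕ → ℕ → ℂ} (hq : CrossRatioEq f) (hqd : QDenomNonzero f) {n m : ℕ}
    (h : KQ f n m) (h' : KQ f (n+1) m) (h'' : KQ f n (m+1)) : KQ f (n+1) (m+1) := by
  apply KQ_of hq hqd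
  · intro hp
    have a := (h.ev (by omega)).ec
    have b := (h'.od (by omega)).ec
    have c := (h''.od (by omega)).ea
    rw [b, a, c]
  · intro hp
    have a := (h.od (by omega)).pb
    have b := (h'.ev (by omega)).pd
    have c := (h''.ev (by omega)).pb
    exact Perp.three c a (b.symm (hor_ne hq hqd _ _))

lemma KQ_axis1 {f : ℕ → ℕ → ℂ} (hq : CrossRatioEq f) (hqd : QDenomNonzero f) {n : ℕ}
    (h : KQ f n 0)
    (h0 : n % 2 = 0 → ∃ t : ℝ, f (n+2) 0 - f (n+1) 0 = t * (f (n+1) 0 - f n 0))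
    (h1 : n % 2 = 1 → f (n+2) 0 - f (n+1) 0 = f (n+1) 0 - f n 0) : KQ f (n+1) 0 := by
  apply KQ_of hq hqd
  · intro hp
    have a := (h.od (by omega)).ea
    rw [h1 (by omega), a, norm_sub_rev]
  · intro hp
    have a := (h.ev (by omega)).pb.symm (vert_ne hqd _ _)
    obtain ⟨t, ht⟩ := h0 (by omega)
    obtain ⟨s, hs⟩ := a
    refine Perp.symm ⟨-t*s, ?_⟩ (hor_ne hq hqd _ _)
    rw [ht]
    push_cast
    linear_combination (-t) * hs

lemma KQ_axis2 {f : ℕ → ℕ → ℂ} (hq : CrossRatioEq f) (hqd : QDenomNonzero f) {m : ℕ}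
    (h : KQ f 0 m)
    (h0 : m % 2 = 0 → ∃ t : ℝ, f 0 (m+2) - f 0 (m+1) = t * (f 0 (m+1) - f 0 m))
    (h1 : m % 2 = 1 → f 0 (m+2) - f 0 (m+1) = f 0 (m+1) - f 0 m) : KQ f 0 (m+1) := by
  apply KQ_of hq hqd
  · intro hp
    have a := (h.od (by omega)).ec
    rw [h1 (by omega), a, norm_sub_rev]
  · intro hp
    have a := (h.ev (by omega)).pd.symm (hor_ne hq hqd _ _)
    obtain ⟨t, ht⟩ := h0 (by omega)
    obtain ⟨s, hs⟩ := a
    refine ⟨-t*s, ?_⟩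
    rw [ht]
    push_cast
    linear_combination (-t) * hs

lemma KQ_all (γ : ℝ) (hγ0 : 0 < γ) (hγ2 : γ < 2) (α : ℝ)
    (f : ℕ → ℕ → ℂ)
    (hq : CrossRatioEq f) (hqd : QDenomNonzero f)
    (hc : ConstraintC (γ : ℂ) f) (hcd : CDenomNonzero f)
    (h00 : f 0 0 = 0) (h10 : f 1 0 = 1)
    (h01 : f 0 1 = Complex.exp (Complex.I * α)) (n m : ℕ) : KQ f n m := by
  have base : KQ f 0 0 := by
    apply KQ_of hq hqd
    · intro _
      simp [h00, h10, h01, Complex.norm_exp]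
    · intro h; simp at h
  have ax1 : ∀ n, KQ f n 0 := by
    intro n
    induction n with
    | zero => exact base
    | succ n ih =>
      have := axis γ hγ0 hγ2 (fun k => f k 0) h00 (fun k => hor_ne hq hqd k 0)
        (fun k => by simpa using (hcd (k+1) 0).1 (by omega))
        (fun k => by simpa using hc (k+1) 0) n
      exact KQ_axis1 hq hqd ih this.1 this.2
  have ax2 : ∀ n, KQ f 0 n := by
    intro n
    induction n with
    | zero => exact base
    | succ n ih =>
      have := axis γ hγ0 hγ2 (fun k => f 0 k) h00 (fun k => vert_ne hqd 0 k)
        (fun k => by simpa using (hcd 0 (k+1)).2 (by omega))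
        (fun k => by simpa using hc 0 (k+1)) n
      exact KQ_axis2 hq hqd ih this.1 this.2
  induction n generalizing m with
  | zero => exact ax2 m
  | succ n ih =>
    induction m with
    | zero => exact ax1 _
    | succ m ihm => exact KQ_step hq hqd (ih m) ihm (ih (m+1))

lemma tri_interior {P Q A : ℂ} {s : ℝ} (hQ : Q - P ≠ 0) (hs : s ≠ 0)
    (hA : A - P = I * s * (Q - P)) : (interior (convexHull ℝ {P, Q, A})).Nonempty := by
  refine ⟨P + (Q - P) * (1/4 + I * (s/4)), ?_⟩
  rw [mem_interior]
  refine ⟨{z | 0 < ((z - P)/(Q - P)).re ∧ 0 < ((z - P)/(Q - P)).im / s ∧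
    ((z - P)/(Q - P)).re + ((z - P)/(Q - P)).im / s < 1}, ?_, ?_, ?_⟩
  · intro z hz
    obtain ⟨h1, h2, h3⟩ := hz
    set a := ((z - P)/(Q - P)).re with ha
    set b := ((z - P)/(Q - P)).im / s with hb
    have hz : (z - P)/(Q - P) = a + I * (b * s) := by
      have : ((z - P)/(Q - P)).im = b * s := by rw [hb]; field_simp
      apply Complex.ext <;> simp [ha, this]
    have hz' : z = ((1 - a - b : ℝ) : ℂ) * P + (a : ℂ) * Q + (b : ℂ) * A := by
      have : z - P = (a + I * (b * s)) * (Q - P) := by rw [← hz]; field_simp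
      push_cast
      linear_combination this - b * hA
    have hconv := convex_convexHull ℝ ({P, Q, A} : Set ℂ)
    have mP : P ∈ convexHull ℝ ({P, Q, A} : Set ℂ) := subset_convexHull _ _ (by simp)
    have mQ : Q ∈ convexHull ℝ ({P, Q, A} : Set ℂ) := subset_convexHull _ _ (by simp)
    have mA : A ∈ convexHull ℝ ({P, Q, A} : Set ℂ) := subset_convexHull _ _ (by simp)
    have := hconv.sum_mem (t := Finset.univ) (w := ![1 - a - b, a, b]) (z := ![P, Q, A])
      (by intro i _; fin_cases i <;> simp <;> linarith)
      (by simp [Fin.sum_univ_three]; ring)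
      (by intro i _; fin_cases i <;> simp [mP, mQ, mA])
    rw [hz']
    simpa [Fin.sum_univ_three] using this
  · have hc : Continuous fun z : ℂ => (z - P)/(Q - P) := by fun_prop
    have hr := continuous_re.comp hc
    have hi := (continuous_im.comp hc).div_const s
    exact (isOpen_lt continuous_const hr).inter
      ((isOpen_lt continuous_const hi).inter (isOpen_lt (hr.add hi) continuous_const))
  · have : (P + (Q - P) * (1/4 + I * (s/4)) - P)/(Q - P) = ((1/4 : ℝ) : ℂ) + ((s/4 : ℝ) : ℂ) * I := by
      push_cast; field_simp; ring
    simp only [Set.mem_ofPred_eq, this, add_re, add_im, ofReal_re, ofReal_im, re_ofReal_mul,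
      im_ofReal_mul, I_re, I_im]
    have : s / 4 / s = 1/4 := by field_simp
    norm_num [this]

lemma overlap_aux {P Q A B : ℂ} {s s' : ℝ} {X Y : Set ℂ} (hX : ({P, Q, A} : Set ℂ) ⊆ X)
    (hY : ({P, Q, B} : Set ℂ) ⊆ Y)
    (hQ : Q - P ≠ 0) (hs : s ≠ 0) (hr0 : 0 ≤ s / s') (hr1 : s / s' ≤ 1) (hs' : s' ≠ 0)
    (hA : A - P = I * s * (Q - P)) (hB : B - P = I * s' * (Q - P)) :
    ¬ Disjoint (interior (convexHull ℝ X)) (interior (convexHull ℝ Y)) := by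
  rw [Set.not_disjoint_iff]
  obtain ⟨z, hz⟩ := tri_interior hQ hs hA
  refine ⟨z, interior_mono (convexHull_mono hX) hz, interior_mono ?_ hz⟩
  apply convexHull_min _ (convex_convexHull ℝ Y)
  have mP : P ∈ convexHull ℝ Y := subset_convexHull _ _ (hY (by simp))
  have mQ : Q ∈ convexHull ℝ Y := subset_convexHull _ _ (hY (by simp))
  have mB : B ∈ convexHull ℝ Y := subset_convexHull _ _ (hY (by simp))
  rintro x (rfl | rfl | rfl)
  · exact mP
  · exact mQ
  · have := (convex_convexHull ℝ Y) mP mB (a := 1 - s/s') (b := s/s') (by linarith) hr0 (by ring)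
    convert this using 1
    simp only [real_smul]
    have hs'c : (s' : ℂ) ≠ 0 := by exact_mod_cast hs'
    push_cast
    field_simp
    linear_combination s' * hA - s * hB

lemma opposite {P Q A B : ℂ} {s s' : ℝ} {X Y : Set ℂ} (hX : ({P, Q, A} : Set ℂ) ⊆ X)
    (hY : ({P, Q, B} : Set ℂ) ⊆ Y) (hQ : Q - P ≠ 0) (hAP : A - P ≠ 0) (hBP : B - P ≠ 0)
    (hA : A - P = I * s * (Q - P)) (hB : B - P = I * s' * (Q - P))
    (hdis : Disjoint (interior (convexHull ℝ X)) (interior (convexHull ℝ Y))) : s * s' < 0 := by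
  have hs : s ≠ 0 := by rintro rfl; simp [hAP] at hA
  have hs' : s' ≠ 0 := by rintro rfl; simp [hBP] at hB
  by_contra hcon
  have hpos : 0 < s * s' := lt_of_le_of_ne (not_lt.1 hcon) (mul_ne_zero hs hs').symm
  have h1 : 0 < s / s' := by
    have : s / s' = s * s' / s' ^ 2 := by field_simp
    rw [this]; positivity
  rcases le_total (s / s') 1 with h | h
  · exact overlap_aux hX hY hQ hs h1.le h hs' hA hB hdis
  · have h2 : s' / s = (s / s')⁻¹ := by rw [inv_div]
    exact overlap_aux hY hX hQ hs' (by rw [h2]; positivity) (by rw [h2]; exact inv_le_one_of_one_le₀ h) hs hB hA hdis.symm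

lemma star {f : ℕ → ℕ → ℂ} (hq : CrossRatioEq f) (hqd : QDenomNonzero f) (K : ∀ n m, KQ f n m)
    (himm : IsImmersion f) (n m : ℕ) (hnm : (n + m) % 2 = 1) :
    ∃ x y z : ℝ, 0 < x ∧ 0 < y * z ∧
      f n (m+1) - f (n+1) (m+1) = -(x * (f (n+2) (m+1) - f (n+1) (m+1))) ∧
      f (n+1) (m+2) - f (n+1) (m+1) = I * y * (f (n+2) (m+1) - f (n+1) (m+1)) ∧
      f (n+1) m - f (n+1) (m+1) = -(I * z * (f (n+2) (m+1) - f (n+1) (m+1))) := by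
  have hE := hor_ne hq hqd (n+1) (m+1)
  have hN := vert_ne hqd (n+1) (m+1)
  have hW : f n (m+1) - f (n+1) (m+1) ≠ 0 := by
    rw [← neg_sub]; exact neg_ne_zero.2 (hor_ne hq hqd n (m+1))
  have hS : f (n+1) m - f (n+1) (m+1) ≠ 0 := by
    rw [← neg_sub]; exact neg_ne_zero.2 (vert_ne hqd (n+1) m)
  have pN := ((K (n+1) (m+1)).od (by omega)).pd
  have pE := pN.symm hN
  have pS := (((K (n+1) m).ev (by omega)).pd).symm hE
  have pW := (((K n (m+1)).ev (by omega)).pb).symm hN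
  obtain ⟨y, hy⟩ := pN
  obtain ⟨s, hs⟩ := pE
  obtain ⟨z, hz⟩ := pS
  obtain ⟨w, hw⟩ := pW
  have h1 : z * y < 0 := by
    refine opposite ?_ ?_ hE hS hN hz hy (himm (n+1) m).2
    · intro a; simp only [quadVerts, Set.mem_insert_iff, Set.mem_singleton_iff]; tauto
    · intro a; simp only [quadVerts, Set.mem_insert_iff, Set.mem_singleton_iff]; tauto
  have h2 : w * s < 0 := by
    refine opposite ?_ ?_ hN hW hE hw hs (himm n (m+1)).1
    · intro a; simp only [quadVerts, Set.mem_insert_iff, Set.mem_singleton_iff]; tauto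
    · intro a; simp only [quadVerts, Set.mem_insert_iff, Set.mem_singleton_iff]; tauto
  have h3 : s * y = -1 := by
    have : ((s * y : ℝ) : ℂ) = ((-1 : ℝ) : ℂ) := by
      apply mul_right_cancel₀ hE
      push_cast
      linear_combination hs + I * s * hy + s * y * (f (n+1+1) (m+1) - f (n+1) (m+1)) * I_sq
    exact_mod_cast this
  refine ⟨w * y, y, -z, ?_, by nlinarith, ?_, hy, ?_⟩
  · have : (w * s) * (y * y) = - (w * y) := by linear_combination w * y * h3
    have hy0 : y ≠ 0 := by rintro rfl; simp at h3
    have : 0 < y * y := mul_self_pos.2 hy0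
    nlinarith
  · push_cast
    linear_combination hw + I * w * hy + w * y * (f (n+1+1) (m+1) - f (n+1) (m+1)) * I_sq
  · push_cast
    linear_combination hz

lemma re_half {w : ℂ} (hw : ‖w‖ = 1) (h : 1 + w ≠ 0) : (w / (1 + w)).re = 1 / 2 := by
  have h1 : normSq w = 1 := by rw [normSq_eq_norm_sq, hw]; norm_num
  have h2 : normSq (1 + w) ≠ 0 := by simpa using h
  rw [div_re, ← add_div, div_eq_iff h2]
  simp only [normSq_apply, add_re, add_im, one_re, one_im] at h1 ⊢
  linear_combination (1/2) * h1

lemma same_sign_add {y z : ℝ} (h : 0 < y * z) : y + z ≠ 0 := by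
  intro h0
  have : y = -z := by linarith
  subst this
  nlinarith [sq_nonneg z]

lemma odd_vertex {γ n m x y z : ℝ} {F E W N S : ℂ} {e : ℂ} (he : e ≠ 0) (hx : 0 < x)
    (hyz : 0 < y * z)
    (hE : E - F = x * e) (hW : F - W = e) (hN : N - F = I * y * e) (hS : S - F = -(I * z * e))
    (hc : (γ : ℂ) * F = 2 * n * ((E - F) * (F - W)) / (E - W) + 2 * m * ((N - F) * (F - S)) / (N - S)) :
    (γ : ℂ) * F = e * (2 * n * x / (1 + x) + I * (2 * m * y * z / (y + z))) := by
  have h1 : (1 + x : ℂ) ≠ 0 := by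
    have : (1 + x : ℝ) ≠ 0 := by positivity
    exact_mod_cast this
  have h2 : (y + z : ℂ) ≠ 0 := by exact_mod_cast same_sign_add hyz
  have e1 : E - W = (1 + x) * e := by linear_combination hE + hW
  have e2 : N - S = I * (y + z) * e := by linear_combination hN - hS
  have e3 : F - S = I * z * e := by linear_combination -hS
  rw [hc, e1, e2, e3, hE, hW, hN]
  field_simp

lemma lemA {γ n m x y z : ℝ} {F E W N S E2 N' S' : ℂ} {e : ℂ} (he : e ≠ 0) (hx : 0 < x)
    (hyz : 0 < y * z)
    (hE : E - F = e) (hW : W - F = -(x * e)) (hN : N - F = I * y * e) (hS : S - F = -(I * z * e))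
    (hN' : (N' - F) * (1 + I * y) = 2 * I * y * e)
    (hS' : (S' - F) * (1 - I * z) = -(2 * I * z * e))
    (hn : ‖E2 - E‖ = ‖E - F‖) (h2 : E2 - F ≠ 0)
    (hc : (γ : ℂ) * F = 2 * n * ((E - F) * (F - W)) / (E - W) + 2 * m * ((N - F) * (F - S)) / (N - S))
    (hc' : (γ : ℂ) * E = 2 * (n + 1) * ((E2 - E) * (E - F)) / (E2 - F)
      + 2 * m * ((N' - E) * (E - S')) / (N' - S')) :
    y * (n + m + 1 - γ) + y * x * (-n + m + 1 - γ) + x * z * (-n - m + 1 - γ)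
      + z * (n - m + 1 - γ) = 0 := by
  have h1r : (1 + x : ℝ) ≠ 0 := by positivity
  have h1 : (1 + x : ℂ) ≠ 0 := by exact_mod_cast h1r
  have hyr := same_sign_add hyz
  have hy : (y + z : ℂ) ≠ 0 := by exact_mod_cast hyr
  have hA := one_add_I_ne y
  have hB := one_sub_I_ne z
  have hFv : (γ : ℂ) * F = e * (2 * n * x / (1 + x) + I * (2 * m * y * z / (y + z))) := by
    have e1 : E - W = (1 + x) * e := by linear_combination hE - hW
    have e2 : N - S = I * (y + z) * e := by linear_combination hN - hS
    have e3 : F - S = I * z * e := by linear_combination -hS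
    have e4 : F - W = x * e := by linear_combination -hW
    rw [hc, e1, e2, e3, e4, hE, hN]
    field_simp
  obtain ⟨w, hw⟩ : ∃ w, E2 - E = e * w := ⟨(E2 - E) / e, by field_simp⟩
  have hw1 : ‖w‖ = 1 := by
    rw [hw, hE, norm_mul] at hn
    have := norm_ne_zero_iff.2 he
    field_simp at hn
    exact hn
  have e5 : E2 - F = e * (1 + w) := by linear_combination hw + hE
  have hw2 : 1 + w ≠ 0 := by
    rw [e5] at h2; exact right_ne_zero_of_mul h2
  have e6 : N' - E = -(e * (1 - I * y) / (1 + I * y)) := by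
    rw [eq_neg_iff_add_eq_zero]; field_simp
    linear_combination hN' - (1 + I * y) * hE
  have e7 : E - S' = e * (1 + I * z) / (1 - I * z) := by
    field_simp
    linear_combination (1 - I * z) * hE - hS'
  have e8 : N' - S' = e * (2 * I * (y + z)) / ((1 + I * y) * (1 - I * z)) := by
    have : N' - S' = (N' - E) + (E - S') := by ring
    rw [this, e6, e7]
    field_simp
    ring
  have hEv : (γ : ℂ) * E = e * (2 * (n + 1) * (w / (1 + w))
      + I * (m * ((1 - I * y) * (1 + I * z)) / (y + z))) := by
    rw [hc', e6, e7, e8, hw, hE, e5]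
    field_simp
    ring_nf
    simp only [I_sq, I_pow_three, I_pow_four]
    ring
  have hfin : 2 * (n + 1) * (w / (1 + w)) =
      ((γ + 2 * n * x / (1 + x) - m * (y - z) / (y + z) : ℝ) : ℂ)
       + ((2 * m * y * z / (y + z) - m * (1 + y * z) / (y + z) : ℝ) : ℂ) * I := by
    apply mul_left_cancel₀ he
    have : e * (2 * (n + 1) * (w / (1 + w))) = γ * E - γ * F - e * (I * (m * ((1 - I * y) * (1 + I * z)) / (y + z)))
       + e * (2 * n * x / (1 + x) + I * (2 * m * y * z / (y + z))) := by
      rw [hEv, hFv]; ring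
    rw [this]
    have : (γ : ℂ) * E = γ * F + γ * e := by linear_combination γ * hE
    rw [this]
    push_cast
    field_simp
    ring_nf
    simp only [I_sq, I_pow_three, I_pow_four]
    ring
  have := congrArg re hfin
  rw [show (2 * ((n : ℂ) + 1)) = ((2 * (n + 1) : ℝ) : ℂ) by push_cast; ring, re_ofReal_mul,
    re_half hw1 hw2] at this
  simp only [add_re, ofReal_re, re_ofReal_mul, I_re, mul_zero, add_zero] at this
  field_simp at this
  linear_combination this

lemma lemB {γ n m x y z t : ℝ} {C E N S W E2 NE SE : ℂ} {e : ℂ} (he : e ≠ 0) (hx : 0 < x)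
    (hyz : 0 < y * z) (hzt : 0 < z * t)
    (hE : E - C = e) (hE2 : E2 - E = x * e) (hNE : NE - E = I * y * e)
    (hSE : SE - E = -(I * z * e))
    (hN : (N - C) * (1 - I * y) = e * (1 + I * y))
    (hS : (S - C) * (1 + I * z) = e * (1 - I * z))
    (hW : (W - C) * (1 + I * t) = (S - C) * (1 - I * t))
    (hc' : (γ : ℂ) * E = 2 * (n + 1) * ((E2 - E) * (E - C)) / (E2 - C)
      + 2 * m * ((NE - E) * (E - SE)) / (NE - SE))
    (hc : (γ : ℂ) * C = 2 * n * ((E - C) * (C - W)) / (E - W) + 2 * m * ((N - C) * (C - S)) / (N - S)) :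
    n * (1 - z * t) * (y + z) + m * (1 - y * z) * (z + t) = 0 := by
  have hyr := same_sign_add hyz
  have hy : (y + z : ℂ) ≠ 0 := by exact_mod_cast hyr
  have htr := same_sign_add hzt
  have ht : (z + t : ℂ) ≠ 0 := by exact_mod_cast htr
  have hA := one_sub_I_ne y
  have hB := one_add_I_ne z
  have hD := one_add_I_ne t
  have hEv : (γ : ℂ) * E = e * (2 * (n + 1) * x / (1 + x) + I * (2 * m * y * z / (y + z))) := by
    have := odd_vertex (n := n + 1) he hx hyz hE2 hE hNE hSE (by rw [hc']; push_cast; rfl)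
    rw [this]; push_cast; rfl
  have e1 : N - C = e * (1 + I * y) / (1 - I * y) := by field_simp; exact hN
  have e2 : S - C = e * (1 - I * z) / (1 + I * z) := by field_simp; exact hS
  have e3 : W - C = e * ((1 - I * z) * (1 - I * t)) / ((1 + I * z) * (1 + I * t)) := by
    have : W - C = (S - C) * (1 - I * t) / (1 + I * t) := by field_simp; exact hW
    rw [this, e2]; field_simp
  have e4 : E - W = e * (2 * I * (z + t)) / ((1 + I * z) * (1 + I * t)) := by
    have : E - W = (E - C) - (W - C) := by ring
    rw [this, e3, hE]; field_simp; ring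
  have e5 : N - S = e * (2 * I * (y + z)) / ((1 - I * y) * (1 + I * z)) := by
    have : N - S = (N - C) - (S - C) := by ring
    rw [this, e1, e2]; field_simp; ring
  have hCv : (γ : ℂ) * C = e * (I * (n * ((1 - I * z) * (1 - I * t)) / (z + t))
      + I * (m * ((1 + I * y) * (1 - I * z)) / (y + z))) := by
    rw [hc, ← neg_sub W C, ← neg_sub S C, e4, e5, e1, e2, e3, hE]
    field_simp
    ring_nf
    simp only [I_sq, I_pow_three, I_pow_four]
    ring
  have hfin : ((n + m * (z - y) / (y + z) + γ - 2 * (n + 1) * x / (1 + x) : ℝ) : ℂ) +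
      ((n * (1 - z * t) / (z + t) + m * (1 + y * z) / (y + z) - 2 * m * y * z / (y + z) : ℝ) : ℂ) * I
        = 0 := by
    have h1 : (1 + x : ℂ) ≠ 0 := by
      have : (1 + x : ℝ) ≠ 0 := by positivity
      exact_mod_cast this
    apply (mul_eq_zero.1 (_ : e * _ = 0)).resolve_left he
    have : e * (I * (n * ((1 - I * z) * (1 - I * t)) / (z + t))
      + I * (m * ((1 + I * y) * (1 - I * z)) / (y + z))) + γ * e
       - e * (2 * (n + 1) * x / (1 + x) + I * (2 * m * y * z / (y + z))) = 0 := by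
      rw [← hCv, ← hEv]; linear_combination (-γ) * hE
    rw [← this]
    push_cast
    field_simp
    ring_nf
    simp only [I_sq, I_pow_three]
    ring
  have := congrArg im hfin
  simp only [add_im, ofReal_im, im_ofReal_mul, I_im, mul_one, zero_add, zero_im] at this
  field_simp at this
  linear_combination this

/-- For an immersed solution of (q) and (c): (a) the radii of the four circles meeting
at a vertex with `n + m` odd satisfy the equation (sq); (b) the radius function `R`
satisfies equation (Ri) at every `z ∈ V_int`. -/
theorem immersed_radii_equations (γ : ℝ) (hγ0 : 0 < γ) (hγ2 : γ < 2) (α : ℝ)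
    (f : ℕ → ℕ → ℂ)
    (hq : CrossRatioEq f) (hqd : QDenomNonzero f)
    (hc : ConstraintC (γ : ℂ) f) (hcd : CDenomNonzero f)
    (h00 : f 0 0 = 0) (h10 : f 1 0 = 1)
    (h01 : f 0 1 = Complex.exp (Complex.I * α))
    (himm : IsImmersion f) :
    (∀ n m : ℕ, 1 ≤ n → 1 ≤ m → (n + m) % 2 = 1 →
      ‖f (n+1) m - f n m‖ * ‖f n (m+1) - f n m‖ *
          ((n : ℝ) + m + 1 - γ) +
        ‖f n (m+1) - f n m‖ * ‖f (n-1) m - f n m‖ *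
          (-(n : ℝ) + m + 1 - γ) +
        ‖f (n-1) m - f n m‖ * ‖f n (m-1) - f n m‖ *
          (-(n : ℝ) - m + 1 - γ) +
        ‖f n (m-1) - f n m‖ * ‖f (n+1) m - f n m‖ *
          ((n : ℝ) - m + 1 - γ) = 0) ∧
    (∀ N M : ℤ, |N| < M → RiEq (radiusOf f) N M) := by
  have K := KQ_all γ hγ0 hγ2 α f hq hqd hc hcd h00 h10 h01
  constructor
  · intro n m hn hm hnm
    obtain ⟨n, rfl⟩ : ∃ k, n = k + 1 := ⟨n - 1, by omega⟩
    obtain ⟨m, rfl⟩ : ∃ k, m = k + 1 := ⟨m - 1, by omega⟩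
    have hpar : (n + m) % 2 = 1 := by omega
    obtain ⟨x, y, z, hx, hyz, hW, hN, hS⟩ := star hq hqd K himm n m hpar
    have he := hor_ne hq hqd (n+1) (m+1)
    have hc1 := hc (n+1) (m+1)
    have hc2 := hc (n+2) (m+1)
    simp only [Nat.add_eq_zero_iff, one_ne_zero, and_false, if_false, OfNat.ofNat_ne_zero,
      Nat.add_sub_cancel, show n + 2 - 1 = n + 1 from rfl] at hc1 hc2
    have hN' := quad_opp (hq (n+1) (m+1)) he hN
    have hS' := quad_opp (a := f (n+1) (m+1)) (b := f (n+2) (m+1)) (c := f (n+2) m)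
      (d := f (n+1) m) (t := -z) (by linear_combination hq (n+1) m) he
      (by rw [hS]; push_cast; ring)
    have hnorm : ‖f (n+3) (m+1) - f (n+2) (m+1)‖ = ‖f (n+2) (m+1) - f (n+1) (m+1)‖ := by
      rw [((K (n+2) (m+1)).ev (by omega)).ea, ((K (n+1) (m+1)).od (by omega)).ea, norm_sub_rev]
    have hA := lemA (γ := γ) (n := n + 1) (m := m + 1) (E2 := f (n+3) (m+1)) (S' := f (n+2) m) he hx hyz rfl hW hN hS hN'
      (by push_cast at hS'; linear_combination hS') hnorm ((hcd (n+2) (m+1)).1 (by omega))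
      (by rw [hc1]; push_cast; rfl) (by rw [hc2]; push_cast; ring_nf)
    simp only [Nat.add_sub_cancel]
    rw [hN, hS, hW]
    simp only [norm_neg, norm_mul, norm_I, one_mul, Complex.norm_real, Real.norm_eq_abs]
    rw [abs_of_pos hx]
    push_cast
    rcases lt_or_ge 0 y with hy | hy
    · have hz : 0 < z := pos_of_mul_pos_right hyz hy.le
      rw [abs_of_pos hy, abs_of_pos hz]
      linear_combination ‖f (n+2) (m+1) - f (n+1) (m+1)‖ ^ 2 * hA
    · have hz : z ≤ 0 := by
        by_contra h
        nlinarith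
      rw [abs_of_nonpos hy, abs_of_nonpos hz]
      linear_combination -‖f (n+2) (m+1) - f (n+1) (m+1)‖ ^ 2 * hA
  · intro N M hNM
    obtain ⟨hl, hr⟩ := abs_lt.1 hNM
    obtain ⟨n, hn⟩ : ∃ n : ℕ, N + M = n + 1 := ⟨(N + M - 1).toNat, by omega⟩
    obtain ⟨m, hm⟩ : ∃ m : ℕ, M - N = m + 1 := ⟨(M - N - 1).toNat, by omega⟩
    have hpar : (n + m) % 2 = 0 := by omega
    have r0 : radiusOf f N M = ‖f (n+2) (m+1) - f (n+1) (m+1)‖ := by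
      rw [radiusOf, show (N + M).toNat = n + 1 by omega, show (M - N).toNat = m + 1 by omega]
    have r1 : radiusOf f (N+1) M = ‖f (n+2) m - f (n+2) (m+1)‖ := by
      rw [radiusOf, show (N + 1 + M).toNat = n + 2 by omega, show (M - (N + 1)).toNat = m by omega,
        ((K (n+2) m).ev (by omega)).ea, norm_sub_rev]
    have r2 : radiusOf f N (M+1) = ‖f (n+2) (m+2) - f (n+2) (m+1)‖ := by
      rw [radiusOf, show (N + (M + 1)).toNat = n + 2 by omega,
        show (M + 1 - N).toNat = m + 2 by omega,
        ((K (n+2) (m+1)).od (by omega)).ec, norm_sub_rev]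
    have r4 : radiusOf f N (M-1) = ‖f n m - f (n+1) m‖ := by
      rw [radiusOf, show (N + (M - 1)).toNat = n by omega,
        show (M - 1 - N).toNat = m by omega, norm_sub_rev]
    obtain ⟨x, y, z, hx, hyz, hW, hN, hS⟩ := star hq hqd K himm (n+1) m (by omega)
    set e := f (n+2) (m+1) - f (n+1) (m+1) with hedef
    have he : e ≠ 0 := hor_ne hq hqd (n+1) (m+1)
    have hxc : (x : ℂ) ≠ 0 := by exact_mod_cast hx.ne'
    have gE : f (n+3) (m+1) - f (n+2) (m+1) = (x⁻¹ : ℝ) * e := by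
      push_cast
      rw [hedef]
      field_simp
      linear_combination hW
    have gN : f (n+2) (m+2) - f (n+2) (m+1) = I * (y / x : ℝ) * e := by
      have : f (n+2) (m+2) - f (n+2) (m+1) = I * y * (f (n+3) (m+1) - f (n+2) (m+1)) := hN
      rw [this, gE]; push_cast; ring
    have gS : f (n+2) m - f (n+2) (m+1) = -(I * (z / x : ℝ) * e) := by
      have : f (n+2) m - f (n+2) (m+1) = -(I * z * (f (n+3) (m+1) - f (n+2) (m+1))) := hS
      rw [this, gE]; push_cast; ring
    have hyz' : 0 < (y / x) * (z / x) := by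
      rw [div_mul_div_comm]; positivity
    clear hN hS hW
    generalize y / x = y' at *
    generalize z / x = z' at *
    have hCE : f (n+1) (m+1) - f (n+2) (m+1) ≠ 0 := by
      rw [← neg_sub]; exact neg_ne_zero.2 he
    have qN := quad_opp (a := f (n+2) (m+1)) (b := f (n+1) (m+1)) (c := f (n+1) (m+2))
      (d := f (n+2) (m+2)) (t := -y') (by linear_combination hq (n+1) (m+1)) hCE
      (by rw [gN, hedef]; push_cast; ring)
    have qS := quad_opp (a := f (n+2) (m+1)) (b := f (n+1) (m+1)) (c := f (n+1) m)
      (d := f (n+2) m) (t := z') (by linear_combination hq (n+1) m) hCE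
      (by rw [gS, hedef]; ring)
    push_cast at qN
    have eN : (f (n+1) (m+2) - f (n+1) (m+1)) * (1 - I * y') = e * (1 + I * y') := by
      rw [hedef]; linear_combination qN
    have eS : (f (n+1) m - f (n+1) (m+1)) * (1 + I * z') = e * (1 - I * z') := by
      rw [hedef]; linear_combination qS
    have hCS : f (n+1) (m+1) - f (n+1) m ≠ 0 := vert_ne hqd (n+1) m
    have hSES : f (n+2) m - f (n+1) m = I * (-z' : ℝ) * (f (n+1) (m+1) - f (n+1) m) := by
      apply mul_right_cancel₀ (one_add_I_ne z')
      push_cast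
      linear_combination (1 + I * z') * gS + (1 + I * z') * hedef - (1 + I * z') * eS
    obtain ⟨t, ht⟩ : Perp (f n m - f (n+1) m) (f (n+1) (m+1) - f (n+1) m) :=
      ((K n m).ev hpar).pb.symm hCS
    have hSWne : f n m - f (n+1) m ≠ 0 := by
      rw [← neg_sub]; exact neg_ne_zero.2 (hor_ne hq hqd n m)
    have hop : t * (-z') < 0 := by
      refine opposite ?_ ?_ hCS hSWne (hor_ne hq hqd (n+1) m) ht hSES (himm n m).1
      · intro a; simp only [quadVerts, Set.mem_insert_iff, Set.mem_singleton_iff]; tauto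
      · intro a; simp only [quadVerts, Set.mem_insert_iff, Set.mem_singleton_iff]; tauto
    have hzt : 0 < z' * t := by nlinarith
    have qW := quad_opp (a := f (n+1) m) (b := f (n+1) (m+1)) (c := f n (m+1))
      (d := f n m) (t := t) (by linear_combination hq n m) hCS ht
    have eW : (f n (m+1) - f (n+1) (m+1)) * (1 + I * t)
        = (f (n+1) m - f (n+1) (m+1)) * (1 - I * t) := by linear_combination qW
    have hc1 := hc (n+1) (m+1)
    have hc2 := hc (n+2) (m+1)
    simp only [Nat.add_eq_zero_iff, one_ne_zero, and_false, if_false, OfNat.ofNat_ne_zero,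
      Nat.add_sub_cancel, show n + 2 - 1 = n + 1 from rfl] at hc1 hc2
    have hB := lemB (γ := γ) (n := n + 1) (m := m + 1) he (inv_pos.2 hx) hyz' hzt hedef.symm gE gN gS
      eN eS eW (by rw [hc2]; push_cast; ring_nf) (by rw [hc1]; push_cast; rfl)
    have nS : ‖f (n+1) (m+1) - f (n+1) m‖ = ‖e‖ := by
      have := congrArg norm eS
      rw [norm_mul, norm_mul, norm_pm] at this
      rw [norm_sub_rev]
      exact mul_right_cancel₀ (norm_ne_zero_iff.2 (one_add_I_ne z')) this
    rw [RiEq, r0, r1, r2, r4, hn, hm, gN, gS, ht]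
    simp only [norm_neg, norm_mul, norm_I, one_mul, Complex.norm_real, Real.norm_eq_abs, nS]
    push_cast
    rcases lt_or_ge 0 z' with hz | hz
    · have hy : 0 < y' := pos_of_mul_pos_left hyz' hz.le
      have ht : 0 < t := pos_of_mul_pos_right hzt hz.le
      rw [abs_of_pos hy, abs_of_pos hz, abs_of_pos ht]
      linear_combination ‖e‖ ^ 3 * hB
    · have hy : y' ≤ 0 := by
        by_contra h
        nlinarith
      have ht : t ≤ 0 := by
        by_contra h
        nlinarith
      rw [abs_of_nonpos hy, abs_of_nonpos hz, abs_of_nonpos ht]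
      linear_combination -‖e‖ ^ 3 * hB

end
end
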